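/- Let p be a prime, n = d + m with d, m ≥ 1, and α ∈ ℤ_p^m with τ(α) = m+1. Let τ_m = (τ_{d+1},…,τₙ) satisfy Σ_{i=1}^m τ_{d+i} < m+1 and τ_{d+i} > 1 for each i, and let ṽ = (v₁,…,v_d) ∈ ℝ^d with v_i > 1 for each i and Σ_{i=1}^d v_i = n + 1 − Σ_{i=1}^m τ_{d+i}. Fix an integer M > (3^d C₁)^{1/(n+1−Σ_{i=1}^m τ_{d+i})}, where C₁ = max{ 3(6√m)^m , (m+2)! π^{m/2} (√m)^{m+1} / Γ(m/2+1) }, and set J_k = { q ∈ 𝒬(α, τ_m) : M^k ≤ q < M^{k+1} }. Then there exist a constant c > 0 and r₀ > 0 such that for every ball B = B(x, r) ⊆ ℤ_p^d with 0 < r < r₀, there exist infinitely many k with μ_{p,d}( B ∩ ∪_{q ∈ J_k} ∪_{(q₁,…,q_d): |q_i| ≤ q, gcd(q_i,q)=1} ∏_{i=1}^d B(q_i/q, M^{−(k+1)v_i}) ) ≥ c·μ_{p,d}(B). -/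

import Mathlib

/-!
The denominators `q ∈ [Q, 2Q)` with `Q = M ^ k` already suffice, and every large `k` works. Write
the ball as `X + p^s ℤ_p^d` and `N = d + m + 1`, and record its points as residues `z`, the point
`X i + p^s z i` being known modulo `p ^ S i ≈ Q ^ v i` up to a constant. For each `z` consider the
lattice of integer vectors `(q, a, b)` with `a i ≡ (X i + p^s z i) q (mod p ^ S i)` and
`b j ≡ A j q (mod p ^ t j)`, where `A j` is an integer close to `α j` and `p ^ t j ≈ Q ^ τ j`.
Because `∑ v + ∑ τ = N`, its index is comparable to `Q ^ N`. A reduced vector of the box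
`q ∈ [Q, 2Q)`, `0 ≤ a, b < Q` with `p ∤ q` makes `q` an element of `J_k` and places a rectangle of
the theorem near the point `z`. The theorem thus follows once half of the residues `z` have such a
vector (`Core.good_card`): shrunk by a constant factor, the rectangles of different `z` are
disjoint, and together they fill a fixed proportion of the ball (`ubiq_core`).

The vectors are counted through `covering`: if the kernel of a surjection from `ℤ^N` onto a finite
group has no nonzero vector of norm below `R`, then its covering radius is bounded in terms of `R`
and the order of the group, whence upper and lower bounds for lattice points in boxes (`lat_upper`,
`lat_lower`). Two lattices are used.

* The lattice of approximations `(q, b)` to `A`. By the hypothesis `τ(α) = m + 1` it has no nonzero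
  vector of norm below `Q ^ θ`, for a `θ` just below `(∑ τ) / (m + 1)` (`short_vectors`). As each
  `τ j` exceeds `1`, its covering radius is smaller than `Q` by a power of `Q` (`rho_bound`), so the
  upper bounds persist after imposing congruences modulo numbers up to a small power of `Q`.
* The full lattice of `z`. Summing over the short vectors of the first lattice shows that all but
  a quarter of the `z` have no nonzero vector of norm below a small multiple `R1` of `Q`
  (`Core.bad1_card`). For these the number of vectors in the box with `q ≡ 1` modulo a fixed
  factorial `Y!` has the expected order of magnitude (`Core.full_card`).

It remains to see that, over all `z` together, few of these vectors are unreduced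
(`Core.bad2_card`). Common primes up to `Y` (among them `p`) are excluded by `q ≡ 1 (mod Y!)`.
Medium primes `ℓ ∈ (Y, L]`, with `L` a small power of `Q`, are handled by counting with congruences,
and cost a proportion `∑ 1 / ℓ²`, which is `O(1 / Y)`. For primes `ℓ > L` dividing `q` and `a i`,
observe that `q` has boundedly many such factors and that `a i` runs through whole progressions as
`z` varies (`Core.badA_bound`). For `ℓ > L` dividing `q` and `b j` there is no such freedom, and
lines in the direction of a short lattice vector are used instead (`common_large`,
`Core.badQ_bound`). Choosing `Y` large makes the total at most a quarter of the residues.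
-/

open scoped BigOperators ENNReal
open MeasureTheory

noncomputable instance {p : ℕ} [Fact p.Prime] : MeasurableSpace ℤ_[p] := borel _
instance {p : ℕ} [Fact p.Prime] : BorelSpace ℤ_[p] := ⟨rfl⟩

/-- The Diophantine exponent of `α ∈ ℤ_p^m`. -/
noncomputable def dioExp {p : ℕ} [Fact p.Prime] {m : ℕ} (α : Fin m → ℤ_[p]) : ℝ :=
  sSup {s : ℝ | ∃ τ : Fin m → ℝ, s = ∑ i, τ i ∧
    ∀ Q₀ : ℕ, ∃ Q : ℕ, Q₀ ≤ Q ∧ ∃ q₀ : ℤ, ∃ q : Fin m → ℤ,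
      0 < q₀ ∧ q₀ ≤ (Q : ℤ) ∧ (∀ i, |q i| ≤ (Q : ℤ)) ∧
      ∀ i, ‖(q₀ : ℤ_[p]) * α i - (q i : ℤ_[p])‖ < (Q : ℝ) ^ (-(τ i))}

/-- The set `𝒬(α, τ_m)` of denominators `q₀` admitting a reduced good rational
approximation to `α` with exponents `τ_m`. -/
def QDen {p : ℕ} [Fact p.Prime] {m : ℕ} (α : Fin m → ℤ_[p]) (τm : Fin m → ℝ) :
    Set ℕ :=
  {q₀ | 0 < q₀ ∧ ∃ q : Fin m → ℤ,
    (∀ i, |q i| ≤ (q₀ : ℤ) ∧ Int.gcd (q i) q₀ = 1) ∧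
    ∀ i, ‖(α i : ℚ_[p]) - (q i : ℚ_[p]) / (q₀ : ℚ_[p])‖ < (q₀ : ℝ) ^ (-(τm i))}

namespace LocUbiq

/-! ### Covering radius and points of a box in a fibre -/

/-- The integer box `∏ᵢ [aᵢ, aᵢ + hᵢ)`. -/
noncomputable def zbox {ι : Type*} [Fintype ι] [DecidableEq ι] (a : ι → ℤ) (h : ι → ℕ) : Finset (ι → ℤ) :=
  Fintype.piFinset fun i => Finset.Ico (a i) (a i + h i)

theorem mem_zbox {ι : Type*} [Fintype ι] [DecidableEq ι] {a : ι → ℤ} {h : ι → ℕ} {u : ι → ℤ} :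
    u ∈ zbox a h ↔ ∀ i, a i ≤ u i ∧ u i < a i + h i := by
  simp [zbox]

theorem card_zbox {ι : Type*} [Fintype ι] [DecidableEq ι] (a : ι → ℤ) (h : ι → ℕ) :
    (zbox a h).card = ∏ i, h i := by
  simp [zbox, Fintype.card_piFinset]

/-- Covering radius bound: if the kernel of a surjection from `ℤ^ι` onto a finite group `G` has no
nonzero vector of sup norm below `R`, then every element of `G` has a preimage of norm
`≤ 2R(|G|/R^|ι| + 1)`. The images of the balls of radius `2Rj` gain at least `R^|ι|` elements at
each step until they fill `G`. -/
theorem covering {ι : Type*} [Fintype ι] [DecidableEq ι] {G : Type*} [AddCommGroup G] [Fintype G]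
    [DecidableEq G] (f : (ι → ℤ) →+ G) (hf : Function.Surjective f) (R : ℕ) (hR : 1 ≤ R)
    (hinj : ∀ u, f u = 0 → (∀ i, |u i| < (R : ℤ)) → u = 0) (g : G) :
    ∃ u, f u = g ∧
      ∀ i, |u i| ≤ ((2 * R * (Fintype.card G / R ^ Fintype.card ι + 1) : ℕ) : ℤ) := by
  set C : ℕ → Set G := fun k => {g | ∃ u, f u = g ∧ ∀ i, |u i| ≤ (k : ℤ)} with hC
  have hmono : ∀ {k l : ℕ}, k ≤ l → C k ⊆ C l := by
    rintro k l hkl g ⟨u, hu, hu'⟩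
    exact ⟨u, hu, fun i => (hu' i).trans (by exact_mod_cast hkl)⟩
  have hadd : ∀ {k l : ℕ} {g h : G}, g ∈ C k → h ∈ C l → g + h ∈ C (k + l) := by
    rintro k l g h ⟨u, hu, hu'⟩ ⟨w, hw, hw'⟩
    refine ⟨u + w, by rw [map_add, hu, hw], fun i => ?_⟩
    have := abs_add_le (u i) (w i)
    have h1 := hu' i
    have h2 := hw' i
    push_cast
    simp only [Pi.add_apply]
    linarith
  have hneg : ∀ {k : ℕ} {g : G}, g ∈ C k → -g ∈ C k := by
    rintro k g ⟨u, hu, hu'⟩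
    exact ⟨-u, by rw [map_neg, hu], fun i => by simpa using hu' i⟩
  -- a step without growth means that the whole group has been reached
  have hstab : ∀ k, C (k + 1) ⊆ C k → C k = Set.univ := by
    intro k hk
    have hall : ∀ l, C l ⊆ C k := by
      intro l
      induction l with
      | zero => exact hmono (Nat.zero_le _)
      | succ l ih =>
        rintro g ⟨u, hu, hu'⟩
        have hsg : ∀ i, |Int.sign (u i)| ≤ 1 ∧ |u i - Int.sign (u i)| ≤ (l : ℤ) := by
          intro i
          have h1 := hu' i
          push_cast at h1
          rcases lt_trichotomy (u i) 0 with h | h | h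
          · rw [Int.sign_eq_neg_one_of_neg h]
            rw [abs_of_neg h] at h1
            constructor
            · simp
            · rw [abs_le]; constructor <;> linarith
          · rw [h]; simp
          · rw [Int.sign_eq_one_of_pos h]
            rw [abs_of_pos h] at h1
            constructor
            · simp
            · rw [abs_le]; constructor <;> linarith
        have h1 : f (fun i => u i - Int.sign (u i)) ∈ C k := ih ⟨_, rfl, fun i => (hsg i).2⟩
        have h2 : f (fun i => Int.sign (u i)) ∈ C 1 :=
          ⟨_, rfl, fun i => by simpa using (hsg i).1⟩
        have h3 := hk (hadd h1 h2)
        rw [← map_add] at h3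
        have : ((fun i => u i - Int.sign (u i)) + fun i => Int.sign (u i)) = u := by
          ext i; simp
        rwa [this, hu] at h3
    ext g
    refine ⟨fun _ => trivial, fun _ => ?_⟩
    obtain ⟨u, hu⟩ := hf g
    refine hall (∑ i, (u i).natAbs) ⟨u, hu, fun i => ?_⟩
    rw [Int.abs_eq_natAbs]
    exact_mod_cast Finset.single_le_sum (f := fun i => (u i).natAbs) (fun _ _ => Nat.zero_le _)
      (Finset.mem_univ i)
  classical
  have hgrow : ∀ j : ℕ, C (2 * R * j) = Set.univ ∨
      j * R ^ Fintype.card ι ≤ (Finset.univ.filter (· ∈ C (2 * R * j))).card := by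
    intro j
    induction j with
    | zero => right; simp
    | succ j ih =>
      by_cases hu : C (2 * R * (j + 1)) = Set.univ
      · left; exact hu
      right
      have hnot : C (2 * R * j) ≠ Set.univ := by
        intro h
        apply hu
        apply Set.eq_univ_of_univ_subset
        rw [← h]
        exact hmono (by gcongr; omega)
      have ih := ih.resolve_left hnot
      have hnot2 : ¬ C (2 * R * j + R + 1) ⊆ C (2 * R * j + R) := by
        intro h
        apply hu
        apply Set.eq_univ_of_univ_subset
        rw [← hstab _ h]
        exact hmono (by nlinarith)
      obtain ⟨g, hg, hg'⟩ := Set.not_subset.mp hnot2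
      set P : Finset (ι → ℤ) := zbox (fun _ => 0) (fun _ => R) with hP
      have hPC : ∀ u ∈ P, f u ∈ C (R - 1) := by
        intro u hu
        rw [mem_zbox] at hu
        refine ⟨u, rfl, fun i => ?_⟩
        have := hu i
        rw [abs_of_nonneg this.1]
        omega
      have hinjP : Set.InjOn (fun u => g - f u) P := by
        intro u hu w hw huw
        have hu := mem_zbox.mp hu
        have hw := mem_zbox.mp hw
        have : f (u - w) = 0 := by
          rw [map_sub]
          have : g - f u = g - f w := huw
          rw [sub_right_inj] at this
          rw [this, sub_self]
        have := hinj _ this (fun i => by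
          have h1 := hu i
          have h2 := hw i
          simp only [Pi.sub_apply]
          rw [abs_lt]
          constructor <;> linarith)
        exact sub_eq_zero.mp this
      have hcard : (P.image fun u => g - f u).card = R ^ Fintype.card ι := by
        rw [Finset.card_image_of_injOn hinjP, hP, card_zbox]
        simp
      have hdisj : Disjoint (Finset.univ.filter (· ∈ C (2 * R * j)))
          (P.image fun u => g - f u) := by
        rw [Finset.disjoint_left]
        intro x hx hx'
        obtain ⟨u, hu, rfl⟩ := Finset.mem_image.mp hx'
        have hx := (Finset.mem_filter.mp hx).2
        apply hg'
        have := hadd hx (hPC u hu)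
        rw [sub_add_cancel] at this
        exact hmono (by omega) this
      have hsub : (Finset.univ.filter (· ∈ C (2 * R * j))) ∪ (P.image fun u => g - f u) ⊆
          Finset.univ.filter (· ∈ C (2 * R * (j + 1))) := by
        intro x hx
        rw [Finset.mem_filter]
        refine ⟨Finset.mem_univ _, ?_⟩
        rcases Finset.mem_union.mp hx with hx | hx
        · exact hmono (by gcongr; omega) (Finset.mem_filter.mp hx).2
        · obtain ⟨u, hu, rfl⟩ := Finset.mem_image.mp hx
          rw [sub_eq_add_neg]
          refine hmono ?_ (hadd hg (hneg (hPC u hu)))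
          have : 2 * R * (j + 1) = 2 * R * j + R + R := by ring
          omega
      have := Finset.card_le_card hsub
      rw [Finset.card_union_of_disjoint hdisj, hcard] at this
      linarith
  have hfin : C (2 * R * (Fintype.card G / R ^ Fintype.card ι + 1)) = Set.univ := by
    refine (hgrow _).resolve_right ?_
    intro h
    have h1 := h.trans (Finset.card_le_univ _)
    have h2 := Nat.lt_div_mul_add (a := Fintype.card G) (b := R ^ Fintype.card ι) (by positivity)
    nlinarith
  have : g ∈ C (2 * R * (Fintype.card G / R ^ Fintype.card ι + 1)) := by rw [hfin]; trivial
  exact this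

/-- Up to enlarging the box by the covering radius, all fibres meet a box equally often. -/
theorem fibre_le {ι : Type*} [Fintype ι] [DecidableEq ι] {G : Type*} [AddCommGroup G]
    [DecidableEq G] (f : (ι → ℤ) →+ G) (ρ : ℕ)
    (hρ : ∀ g, ∃ u, f u = g ∧ ∀ i, |u i| ≤ (ρ : ℤ)) (a : ι → ℤ) (h : ι → ℕ) (g g' : G) :
    ((zbox a h).filter (f · = g)).card ≤
      ((zbox (fun i => a i - ρ) (fun i => h i + 2 * ρ)).filter (f · = g')).card := by
  obtain ⟨v, hv, hv'⟩ := hρ (g' - g)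
  refine Finset.card_le_card_of_injOn (fun u => u + v) ?_ (fun u _ w _ huw => by simpa using huw)
  intro u hu
  have hu := Finset.mem_filter.mp hu
  have hb := mem_zbox.mp hu.1
  apply Finset.mem_filter.mpr
  refine ⟨mem_zbox.mpr fun i => ?_, by rw [map_add, hu.2, hv]; abel⟩
  have h1 := abs_le.mp (hv' i)
  have h2 := hb i
  simp only [Pi.add_apply]
  push_cast
  constructor <;> linarith

theorem fibre_upper {ι : Type*} [Fintype ι] [DecidableEq ι] {G : Type*} [AddCommGroup G]
    [Fintype G] [DecidableEq G] (f : (ι → ℤ) →+ G) (ρ : ℕ)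
    (hρ : ∀ g, ∃ u, f u = g ∧ ∀ i, |u i| ≤ (ρ : ℤ)) (a : ι → ℤ) (h : ι → ℕ) (g : G) :
    Fintype.card G * ((zbox a h).filter (f · = g)).card ≤ ∏ i, (h i + 2 * ρ) := by
  have h1 := Finset.card_eq_sum_card_fiberwise (f := f) (t := Finset.univ)
    (s := zbox (fun i => a i - ρ) (fun i => h i + 2 * ρ)) (fun _ _ => Finset.mem_univ _)
  rw [card_zbox] at h1
  rw [h1, ← Finset.card_univ, ← smul_eq_mul]
  exact Finset.card_nsmul_le_sum _ _ _ fun g' _ => fibre_le f ρ hρ a h g g'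

theorem fibre_lower {ι : Type*} [Fintype ι] [DecidableEq ι] {G : Type*} [AddCommGroup G]
    [Fintype G] [DecidableEq G] (f : (ι → ℤ) →+ G) (ρ : ℕ)
    (hρ : ∀ g, ∃ u, f u = g ∧ ∀ i, |u i| ≤ (ρ : ℤ)) (a : ι → ℤ) (h : ι → ℕ)
    (hh : ∀ i, 2 * ρ ≤ h i) (g : G) :
    ∏ i, (h i - 2 * ρ) ≤ Fintype.card G * ((zbox a h).filter (f · = g)).card := by
  have h1 := Finset.card_eq_sum_card_fiberwise (f := f) (t := Finset.univ)
    (s := zbox (fun i => a i + ρ) (fun i => h i - 2 * ρ)) (fun _ _ => Finset.mem_univ _)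
  rw [card_zbox] at h1
  rw [h1, ← Finset.card_univ, ← smul_eq_mul]
  refine Finset.sum_le_card_nsmul _ _ _ fun g' _ => ?_
  have h2 := fibre_le f ρ hρ (fun i => a i + ρ) (fun i => h i - 2 * ρ) g' g
  have h3 : (fun i => a i + ρ - (ρ : ℤ)) = a := by ext i; ring
  have h4 : (fun i => h i - 2 * ρ + 2 * ρ) = h := by ext i; have := hh i; omega
  simp only [h3] at h2
  rwa [h4] at h2

/-! ### Lattices of approximations -/

/-- `u = (q₀, q)` lies in the lattice `qⱼ ≡ Aⱼ q₀ (mod nⱼ)` of approximations to `A`; the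
denominator `q₀` is the coordinate `none`. -/
def InLat {κ : Type*} (A : κ → ℤ) (n : κ → ℕ) (u : Option κ → ℤ) : Prop :=
  ∀ j, (n j : ℤ) ∣ u (some j) - A j * u none

theorem InLat.add {κ : Type*} {A : κ → ℤ} {n : κ → ℕ} {u v : Option κ → ℤ}
    (hu : InLat A n u) (hv : InLat A n v) : InLat A n (u + v) := by
  intro j
  obtain ⟨c, hc⟩ := hu j
  obtain ⟨c', hc'⟩ := hv j
  refine ⟨c + c', ?_⟩
  simp only [Pi.add_apply]
  linear_combination hc + hc'

theorem InLat.neg {κ : Type*} {A : κ → ℤ} {n : κ → ℕ} {u : Option κ → ℤ}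
    (hu : InLat A n u) : InLat A n (-u) := by
  intro j
  obtain ⟨c, hc⟩ := hu j
  refine ⟨-c, ?_⟩
  simp only [Pi.neg_apply]
  linear_combination -hc

theorem InLat.smul {κ : Type*} {A : κ → ℤ} {n : κ → ℕ} {u : Option κ → ℤ}
    (hu : InLat A n u) (c : ℤ) : InLat A n (c • u) := by
  intro j
  obtain ⟨b, hb⟩ := hu j
  refine ⟨c * b, ?_⟩
  simp only [Pi.smul_apply, smul_eq_mul]
  linear_combination c * hb

/-- The homomorphism whose kernel is the sublattice of `InLat A n` given by `w ∣ q₀`. -/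
def latHom {κ : Type*} (w : ℕ) (A : κ → ℤ) (n : κ → ℕ) :
    (Option κ → ℤ) →+ ZMod w × (∀ j, ZMod (n j)) :=
  AddMonoidHom.mk' (fun u => ((u none : ZMod w), fun j => ((u (some j) - A j * u none : ℤ) :
    ZMod (n j)))) (by
      intro u v
      ext
      · simp
      · simp; ring)

theorem latHom_eq {κ : Type*} (w : ℕ) (A : κ → ℤ) (n : κ → ℕ) (r : ℤ) (u : Option κ → ℤ) :
    latHom w A n u = ((r : ZMod w), 0) ↔ (w : ℤ) ∣ u none - r ∧ InLat A n u := by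
  simp only [latHom, AddMonoidHom.mk'_apply, Prod.mk.injEq, funext_iff, InLat]
  refine and_congr ?_ (forall_congr' fun j => ?_)
  · rw [eq_comm, ZMod.intCast_eq_intCast_iff_dvd_sub]
  · rw [Pi.zero_apply, ZMod.intCast_zmod_eq_zero_iff_dvd]

theorem latHom_surj {κ : Type*} (w : ℕ) (A : κ → ℤ) (n : κ → ℕ) :
    Function.Surjective (latHom w A n) := by
  rintro ⟨r, g⟩
  obtain ⟨r, rfl⟩ := ZMod.intCast_surjective r
  choose c hc using fun j => ZMod.intCast_surjective (g j)
  refine ⟨fun o => o.elim r (fun j => c j + A j * r), ?_⟩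
  ext
  · simp [latHom]
  · simp [latHom, hc]

section
variable {κ : Type*} [Fintype κ] [DecidableEq κ]

theorem lat_covering (A : κ → ℤ) (n : κ → ℕ) (R : ℕ) (hR : 1 ≤ R)
    (hmin : ∀ u, InLat A n u → (∀ i, |u i| < (R : ℤ)) → u = 0)
    (w : ℕ) (hw : 0 < w) (A' : κ → ℤ) (n' : κ → ℕ) (hn' : ∀ j, 0 < n' j) (hn : ∀ j, n j ∣ n' j)
    (hA : ∀ j, (n j : ℤ) ∣ A' j - A j) (ρ : ℕ)
    (hρ : 2 * R * ((w * ∏ j, n' j) / R ^ (Fintype.card κ + 1) + 1) ≤ ρ)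
    (g : ZMod w × (∀ j, ZMod (n' j))) :
    ∃ u, latHom w A' n' u = g ∧ ∀ i, |u i| ≤ (ρ : ℤ) := by
  have : NeZero w := ⟨hw.ne'⟩
  have : ∀ j, NeZero (n' j) := fun j => ⟨(hn' j).ne'⟩
  obtain ⟨u, hu, hu'⟩ := covering (latHom w A' n') (latHom_surj _ _ _) R hR (by
    intro u hu hu'
    refine hmin u ?_ hu'
    have := ((latHom_eq w A' n' 0 u).mp (by rw [hu]; simp; rfl)).2
    intro j
    obtain ⟨c, hc⟩ := (Int.natCast_dvd_natCast.mpr (hn j)).trans (this j)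
    obtain ⟨c', hc'⟩ := hA j
    exact ⟨c + c' * u none, by linear_combination hc + u none * hc'⟩) g
  refine ⟨u, hu, fun i => (hu' i).trans ?_⟩
  have : Fintype.card (ZMod w × (∀ j, ZMod (n' j))) = w * ∏ j, n' j := by
    simp [Fintype.card_prod, ZMod.card, Fintype.card_pi]
  rw [this, Fintype.card_option]
  exact_mod_cast hρ

/-- Upper bound for the number of lattice points in a box, for every refinement of a lattice
without short vectors by further congruence conditions. -/
theorem lat_upper (A : κ → ℤ) (n : κ → ℕ) (R : ℕ) (hR : 1 ≤ R)
    (hmin : ∀ u, InLat A n u → (∀ i, |u i| < (R : ℤ)) → u = 0)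
    (w : ℕ) (hw : 0 < w) (A' : κ → ℤ) (n' : κ → ℕ) (hn' : ∀ j, 0 < n' j) (hn : ∀ j, n j ∣ n' j)
    (hA : ∀ j, (n j : ℤ) ∣ A' j - A j) (ρ : ℕ)
    (hρ : 2 * R * ((w * ∏ j, n' j) / R ^ (Fintype.card κ + 1) + 1) ≤ ρ)
    (a : Option κ → ℤ) (h : Option κ → ℕ) (r : ℤ) (F : Finset (Option κ → ℤ))
    (hF : ∀ u ∈ F, u ∈ zbox a h ∧ (w : ℤ) ∣ u none - r ∧ InLat A' n' u) :
    (w * ∏ j, n' j) * F.card ≤ ∏ i, (h i + 2 * ρ) := by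
  have : NeZero w := ⟨hw.ne'⟩
  have : ∀ j, NeZero (n' j) := fun j => ⟨(hn' j).ne'⟩
  have h1 := fibre_upper (latHom w A' n') ρ
    (lat_covering A n R hR hmin w hw A' n' hn' hn hA ρ hρ) a h ((r : ZMod w), 0)
  have : Fintype.card (ZMod w × (∀ j, ZMod (n' j))) = w * ∏ j, n' j := by
    simp [Fintype.card_prod, ZMod.card, Fintype.card_pi]
  rw [this] at h1
  refine (Nat.mul_le_mul_left _ (Finset.card_le_card ?_)).trans h1
  intro u hu
  rw [Finset.mem_filter, latHom_eq]
  exact hF u hu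

/-- Lower bound for the number of lattice points in a box with `q₀` in a prescribed residue
class. -/
theorem lat_lower (A : κ → ℤ) (n : κ → ℕ) (hn : ∀ j, 0 < n j) (R : ℕ) (hR : 1 ≤ R)
    (hmin : ∀ u, InLat A n u → (∀ i, |u i| < (R : ℤ)) → u = 0)
    (w : ℕ) (hw : 0 < w) (ρ : ℕ)
    (hρ : 2 * R * ((w * ∏ j, n j) / R ^ (Fintype.card κ + 1) + 1) ≤ ρ)
    (a : Option κ → ℤ) (h : Option κ → ℕ) (hh : ∀ i, 2 * ρ ≤ h i) (r : ℤ)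
    (F : Finset (Option κ → ℤ))
    (hF : ∀ u, u ∈ zbox a h → (w : ℤ) ∣ u none - r → InLat A n u → u ∈ F) :
    ∏ i, (h i - 2 * ρ) ≤ (w * ∏ j, n j) * F.card := by
  have : NeZero w := ⟨hw.ne'⟩
  have : ∀ j, NeZero (n j) := fun j => ⟨(hn j).ne'⟩
  have h1 := fibre_lower (latHom w A n) ρ
    (lat_covering A n R hR hmin w hw A n hn (fun _ => dvd_rfl) (by simp) ρ hρ) a h hh
    ((r : ZMod w), 0)
  have : Fintype.card (ZMod w × (∀ j, ZMod (n j))) = w * ∏ j, n j := by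
    simp [Fintype.card_prod, ZMod.card, Fintype.card_pi]
  rw [this] at h1
  refine h1.trans (Nat.mul_le_mul_left _ (Finset.card_le_card ?_))
  intro u hu
  rw [Finset.mem_filter, latHom_eq] at hu
  exact hF u hu.1 hu.2.1 hu.2.2

/-- Walking from the origin in unit steps and rounding each point of the walk to the lattice, a
lattice of covering radius `ρ` is generated by its vectors of norm at most `2ρ + 1`. -/
theorem small_gen (A : κ → ℤ) (n : κ → ℕ) (ρ : ℕ)
    (hρ : ∀ v : Option κ → ℤ, ∃ u, (∀ i, |u i| ≤ (ρ : ℤ)) ∧ InLat A n (v - u))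
    (Z : AddSubgroup (Option κ → ℤ))
    (hZ : ∀ u, InLat A n u → (∀ i, |u i| ≤ 2 * (ρ : ℤ) + 1) → u ∈ Z)
    (u : Option κ → ℤ) (hu : InLat A n u) : u ∈ Z := by
  have key : ∀ N : ℕ, ∀ v : Option κ → ℤ, ∑ i, (v i).natAbs = N → ∀ u : Option κ → ℤ,
      (∀ i, |u i| ≤ (ρ : ℤ)) → InLat A n (v - u) → v - u ∈ Z := by
    intro N
    induction N with
    | zero =>
      intro v hv u hu hvu
      have : v = 0 := by
        ext i
        have := (Finset.sum_eq_zero_iff.mp hv) i (Finset.mem_univ i)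
        simpa using this
      subst this
      refine hZ _ hvu fun i => ?_
      have := hu i
      simp only [zero_sub, Pi.neg_apply, abs_neg]
      linarith [abs_nonneg (u i)]
    | succ N ih =>
      intro v hv u hu hvu
      obtain ⟨i, hi⟩ : ∃ i, v i ≠ 0 := by
        by_contra! hcon
        simp [hcon] at hv
      set e : Option κ → ℤ := Pi.single i (Int.sign (v i)) with he
      have hsg : (v i - Int.sign (v i)).natAbs + 1 = (v i).natAbs := by
        rcases lt_trichotomy (v i) 0 with h | h | h
        · rw [Int.sign_eq_neg_one_of_neg h]; omega
        · exact absurd h hi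
        · rw [Int.sign_eq_one_of_pos h]; omega
      have hv' : ∑ j, ((v - e) j).natAbs = N := by
        rw [← Finset.add_sum_erase _ _ (Finset.mem_univ i)] at hv ⊢
        have h1 : ∑ j ∈ Finset.univ.erase i, ((v - e) j).natAbs =
            ∑ j ∈ Finset.univ.erase i, (v j).natAbs := by
          refine Finset.sum_congr rfl fun j hj => ?_
          simp [he, Pi.single_eq_of_ne (Finset.ne_of_mem_erase hj)]
        rw [h1]
        simp only [he, Pi.sub_apply, Pi.single_eq_same]
        omega
      obtain ⟨u', hu', hvu'⟩ := hρ (v - e)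
      have h1 := ih (v - e) hv' u' hu' hvu'
      have h2 : v - u = (v - e - u') + (e - u + u') := by abel
      rw [h2]
      refine Z.add_mem h1 (hZ _ ?_ fun j => ?_)
      · have := hvu.add hvu'.neg
        convert this using 1
        abel
      · have hej : |e j| ≤ 1 := by
          by_cases hj : j = i
          · subst hj
            simp only [he, Pi.single_eq_same]
            rcases lt_trichotomy (v j) 0 with h | h | h
            · rw [Int.sign_eq_neg_one_of_neg h]; simp
            · exact absurd h hi
            · rw [Int.sign_eq_one_of_pos h]; simp
          · simp [he, Pi.single_eq_of_ne hj]
        have h3 := abs_le.mp hej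
        have h4 := abs_le.mp (hu j)
        have h5 := abs_le.mp (hu' j)
        simp only [Pi.add_apply, Pi.sub_apply]
        rw [abs_le]
        constructor <;> linarith
  have := key _ u rfl 0 (by simp) (by simpa using hu)
  simpa using this

/-- If the lattice contains a short vector none of whose first `L` multiples lies in `Z`, then
`Z` contains at most a proportion `1/L` of the lattice points in a box. -/
theorem sparse (A : κ → ℤ) (n : κ → ℕ) (Z : AddSubgroup (Option κ → ℤ)) (L δ : ℕ)
    (w : Option κ → ℤ) (hw : InLat A n w) (hwδ : ∀ i, L * |w i| ≤ (δ : ℤ))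
    (hwZ : ∀ t : ℕ, 0 < t → t < L → (t : ℤ) • w ∉ Z)
    (a : Option κ → ℤ) (h : Option κ → ℕ) (F F' : Finset (Option κ → ℤ))
    (hF : ∀ u ∈ F, u ∈ zbox a h ∧ InLat A n u ∧ u ∈ Z)
    (hF' : ∀ u ∈ zbox (fun i => a i - δ) (fun i => h i + 2 * δ), InLat A n u → u ∈ F') :
    L * F.card ≤ F'.card := by
  have h1 : (Finset.range L ×ˢ F).card = L * F.card := by simp
  rw [← h1]
  refine Finset.card_le_card_of_injOn (fun x => x.2 + (x.1 : ℤ) • w) ?_ ?_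
  · rintro ⟨t, u⟩ hx
    simp only [Finset.coe_product, Finset.coe_range, Set.mem_prod, Set.mem_Iio,
      Finset.mem_coe] at hx
    obtain ⟨ht, hu⟩ := hx
    obtain ⟨hb, hl, -⟩ := hF u hu
    refine hF' _ (mem_zbox.mpr fun i => ?_) (hl.add (hw.smul _))
    have hb := mem_zbox.mp hb i
    have h2 : |(t : ℤ) * w i| ≤ δ := by
      rw [abs_mul, Nat.abs_cast]
      refine le_trans ?_ (hwδ i)
      have : (t : ℤ) ≤ L := by exact_mod_cast ht.le
      gcongr
    have h2 := abs_le.mp h2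
    simp only [Pi.add_apply, Pi.smul_apply, smul_eq_mul]
    push_cast
    constructor <;> linarith
  · rintro ⟨t, u⟩ hx ⟨t', u'⟩ hx' hxx
    simp only [Finset.coe_product, Finset.coe_range, Set.mem_prod, Set.mem_Iio,
      Finset.mem_coe] at hx hx'
    have hu := (hF u hx.2).2.2
    have hu' := (hF u' hx'.2).2.2
    simp only at hxx
    have haux : ∀ (s s' : ℕ) (v v' : Option κ → ℤ), v ∈ Z → v' ∈ Z → s' < L →
        v + (s : ℤ) • w = v' + (s' : ℤ) • w → ¬ s < s' := by
      intro s s' v v' hv hv' hs hvv hlt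
      refine hwZ (s' - s) (by omega) (by omega) ?_
      have : ((s' - s : ℕ) : ℤ) • w = v - v' := by
        rw [Nat.cast_sub hlt.le, sub_smul]
        rw [sub_eq_sub_iff_add_eq_add]
        rw [add_comm, ← hvv]
      rw [this]
      exact Z.sub_mem hv hv'
    have htt : t = t' :=
      le_antisymm (not_lt.mp (haux t' t u' u hu' hu hx.1 hxx.symm))
        (not_lt.mp (haux t t' u u' hu hu' hx'.1 hxx))
    subst htt
    simpa using hxx

end

/-! ### Common prime factors exceeding a bound -/

/-- A nonzero integer below `L ^ C` has fewer than `C` prime factors above `L`. -/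
theorem prime_count (h : ℤ) (hh : h ≠ 0) (L C : ℕ) (hL : 1 ≤ L) (hb : |h| < (L : ℤ) ^ C)
    (S : Finset ℕ) (hS : ∀ ℓ ∈ S, ℓ.Prime ∧ L < ℓ ∧ (ℓ : ℤ) ∣ h) : S.card < C := by
  have h1 : ∏ ℓ ∈ S, ℓ ∣ h.natAbs :=
    Finset.prod_primes_dvd _ (fun ℓ hℓ => (hS ℓ hℓ).1.prime)
      (fun ℓ hℓ => Int.natCast_dvd.mp (hS ℓ hℓ).2.2)
  have h2 : L ^ S.card ≤ ∏ ℓ ∈ S, ℓ := by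
    have := Finset.prod_le_prod' (s := S) (f := fun _ => L) (g := fun ℓ => ℓ)
      (fun ℓ hℓ => (hS ℓ hℓ).2.1.le)
    simpa using this
  have h3 := Nat.le_of_dvd (Int.natAbs_pos.mpr hh) h1
  have h4 : h.natAbs < L ^ C := by
    rw [Int.abs_eq_natAbs] at hb
    exact_mod_cast hb
  by_contra! hcon
  exact absurd (Nat.pow_le_pow_right hL hcon) (not_le.mpr (h2.trans_lt (h3.trans_lt h4)))

section
variable {κ : Type*} [Fintype κ] [DecidableEq κ]

/-- A proper subgroup of a lattice without short vectors misses some vector of moderate size. -/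
theorem exists_small (A : κ → ℤ) (n : κ → ℕ) (hn : ∀ j, 0 < n j) (R : ℕ) (hR : 1 ≤ R)
    (hmin : ∀ u, InLat A n u → (∀ i, |u i| < (R : ℤ)) → u = 0) (ρ : ℕ)
    (hρ : 2 * R * ((∏ j, n j) / R ^ (Fintype.card κ + 1) + 1) ≤ ρ)
    (Z : AddSubgroup (Option κ → ℤ)) (u : Option κ → ℤ) (hu : InLat A n u) (huZ : u ∉ Z) :
    ∃ w, InLat A n w ∧ (∀ i, |w i| ≤ 2 * (ρ : ℤ) + 1) ∧ w ∉ Z := by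
  by_contra! hcon
  refine huZ (small_gen A n ρ ?_ Z hcon u hu)
  intro v
  obtain ⟨u, hu, hu'⟩ := lat_covering A n R hR hmin 1 one_pos A n hn (fun _ => dvd_rfl)
    (by simp) ρ (by simpa using hρ) (latHom 1 A n v)
  refine ⟨u, hu', ?_⟩
  refine ((latHom_eq 1 A n 0 (v - u)).mp ?_).2
  rw [map_sub, hu, sub_self]
  simp; rfl

theorem inLat_one {κ : Type*} (A : κ → ℤ) (n : κ → ℕ) :
    InLat A n (fun o => o.elim 1 A) := by
  intro j; simp

/-- Few lattice points have `q₀` and `qⱼ` both divisible by a prime exceeding `L`. Apart from two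
sparse exceptional sets such points can be spread out along lines in the direction of a short
lattice vector `w`; the determinant of the projections of `u` and `w` to the coordinates `0, j` is
constant along each line and divisible by the primes belonging to the points of the line, so that a
line contains few of them. -/
theorem common_large (A : κ → ℤ) (n : κ → ℕ) (hn : ∀ j, 0 < n j) (R : ℕ) (hR : 1 ≤ R)
    (hmin : ∀ u, InLat A n u → (∀ i, |u i| < (R : ℤ)) → u = 0) (ρ : ℕ)
    (hρ : 2 * R * ((∏ j, n j) / R ^ (Fintype.card κ + 1) + 1) ≤ ρ)
    (L Q C : ℕ) (hL : 1 ≤ L) (hLQ : L * (2 * ρ + 1) ≤ Q) (hC : 8 * Q ^ 2 < L ^ C) (j : κ)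
    (F : Finset (Option κ → ℤ))
    (hF : ∀ u ∈ F, u ∈ zbox (fun _ => -(2 * Q : ℤ)) (fun _ => 4 * Q) ∧ InLat A n u ∧
      ∃ ℓ : ℕ, ℓ.Prime ∧ L < ℓ ∧ (ℓ : ℤ) ∣ u none ∧ (ℓ : ℤ) ∣ u (some j)) :
    L * (∏ j, n j) * F.card ≤ (2 * C + 1) * (8 * Q) ^ (Fintype.card κ + 1) := by
  classical
  -- the lattice points in the enlarged box
  set F' : Finset (Option κ → ℤ) :=
    (zbox (fun _ => -(2 * Q : ℤ) - Q) (fun _ => 4 * Q + 2 * Q)).filter (InLat A n) with hF'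
  have hρQ : 2 * ρ + 1 ≤ Q := le_trans (Nat.le_mul_of_pos_left _ hL) hLQ
  have hF'card : (∏ j, n j) * F'.card ≤ (8 * Q) ^ (Fintype.card κ + 1) := by
    have := lat_upper A n R hR hmin 1 one_pos A n hn (fun _ => dvd_rfl) (by simp) ρ
      (by simpa using hρ) _ _ 0 F' (fun u hu => by
        have := Finset.mem_filter.mp hu
        exact ⟨this.1, by simp, this.2⟩)
    rw [one_mul] at this
    refine this.trans ?_
    rw [Finset.prod_const, Finset.card_univ, Fintype.card_option]
    exact Nat.pow_le_pow_left (by omega) _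
  have hsmall : ∀ w : Option κ → ℤ, (∀ i, |w i| ≤ 2 * (ρ : ℤ) + 1) →
      ∀ i, L * |w i| ≤ (Q : ℤ) := by
    intro w hw i
    have h1 : (L : ℤ) * (2 * ρ + 1) ≤ Q := by exact_mod_cast hLQ
    refine le_trans ?_ h1
    exact mul_le_mul_of_nonneg_left (hw i) (by positivity)
  have hmemF' : ∀ u ∈ zbox (fun _ : Option κ => -(2 * Q : ℤ) - (Q : ℕ))
      (fun _ => 4 * Q + 2 * Q), InLat A n u → u ∈ F' := fun u hu huL =>
    Finset.mem_filter.mpr ⟨hu, huL⟩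
  -- a short vector with nonzero denominator
  obtain ⟨w, hwl, hws, hw0⟩ := exists_small A n hn R hR hmin ρ hρ
    (AddMonoidHom.ker (Pi.evalAddMonoidHom (fun _ : Option κ => ℤ) none)) _ (inLat_one A n)
    (by simp [AddMonoidHom.mem_ker])
  have hw0 : w none ≠ 0 := by simpa [AddMonoidHom.mem_ker] using hw0
  set hdet : (Option κ → ℤ) →+ ℤ := AddMonoidHom.mk'
    (fun u => u none * w (some j) - u (some j) * w none) (by
      intro u v; simp only [Pi.add_apply]; ring) with hdetdef
  have hdet_apply : ∀ u, hdet u = u none * w (some j) - u (some j) * w none := fun u => rfl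
  -- points on which the determinant vanishes
  have hF1 : L * (F.filter fun u => hdet u = 0).card ≤ F'.card := by
    obtain ⟨w', hwl', hws', hw'⟩ := exists_small A n hn R hR hmin ρ hρ hdet.ker
      (Pi.single (some j) (n j : ℤ)) (by
        intro i
        by_cases hij : i = j
        · subst hij; simp
        · simp [hij]) (by
        rw [AddMonoidHom.mem_ker, hdet_apply]
        have := (hn j).ne'
        simp [hw0, this])
    refine sparse A n hdet.ker L Q w' hwl' (hsmall w' hws') ?_ _ _ _ F' ?_ hmemF'
    · intro t ht _ hmem
      rw [AddMonoidHom.mem_ker, map_zsmul, smul_eq_mul, mul_eq_zero] at hmem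
      rw [AddMonoidHom.mem_ker] at hw'
      rcases hmem with h | h
      · omega
      · exact hw' h
    · intro u hu
      have hu := Finset.mem_filter.mp hu
      exact ⟨(hF u hu.1).1, (hF u hu.1).2.1, hu.2⟩
  -- points whose denominator is divisible by a large prime dividing both `w 0` and `w j`
  obtain ⟨S, hS⟩ : ∃ S : Finset ℕ, ∀ ℓ, ℓ ∈ S ↔ (ℓ.Prime ∧ L < ℓ ∧ (ℓ : ℤ) ∣ w none) := by
    refine ⟨(Nat.divisors (w none).natAbs).filter fun ℓ => ℓ.Prime ∧ L < ℓ, fun ℓ => ?_⟩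
    rw [Finset.mem_filter, Nat.mem_divisors, Int.natCast_dvd]
    constructor
    · rintro ⟨⟨h1, -⟩, h2, h3⟩; exact ⟨h2, h3, h1⟩
    · rintro ⟨h1, h2, h3⟩; exact ⟨⟨h3, by simpa using hw0⟩, h1, h2⟩
  have hQpos : 1 ≤ Q := by omega
  have hScard : S.card < C := by
    refine prime_count (w none) hw0 L C hL ?_ S (fun ℓ hℓ => (hS ℓ).mp hℓ)
    have h1 := hws none
    have h2 : (2 * (ρ : ℤ) + 1) ≤ Q := by exact_mod_cast hρQ
    have h3 : (8 * (Q : ℤ) ^ 2) < L ^ C := by exact_mod_cast hC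
    nlinarith
  have hF2 : ∀ ℓ ∈ S, L * (F.filter fun u => (ℓ : ℤ) ∣ u none).card ≤ F'.card := by
    intro ℓ hℓ
    obtain ⟨hp, hLℓ, -⟩ := (hS ℓ).mp hℓ
    set Z : AddSubgroup (Option κ → ℤ) :=
      (AddSubgroup.zmultiples (ℓ : ℤ)).comap (Pi.evalAddMonoidHom (fun _ : Option κ => ℤ) none)
    have hZ : ∀ u, u ∈ Z ↔ (ℓ : ℤ) ∣ u none := fun u => by
      simp [Z, AddSubgroup.mem_comap, Int.mem_zmultiples_iff]
    obtain ⟨w', hwl', hws', hw'⟩ := exists_small A n hn R hR hmin ρ hρ Z _ (inLat_one A n) (by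
        rw [hZ]
        intro h
        have h := Int.natCast_dvd.mp h
        simp only [Option.elim, Int.natAbs_one, Nat.dvd_one] at h
        exact hp.one_lt.ne' h)
    refine sparse A n Z L Q w' hwl' (hsmall w' hws') ?_ _ _ _ F' ?_ hmemF'
    · intro t ht htL hmem
      rw [hZ, Pi.smul_apply, smul_eq_mul] at hmem
      rw [hZ] at hw'
      rcases (Nat.prime_iff_prime_int.mp hp).dvd_or_dvd hmem with h | h
      · have := Nat.le_of_dvd ht (Int.natCast_dvd_natCast.mp h)
        omega
      · exact hw' h
    · intro u hu
      have hu := Finset.mem_filter.mp hu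
      exact ⟨(hF u hu.1).1, (hF u hu.1).2.1, (hZ u).mpr hu.2⟩
  -- the generic points
  set G : Finset (Option κ → ℤ) := F.filter fun u => hdet u ≠ 0 ∧ ∀ ℓ ∈ S, ¬ (ℓ : ℤ) ∣ u none
  have hF3 : L * G.card ≤ C * F'.card := by
    have h1 : (Finset.range L ×ˢ G).card = L * G.card := by simp
    rw [← h1]
    have hGF : ∀ u ∈ G, u ∈ F ∧ hdet u ≠ 0 ∧ ∀ ℓ ∈ S, ¬ (ℓ : ℤ) ∣ u none := fun u hu =>
      Finset.mem_filter.mp hu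
    refine Finset.card_le_mul_card_image_of_maps_to (f := fun x : ℕ × (Option κ → ℤ) => x.2 + (x.1 : ℤ) • w) ?_ C ?_
    · rintro ⟨t, u⟩ hx
      obtain ⟨ht, hu⟩ := Finset.mem_product.mp hx
      have hu := (hGF u hu).1
      refine hmemF' _ (mem_zbox.mpr fun i => ?_) ((hF u hu).2.1.add (hwl.smul _))
      have hb := mem_zbox.mp (hF u hu).1 i
      have h2 : |(t : ℤ) * w i| ≤ Q := by
        rw [abs_mul, Nat.abs_cast]
        refine le_trans ?_ (hsmall w hws i)
        have : (t : ℤ) ≤ L := by exact_mod_cast (Finset.mem_range.mp ht).le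
        gcongr
      have h2 := abs_le.mp h2
      simp only [Pi.add_apply, Pi.smul_apply, smul_eq_mul]
      push_cast at hb ⊢
      constructor <;> linarith
    · intro y hy
      set P := (Finset.range L ×ˢ G).filter fun x => x.2 + (x.1 : ℤ) • w = y with hP
      by_cases hPe : P = ∅
      · rw [hPe]; simp
      have hPm : ∀ x ∈ P, x.1 < L ∧ x.2 ∈ G ∧ x.2 + (x.1 : ℤ) • w = y := by
        intro x hx
        have := Finset.mem_filter.mp hx
        have h2 := Finset.mem_product.mp this.1
        exact ⟨Finset.mem_range.mp h2.1, h2.2, this.2⟩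
      have hdety : ∀ x ∈ P, hdet y = hdet x.2 := by
        intro x hx
        rw [← (hPm x hx).2.2, map_add, map_zsmul]
        have : hdet w = 0 := by rw [hdet_apply]; ring
        rw [this, smul_zero, add_zero]
      have hex : ∀ x ∈ P, ∃ ℓ : ℕ, ℓ.Prime ∧ L < ℓ ∧ (ℓ : ℤ) ∣ x.2 none ∧
          (ℓ : ℤ) ∣ x.2 (some j) := fun x hx => (hF _ (hGF _ (hPm x hx).2.1).1).2.2
      choose! ℓ hℓ using hex
      have hinj : Set.InjOn ℓ P := by
        rintro ⟨t, u⟩ hx ⟨t', u'⟩ hx' hll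
        have e1 := (hPm _ hx).2.2
        have e2 := (hPm _ hx').2.2
        simp only at e1 e2
        suffices htt : t = t' by
          subst htt
          rw [← e2] at e1
          have := add_right_cancel e1
          rw [this]
        by_contra hne
        obtain ⟨hp, hLl, hd0, hd1⟩ := hℓ _ hx
        obtain ⟨-, -, hd0', hd1'⟩ := hℓ _ hx'
        rw [← hll] at hd0' hd1'
        simp only at hd0 hd0'
        -- the prime divides `(t - t') w₀`, hence `w₀`
        have e3 : u none - u' none = ((t' : ℤ) - t) * w none := by
          have := congrFun (e1.trans e2.symm) none
          simp only [Pi.add_apply, Pi.smul_apply, smul_eq_mul] at this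
          linarith
        have h4 := dvd_sub hd0 hd0'
        rw [e3] at h4
        rcases (Nat.prime_iff_prime_int.mp hp).dvd_or_dvd h4 with h | h
        · have h5 := Int.le_of_dvd (abs_pos.mpr (show ((t' : ℤ) - t) ≠ 0 by
            intro h0; apply hne; omega)) ((dvd_abs _ _).mpr h)
          have h6 := (hPm _ hx).1
          have h7 := (hPm _ hx').1
          simp only at h6 h7
          have : |(t' : ℤ) - t| < L := by rw [abs_lt]; constructor <;> omega
          omega
        · exact (hGF _ (hPm _ hx).2.1).2.2 _ ((hS _).mpr ⟨hp, hLl, h⟩) hd0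
      rw [← Finset.card_image_of_injOn hinj]
      obtain ⟨x0, hx0⟩ := Finset.nonempty_iff_ne_empty.mpr hPe
      have hy0 : hdet y ≠ 0 := by
        rw [hdety _ hx0]; exact (hGF _ (hPm _ hx0).2.1).2.1
      refine (prime_count (hdet y) hy0 L C hL ?_ _ ?_).le
      · have hyb := mem_zbox.mp (Finset.mem_filter.mp hy).1
        have hb0 := hyb none
        have hbj := hyb (some j)
        push_cast at hb0 hbj
        have hQ3 : ∀ z : ℤ, -(2 * (Q : ℤ)) - Q ≤ z ∧ z < -(2 * (Q : ℤ)) - Q + (4 * Q + 2 * Q) →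
            |z| ≤ 3 * Q := by
          intro z hz; rw [abs_le]; constructor <;> linarith [hz.1, hz.2]
        have a0 := hQ3 _ hb0
        have aj := hQ3 _ hbj
        have h2 : (2 * (ρ : ℤ) + 1) ≤ Q := by exact_mod_cast hρQ
        have b0 := (hws none).trans h2
        have bj := (hws (some j)).trans h2
        have h3 : (8 * (Q : ℤ) ^ 2) < L ^ C := by exact_mod_cast hC
        rw [hdet_apply]
        have m1 : |y none * w (some j)| ≤ 3 * Q * Q := by
          rw [abs_mul]; gcongr
        have m2 : |y (some j) * w none| ≤ 3 * Q * Q := by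
          rw [abs_mul]; gcongr
        have := abs_sub (y none * w (some j)) (y (some j) * w none)
        nlinarith
      · intro l hl
        obtain ⟨x, hx, rfl⟩ := Finset.mem_image.mp hl
        obtain ⟨hp, hLl, hd0, hd1⟩ := hℓ x hx
        refine ⟨hp, hLl, ?_⟩
        rw [hdety x hx, hdet_apply]
        exact dvd_sub (hd0.mul_right _) (hd1.mul_right _)
  have hcover : F ⊆ (F.filter fun u => hdet u = 0) ∪
      (S.biUnion fun ℓ => F.filter fun u => (ℓ : ℤ) ∣ u none) ∪ G := by
    intro u hu
    simp only [Finset.mem_union, Finset.mem_filter, Finset.mem_biUnion, G]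
    by_cases h1 : hdet u = 0
    · exact Or.inl (Or.inl ⟨hu, h1⟩)
    by_cases h2 : ∃ ℓ ∈ S, (ℓ : ℤ) ∣ u none
    · obtain ⟨ℓ, hℓ, h⟩ := h2
      exact Or.inl (Or.inr ⟨ℓ, hℓ, hu, h⟩)
    · push Not at h2
      exact Or.inr ⟨hu, h1, h2⟩
  have hc1 := (Finset.card_le_card hcover).trans ((Finset.card_union_le _ _).trans
    (Nat.add_le_add_right (Finset.card_union_le _ _) _))
  have hc2 : L * (S.biUnion fun ℓ => F.filter fun u => (ℓ : ℤ) ∣ u none).card ≤ C * F'.card := by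
    refine (Nat.mul_le_mul_left L Finset.card_biUnion_le).trans ?_
    rw [Finset.mul_sum]
    refine (Finset.sum_le_card_nsmul _ _ _ hF2).trans ?_
    rw [smul_eq_mul]
    exact Nat.mul_le_mul_right _ hScard.le
  have hc3 : L * F.card ≤ (2 * C + 1) * F'.card := by
    have := Nat.mul_le_mul_left L hc1
    rw [mul_add, mul_add] at this
    linarith
  calc L * (∏ j, n j) * F.card = (∏ j, n j) * (L * F.card) := by ring
    _ ≤ (∏ j, n j) * ((2 * C + 1) * F'.card) := Nat.mul_le_mul_left _ hc3
    _ = (2 * C + 1) * ((∏ j, n j) * F'.card) := by ring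
    _ ≤ _ := Nat.mul_le_mul_left _ hF'card

end

/-! ### Residues and arithmetic progressions -/

/-- At most `(h - 1) / c + 1` of `h` consecutive integers lie in one class modulo `c`. -/
theorem ap_count (c : ℕ) (hc : 0 < c) (b : ℤ) (h : ℕ) (F : Finset ℤ)
    (hF : ∀ a ∈ F, b ≤ a ∧ a < b + h) (hFc : ∀ a ∈ F, ∀ a' ∈ F, (c : ℤ) ∣ a - a') :
    c * F.card ≤ h - 1 + c := by
  rcases F.eq_empty_or_nonempty with rfl | hne
  · simp
  -- compare with the smallest element: the quotients of the differences are distinct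
  set a₀ := F.min' hne with ha₀
  have h0 : a₀ ∈ F := F.min'_mem hne
  have hinj : Set.InjOn (fun a => ((a - a₀) / c).toNat) F := by
    intro a ha a' ha' haa
    have g1 := F.min'_le a ha
    have g2 := F.min'_le a' ha'
    obtain ⟨x, hx⟩ := hFc a ha a₀ h0
    obtain ⟨y, hy⟩ := hFc a' ha' a₀ h0
    have hc' : (0 : ℤ) < c := by exact_mod_cast hc
    simp only at haa
    rw [hx, hy, Int.mul_ediv_cancel_left _ hc'.ne', Int.mul_ediv_cancel_left _ hc'.ne'] at haa
    have hx0 : 0 ≤ x := by nlinarith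
    have hy0 : 0 ≤ y := by nlinarith
    have : x = y := by omega
    rw [this] at hx
    linarith
  have hle : F.card ≤ (Finset.range ((h - 1) / c + 1)).card := by
    refine Finset.card_le_card_of_injOn _ ?_ hinj
    intro a ha
    have g1 := hF a ha
    have g2 := hF a₀ h0
    have g3 := F.min'_le a ha
    simp only [Finset.coe_range, Set.mem_Iio]
    have hc' : (0 : ℤ) < c := by exact_mod_cast hc
    have h3 : (((h - 1) / c : ℕ) : ℤ) = ((h - 1 : ℕ) : ℤ) / c := by push_cast; rfl
    have h2 : 0 ≤ ((h - 1 : ℕ) : ℤ) / c := Int.ediv_nonneg (by positivity) hc'.le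
    have : (a - a₀) / c ≤ ((h - 1 : ℕ) : ℤ) / c := Int.ediv_le_ediv hc' (by omega)
    omega
  rw [Finset.card_range] at hle
  have := Nat.mul_div_le (h - 1) c
  nlinarith

/-- Pairs `(z, a)` with `a ≡ (X + p^s z) q₀ (mod p^S)`, where `z` runs through the residues
modulo `p^(S-s)` and `a` through `[0, Q)`. -/
noncomputable def pairs (p S s : ℕ) (X q₀ : ℤ) (Q : ℕ) : Finset (ℕ × ℤ) :=
  (Finset.range (p ^ (S - s)) ×ˢ Finset.Ico 0 (Q : ℤ)).filter fun x =>
    ((p ^ S : ℕ) : ℤ) ∣ x.2 - (X + (p : ℤ) ^ s * x.1) * q₀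

/-- When `p ∤ q₀`, the second entry of a pair determines the first and is determined modulo
`p^s`. -/
theorem pairs_count (p S s : ℕ) (hp : p.Prime) (hs : s ≤ S) (X q₀ : ℤ) (hq : ¬ (p : ℤ) ∣ q₀)
    (Q : ℕ) (ℓ : ℕ) (hℓ : 0 < ℓ) (hℓp : Nat.Coprime ℓ p) (F : Finset (ℕ × ℤ))
    (hF : ∀ x ∈ F, x ∈ pairs p S s X q₀ Q ∧ (ℓ : ℤ) ∣ x.2) :
    ℓ * p ^ s * F.card ≤ Q + ℓ * p ^ s := by
  have hF' : ∀ x ∈ F, x.1 < p ^ (S - s) ∧ (0 ≤ x.2 ∧ x.2 < Q) ∧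
      ((p : ℤ) ^ S) ∣ x.2 - (X + (p : ℤ) ^ s * x.1) * q₀ := by
    intro x hx
    have := (hF x hx).1
    simp only [pairs, Finset.mem_filter, Finset.mem_product, Finset.mem_range, Finset.mem_Ico] at this
    exact ⟨this.1.1, this.1.2, by exact_mod_cast this.2⟩
  have hinj : Set.InjOn Prod.snd (F : Set (ℕ × ℤ)) := by
    rintro ⟨z, a⟩ hx ⟨z', a'⟩ hx' (haa : a = a')
    subst haa
    obtain ⟨h1, -, h2⟩ := hF' _ hx
    obtain ⟨h1', -, h2'⟩ := hF' _ hx'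
    simp only at h1 h2 h1' h2'
    have h3 := dvd_sub h2' h2
    have h4 : (p : ℤ) ^ S = (p : ℤ) ^ s * (p : ℤ) ^ (S - s) := by
      rw [← pow_add]; congr 1; omega
    have h5 : a - (X + (p : ℤ) ^ s * z') * q₀ - (a - (X + (p : ℤ) ^ s * z) * q₀) =
        (p : ℤ) ^ s * (((z : ℤ) - z') * q₀) := by ring
    rw [h4, h5] at h3
    have hp0 : (p : ℤ) ^ s ≠ 0 := by
      have := hp.pos
      positivity
    have h6 := (mul_dvd_mul_iff_left hp0).mp h3
    have hcop : IsCoprime ((p : ℤ) ^ (S - s)) q₀ :=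
      IsCoprime.pow_left ((Nat.prime_iff_prime_int.mp hp).coprime_iff_not_dvd.mpr hq)
    have h7 := hcop.dvd_of_dvd_mul_right h6
    have h8 : (z : ℤ) = z' := by
      have hlt : |(z : ℤ) - z'| < (p : ℤ) ^ (S - s) := by
        have e1 : (z : ℤ) < (p : ℤ) ^ (S - s) := by exact_mod_cast h1
        have e2 : (z' : ℤ) < (p : ℤ) ^ (S - s) := by exact_mod_cast h1'
        rw [abs_lt]; constructor <;> linarith [Int.natCast_nonneg z, Int.natCast_nonneg z']
      have := Int.eq_zero_of_abs_lt_dvd h7 hlt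
      linarith
    have h9 : z = z' := by exact_mod_cast h8
    rw [h9]
  rw [← Finset.card_image_of_injOn hinj]
  refine (ap_count (ℓ * p ^ s) (Nat.mul_pos hℓ (pow_pos hp.pos _)) 0 Q _ ?_ ?_).trans
    (Nat.add_le_add_right (Nat.sub_le _ _) _)
  · intro a ha
    obtain ⟨x, hx, rfl⟩ := Finset.mem_image.mp ha
    simpa using (hF' x hx).2.1
  · intro a ha a' ha'
    obtain ⟨x, hx, rfl⟩ := Finset.mem_image.mp ha
    obtain ⟨x', hx', rfl⟩ := Finset.mem_image.mp ha'
    push_cast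
    refine IsCoprime.mul_dvd ?_ (dvd_sub (hF x hx).2 (hF x' hx').2) ?_
    · exact IsCoprime.pow_right (Nat.isCoprime_iff_coprime.mpr hℓp)
    · have h1 := (pow_dvd_pow (p : ℤ) hs).trans (hF' x hx).2.2
      have h2 := (pow_dvd_pow (p : ℤ) hs).trans (hF' x' hx').2.2
      have h3 := dvd_sub h1 h2
      have h4 : (p : ℤ) ^ s ∣ (p : ℤ) ^ s * (((x.1 : ℤ) - x'.1) * q₀) := dvd_mul_right _ _
      have h5 := dvd_add h3 h4
      convert h5 using 1
      ring

/-- Residues `z` modulo `p^(S-s)` for which `(X + p^s z) q₀` is congruent modulo `p^S` to an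
integer of absolute value below `R`. -/
noncomputable def nearZ (p S s : ℕ) (X q₀ : ℤ) (R : ℕ) : Finset ℕ :=
  open Classical in
  (Finset.range (p ^ (S - s))).filter fun z =>
    ∃ a : ℤ, |a| < R ∧ ((p ^ S : ℕ) : ℤ) ∣ a - (X + (p : ℤ) ^ s * z) * q₀

/-- Here `p ^ e` exactly divides `q₀`. If `s + e ≤ S`, the residue of `(X + p^s z) q₀` modulo `p ^ S`
takes each value for at most `p ^ e` residues `z`, and its values lie in one class modulo
`p ^ (s + e)`; otherwise the bound is trivial. -/
theorem nearZ_count (p S s : ℕ) (hp : p.Prime) (hs : s ≤ S) (X q₀ : ℤ) (R e : ℕ)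
    (he : (p : ℤ) ^ e ∣ q₀) (he' : ¬ (p : ℤ) ^ (e + 1) ∣ q₀) :
    p ^ s * (nearZ p S s X q₀ R).card ≤ 2 * R + p ^ (s + e) := by
  classical
  by_cases hse : S < s + e
  · have h1 : (nearZ p S s X q₀ R).card ≤ p ^ (S - s) := by
      have := Finset.card_filter_le (Finset.range (p ^ (S - s))) fun z =>
        ∃ a : ℤ, |a| < R ∧ ((p ^ S : ℕ) : ℤ) ∣ a - (X + (p : ℤ) ^ s * z) * q₀
      rw [Finset.card_range] at this
      exact this
    calc p ^ s * (nearZ p S s X q₀ R).card ≤ p ^ s * p ^ (S - s) := Nat.mul_le_mul_left _ h1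
      _ = p ^ S := by rw [← pow_add]; congr 1; omega
      _ ≤ p ^ (s + e) := Nat.pow_le_pow_right hp.pos hse.le
      _ ≤ _ := Nat.le_add_left _ _
  push Not at hse
  obtain ⟨q', hq'⟩ := he
  have hpq' : ¬ (p : ℤ) ∣ q' := by
    rintro ⟨c, rfl⟩
    exact he' ⟨c, by rw [hq']; ring⟩
  have hex : ∀ z ∈ nearZ p S s X q₀ R, ∃ a : ℤ, |a| < R ∧
      ((p : ℤ) ^ S) ∣ a - (X + (p : ℤ) ^ s * z) * q₀ := by
    intro z hz
    obtain ⟨a, h1, h2⟩ := (Finset.mem_filter.mp hz).2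
    exact ⟨a, h1, by exact_mod_cast h2⟩
  choose! f hf using hex
  have hrange : ∀ z ∈ nearZ p S s X q₀ R, z < p ^ (S - s) := fun z hz =>
    Finset.mem_range.mp (Finset.mem_filter.mp hz).1
  have hp0 : ∀ k : ℕ, (p : ℤ) ^ k ≠ 0 := fun k => by
    have := hp.pos
    positivity
  -- each integer `a` serves at most `p^e` residues
  have h1 : (nearZ p S s X q₀ R).card ≤ p ^ e * ((nearZ p S s X q₀ R).image f).card := by
    refine Finset.card_le_mul_card_image _ _ fun a _ => ?_
    set G := (nearZ p S s X q₀ R).filter fun z => f z = a with hG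
    have hGm : ∀ z ∈ G, z < p ^ (S - s) ∧ (p : ℤ) ^ S ∣ a - (X + (p : ℤ) ^ s * z) * q₀ := by
      intro z hz
      have := Finset.mem_filter.mp hz
      refine ⟨hrange z this.1, ?_⟩
      rw [← this.2]
      exact (hf z this.1).2
    have h2 := ap_count (p ^ (S - s - e)) (pow_pos hp.pos _) 0 (p ^ (S - s))
      (G.image fun z : ℕ => (z : ℤ)) ?_ ?_
    · rw [Finset.card_image_of_injective _ Nat.cast_injective] at h2
      by_contra! hcon
      have h3 : p ^ (S - s) = p ^ (S - s - e) * p ^ e := by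
        rw [← pow_add]; congr 1; omega
      have h4 : p ^ (S - s - e) * (p ^ e + 1) ≤ p ^ (S - s - e) * G.card :=
        Nat.mul_le_mul_left _ hcon
      have h5 : 0 < p ^ (S - s) := pow_pos hp.pos _
      rw [mul_add, ← h3, mul_one] at h4
      omega
    · intro x hx
      obtain ⟨z, hz, rfl⟩ := Finset.mem_image.mp hx
      have := (hGm z hz).1
      constructor <;> omega
    · intro x hx x' hx'
      obtain ⟨z, hz, rfl⟩ := Finset.mem_image.mp hx
      obtain ⟨z', hz', rfl⟩ := Finset.mem_image.mp hx'
      have h3 := dvd_sub (hGm z' hz').2 (hGm z hz).2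
      have h4 : (p : ℤ) ^ S = (p : ℤ) ^ (s + e) * (p : ℤ) ^ (S - s - e) := by
        rw [← pow_add]; congr 1; omega
      have h5 : a - (X + (p : ℤ) ^ s * z') * q₀ - (a - (X + (p : ℤ) ^ s * z) * q₀) =
          (p : ℤ) ^ (s + e) * (((z : ℤ) - z') * q') := by rw [hq', pow_add]; ring
      rw [h4, h5] at h3
      have h6 := (mul_dvd_mul_iff_left (hp0 _)).mp h3
      have hcop : IsCoprime ((p : ℤ) ^ (S - s - e)) q' :=
        IsCoprime.pow_left ((Nat.prime_iff_prime_int.mp hp).coprime_iff_not_dvd.mpr hpq')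
      exact_mod_cast hcop.dvd_of_dvd_mul_right h6
  rcases Nat.eq_zero_or_pos R with hR | hR
  · have : nearZ p S s X q₀ R = ∅ := by
      rw [Finset.eq_empty_iff_forall_notMem]
      intro z hz
      have := (hf z hz).1
      rw [hR] at this
      have h2 := abs_nonneg (f z)
      push_cast at this
      omega
    rw [this]; simp
  have h2 := ap_count (p ^ (s + e)) (pow_pos hp.pos _) (-(R : ℤ)) (2 * R)
    ((nearZ p S s X q₀ R).image f) ?_ ?_
  · calc p ^ s * (nearZ p S s X q₀ R).card
        ≤ p ^ s * (p ^ e * ((nearZ p S s X q₀ R).image f).card) := Nat.mul_le_mul_left _ h1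
      _ = p ^ (s + e) * ((nearZ p S s X q₀ R).image f).card := by rw [pow_add]; ring
      _ ≤ _ := h2.trans (Nat.add_le_add_right (Nat.sub_le _ _) _)
  · intro a ha
    obtain ⟨z, hz, rfl⟩ := Finset.mem_image.mp ha
    have := abs_lt.mp (hf z hz).1
    push_cast
    constructor <;> linarith
  · have key : ∀ z ∈ nearZ p S s X q₀ R, (p : ℤ) ^ (s + e) ∣ f z - X * q₀ := by
      intro z hz
      have h3 := (pow_dvd_pow (p : ℤ) hse).trans (hf z hz).2
      have h4 : (p : ℤ) ^ (s + e) ∣ (p : ℤ) ^ (s + e) * (z * q') := dvd_mul_right _ _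
      have h5 := dvd_add h3 h4
      have h6 : f z - (X + (p : ℤ) ^ s * z) * q₀ + (p : ℤ) ^ (s + e) * (z * q') = f z - X * q₀ := by
        rw [hq', pow_add]; ring
      rwa [h6] at h5
    intro a ha a' ha'
    obtain ⟨z, hz, rfl⟩ := Finset.mem_image.mp ha
    obtain ⟨z', hz', rfl⟩ := Finset.mem_image.mp ha'
    have := dvd_sub (key z hz) (key z' hz')
    push_cast
    simpa using this

/-! ### Counting approximations to `A` -/

/-- The box `q₀ ∈ [Q, 2Q)`, all other coordinates in `[0, Q)`. -/
noncomputable def qbox (κ : Type*) [Fintype κ] [DecidableEq κ] (Q : ℕ) : Finset (Option κ → ℤ) :=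
  zbox (fun o => o.elim (Q : ℤ) fun _ => 0) fun _ => Q

/-- The finite data of the counting argument. The integers `A j`, known modulo `p ^ t j`,
approximate `α`; the ball is `X + p^s ℤ_p^d`, and its points are recorded modulo `p ^ S i`. The
denominators are of size `Q`; `R0` bounds from below the shortest vector of the lattice of
approximations to `A`, and `R1` is the corresponding threshold for the points of the ball. Primes up
to `Y` are sieved out by the congruence `q₀ ≡ 1` modulo `Y!`, and `L` (a small power of `Q`)
separates the medium primes from the large ones. -/
structure Core (p d m : ℕ) where
  A : Fin m → ℤ
  t : Fin m → ℕ
  X : Fin d → ℤ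
  S : Fin d → ℕ
  (s Q R0 R1 ρ ρ1 L C Y e : ℕ)
  hp : p.Prime
  hsS : ∀ i, s ≤ S i
  hR0 : 1 ≤ R0
  hmin : ∀ u, InLat A (fun j => p ^ t j) u → (∀ i, |u i| < (R0 : ℤ)) → u = 0
  hρ : 2 * R0 * ((L ^ 4 * ∏ j, p ^ t j) / R0 ^ (m + 1) + 1) ≤ ρ
  hρQ : L ^ 2 * ρ ≤ Q
  hρR : ρ ≤ R1
  hC : 8 * Q ^ 2 < L ^ C
  hL3 : 3 ≤ L
  hWL : Y.factorial ≤ L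
  hLY : Y * Y.factorial * (2 * C + 1) ≤ L
  hpY : p ≤ Y
  hYN : 8 * (d + m + 1) * 16 ^ (d + m + 1) ≤ Y
  hTE : p ^ (s * d) ≤ p ^ e
  hEL : p ^ e ≤ L
  hLT : L * p ^ s ≤ R1
  hR1Q : R1 ≤ Q
  hRS : ∀ i, R1 ≤ p ^ S i
  hRt : ∀ j, R1 ≤ p ^ t j
  h5 : 8 * 15 ^ (d + m + 1) * R1 ^ (d + m + 1) ≤ (∏ i, p ^ S i) * ∏ j, p ^ t j
  hρ1 : 2 * R1 * ((Y.factorial * ((∏ i, p ^ S i) * ∏ j, p ^ t j)) / R1 ^ (d + m + 1) + 1) ≤ ρ1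
  hρ1Q : 4 * ρ1 ≤ Q

namespace Core
variable {p d m : ℕ} (c : Core p d m)

/-- The index of the lattice of approximations to `A`. -/
def D : ℕ := ∏ j, p ^ c.t j

theorem D_pos : 0 < c.D := Finset.prod_pos fun _ _ => pow_pos c.hp.pos _

theorem ρ_pos : 1 ≤ c.ρ :=
  le_trans (Nat.mul_pos (Nat.mul_pos two_pos c.hR0) (Nat.succ_pos _)) c.hρ

/-- The upper bound `lat_upper` for the lattice of approximations to `A` and for its refinements by
congruences that multiply the index by at most `L ^ 4`; `hρ` leaves room for that factor. -/
theorem upper (w : ℕ) (hw : 0 < w) (n' : Fin m → ℕ) (hn' : ∀ j, 0 < n' j)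
    (hn : ∀ j, p ^ c.t j ∣ n' j) (hw' : w * ∏ j, n' j ≤ c.L ^ 4 * c.D)
    (a : Option (Fin m) → ℤ) (h : ℕ) (r : ℤ) (F : Finset (Option (Fin m) → ℤ))
    (hF : ∀ u ∈ F, u ∈ zbox a (fun _ => h) ∧ (w : ℤ) ∣ u none - r ∧ InLat c.A n' u) :
    (w * ∏ j, n' j) * F.card ≤ (h + 2 * c.ρ) ^ (m + 1) := by
  have := lat_upper c.A (fun j => p ^ c.t j) c.R0 c.hR0 c.hmin w hw c.A n' hn' hn (by simp) c.ρ
    (by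
      refine le_trans ?_ c.hρ
      rw [Fintype.card_fin]
      exact Nat.mul_le_mul_left _ (Nat.add_le_add_right (Nat.div_le_div_right hw') _))
    a (fun _ => h) r F hF
  simpa using this

/-- Admissible approximations to `A`. -/
noncomputable def base : Finset (Option (Fin m) → ℤ) :=
  open Classical in (qbox (Fin m) c.Q).filter fun u =>
    ((c.Y.factorial : ℕ) : ℤ) ∣ u none - 1 ∧ InLat c.A (fun j => p ^ c.t j) u

theorem mem_base {u : Option (Fin m) → ℤ} : u ∈ c.base ↔ u ∈ qbox (Fin m) c.Q ∧
    ((c.Y.factorial : ℕ) : ℤ) ∣ u none - 1 ∧ InLat c.A (fun j => p ^ c.t j) u := by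
  simp [base]

theorem ρQ : c.ρ ≤ c.Q :=
  le_trans (Nat.le_mul_of_pos_left _ (pow_pos (by have := c.hL3; omega) _)) c.hρQ

theorem coprime_fact {ℓ : ℕ} (hℓ : ℓ.Prime) (h : c.Y < ℓ) : Nat.Coprime c.Y.factorial ℓ := by
  rw [Nat.coprime_comm, hℓ.coprime_iff_not_dvd, hℓ.dvd_factorial]
  omega

theorem Q_le {x : ℕ} (hx : x ≤ (c.Q + 2 * c.ρ) ^ (m + 1)) : x ≤ (4 * c.Q) ^ (m + 1) :=
  hx.trans (Nat.pow_le_pow_left (by have := c.ρQ; omega) _)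

theorem base_card : c.Y.factorial * c.D * c.base.card ≤ (4 * c.Q) ^ (m + 1) := by
  refine c.Q_le (c.upper _ (Nat.factorial_pos _) (fun j => p ^ c.t j)
    (fun j => pow_pos c.hp.pos _) (fun _ => dvd_rfl) ?_ (fun o => o.elim (c.Q : ℤ) fun _ => 0) c.Q 1 c.base ?_)
  · refine Nat.mul_le_mul_right _ (c.hWL.trans ?_)
    exact Nat.le_self_pow (by norm_num) _
  · intro u hu
    exact c.mem_base.mp hu

/-- Divisibility of `q₀` by a medium prime `ℓ` saves a factor `ℓ`. -/
theorem base_card_dvd {ℓ : ℕ} (hℓ : ℓ.Prime) (hY : c.Y < ℓ) (hL : ℓ ≤ c.L)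
    (F : Finset (Option (Fin m) → ℤ)) (hF : ∀ u ∈ F, u ∈ c.base ∧ (ℓ : ℤ) ∣ u none) :
    c.Y.factorial * ℓ * c.D * F.card ≤ (4 * c.Q) ^ (m + 1) := by
  rcases F.eq_empty_or_nonempty with rfl | ⟨u₀, hu₀⟩
  · simp
  refine c.Q_le (c.upper _ (Nat.mul_pos (Nat.factorial_pos _) hℓ.pos) (fun j => p ^ c.t j)
    (fun j => pow_pos c.hp.pos _) (fun _ => dvd_rfl) ?_ (fun o => o.elim (c.Q : ℤ) fun _ => 0) c.Q (u₀ none) F ?_)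
  · refine Nat.mul_le_mul_right _ ((Nat.mul_le_mul c.hWL hL).trans ?_)
    rw [← sq]
    exact Nat.pow_le_pow_right (by have := c.hL3; omega) (by norm_num)
  · intro u hu
    obtain ⟨h1, h2⟩ := hF u hu
    obtain ⟨h1', h2'⟩ := hF u₀ hu₀
    have h1 := c.mem_base.mp h1
    have h1' := c.mem_base.mp h1'
    refine ⟨h1.1, ?_, h1.2.2⟩
    push_cast
    refine IsCoprime.mul_dvd (Nat.isCoprime_iff_coprime.mpr (c.coprime_fact hℓ hY)) ?_
      (dvd_sub h2 h2')
    have := dvd_sub h1.2.1 h1'.2.1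
    simpa using this

/-- Divisibility of both `q₀` and `b j` by a medium prime `ℓ` saves a factor `ℓ ^ 2`: as both
sides are divisible by `ℓ`, the congruence `b j ≡ A j q₀` then holds modulo `ℓ p ^ t j`. -/
theorem base_card_dvd₂ {ℓ : ℕ} (hℓ : ℓ.Prime) (hY : c.Y < ℓ) (hL : ℓ ≤ c.L) (j : Fin m)
    (F : Finset (Option (Fin m) → ℤ))
    (hF : ∀ u ∈ F, u ∈ c.base ∧ (ℓ : ℤ) ∣ u none ∧ (ℓ : ℤ) ∣ u (some j)) :
    c.Y.factorial * ℓ ^ 2 * c.D * F.card ≤ (4 * c.Q) ^ (m + 1) := by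
  rcases F.eq_empty_or_nonempty with rfl | ⟨u₀, hu₀⟩
  · simp
  have hprod : ∏ i, Function.update (fun j => p ^ c.t j) j (ℓ * p ^ c.t j) i = ℓ * c.D := by
    rw [Finset.prod_update_of_mem (Finset.mem_univ j), D,
      ← Finset.mul_prod_erase _ _ (Finset.mem_univ j), mul_assoc, Finset.sdiff_singleton_eq_erase]
  have := c.upper (c.Y.factorial * ℓ) (Nat.mul_pos (Nat.factorial_pos _) hℓ.pos)
    (Function.update (fun j => p ^ c.t j) j (ℓ * p ^ c.t j)) ?_ ?_ ?_ (fun o => o.elim (c.Q : ℤ) fun _ => 0) c.Q (u₀ none) F ?_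
  · rw [hprod] at this
    refine c.Q_le (le_trans (le_of_eq ?_) this)
    ring
  · intro i
    by_cases hij : i = j
    · subst hij; simp [hℓ.pos, c.hp.pos]
    · simp [hij, c.hp.pos]
  · intro i
    by_cases hij : i = j
    · subst hij; simp
    · simp [hij]
  · rw [hprod, ← mul_assoc]
    refine Nat.mul_le_mul_right _ ?_
    calc c.Y.factorial * ℓ * ℓ ≤ c.L * c.L * c.L := by
          have := c.hWL; gcongr
      _ = c.L ^ 3 := by ring
      _ ≤ _ := Nat.pow_le_pow_right (by have := c.hL3; omega) (by norm_num)
  · intro u hu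
    obtain ⟨h1, h2, h3⟩ := hF u hu
    obtain ⟨h1', h2', h3'⟩ := hF u₀ hu₀
    have h1 := c.mem_base.mp h1
    have h1' := c.mem_base.mp h1'
    refine ⟨h1.1, ?_, ?_⟩
    · push_cast
      refine IsCoprime.mul_dvd (Nat.isCoprime_iff_coprime.mpr (c.coprime_fact hℓ hY)) ?_
        (dvd_sub h2 h2')
      have := dvd_sub h1.2.1 h1'.2.1
      simpa using this
    · intro i
      by_cases hij : i = j
      · subst hij
        rw [Function.update_self]
        push_cast
        refine IsCoprime.mul_dvd ?_ (dvd_sub h3 (h2.mul_left _)) ?_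
        · refine IsCoprime.pow_right (Nat.isCoprime_iff_coprime.mpr ?_)
          rw [Nat.coprime_primes hℓ c.hp]
          have := c.hpY; omega
        · have := h1.2.2 i; exact_mod_cast this
      · rw [Function.update_of_ne hij]; exact h1.2.2 i

/-- A common prime factor of `q₀` and `b j` above `L` saves `L` up to a factor `O(C)`; see
`common_large`. -/
theorem base_card_large (j : Fin m)
    (F : Finset (Option (Fin m) → ℤ))
    (hF : ∀ u ∈ F, u ∈ c.base ∧
      ∃ ℓ : ℕ, ℓ.Prime ∧ c.L < ℓ ∧ (ℓ : ℤ) ∣ u none ∧ (ℓ : ℤ) ∣ u (some j)) :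
    c.L * c.D * F.card ≤ (2 * c.C + 1) * (8 * c.Q) ^ (m + 1) := by
  have hL := c.hL3
  have := common_large c.A (fun j => p ^ c.t j) (fun j => pow_pos c.hp.pos _) c.R0 c.hR0 c.hmin c.ρ
    (by
      refine le_trans ?_ c.hρ
      rw [Fintype.card_fin]
      refine Nat.mul_le_mul_left _ (Nat.add_le_add_right (Nat.div_le_div_right ?_) _)
      exact Nat.le_mul_of_pos_left _ (pow_pos (by omega) _))
    c.L c.Q c.C (by omega) (by
      refine le_trans ?_ c.hρQ
      have := c.ρ_pos
      rw [sq, mul_assoc]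
      refine Nat.mul_le_mul_left _ ?_
      nlinarith) c.hC j F (by
      intro u hu
      obtain ⟨h1, h2⟩ := hF u hu
      have h1 := c.mem_base.mp h1
      refine ⟨mem_zbox.mpr fun i => ?_, h1.2.2, h2⟩
      have := mem_zbox.mp h1.1 i
      cases i with
      | none => simp only [Option.elim] at this; push_cast; constructor <;> linarith
      | some i => simp only [Option.elim] at this; push_cast; constructor <;> linarith)
  simpa [D] using this

theorem Q_pos : 0 < c.Q := by
  have h1 := c.hLT
  have h2 := c.hR1Q
  have h3 : 0 < c.L * p ^ c.s := Nat.mul_pos (by have := c.hL3; omega) (pow_pos c.hp.pos _)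
  omega

end Core

/-! ### Approximations to the points of a ball -/

namespace Core
variable {p d m : ℕ} (c : Core p d m)

/-- The residues parametrizing the ball: `z` stands for the points `≡ X + p^s z` modulo the
`p ^ S i`. -/
noncomputable def Z : Finset (Fin d → ℕ) :=
  Fintype.piFinset fun i => Finset.range (p ^ (c.S i - c.s))

theorem mem_Z {z : Fin d → ℕ} : z ∈ c.Z ↔ ∀ i, z i < p ^ (c.S i - c.s) := by
  simp [Z]

/-- The total modulus in the directions of the ball. -/
def P : ℕ := ∏ i, p ^ c.S i

theorem card_Z : p ^ (c.s * d) * c.Z.card = c.P := by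
  rw [Z, Fintype.card_piFinset, P]
  have : p ^ (c.s * d) = ∏ _i : Fin d, p ^ c.s := by
    rw [Finset.prod_const, Finset.card_univ, Fintype.card_fin, pow_mul]
  rw [this, ← Finset.prod_mul_distrib]
  refine Finset.prod_congr rfl fun i _ => ?_
  rw [Finset.card_range, ← pow_add]
  congr 1
  have := c.hsS i
  omega

/-- The lattice of approximations to the point of the ball with residue `z`, together with `A`. -/
def latA (z : Fin d → ℕ) : Fin d ⊕ Fin m → ℤ :=
  Sum.elim (fun i => c.X i + (p : ℤ) ^ c.s * z i) c.A

/-- The moduli of the lattice of approximations to a point of the ball together with `A`. -/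
def latN : Fin d ⊕ Fin m → ℕ :=
  Sum.elim (fun i => p ^ c.S i) (fun j => p ^ c.t j)

theorem latN_prod : ∏ x, c.latN x = c.P * c.D := by
  rw [Fintype.prod_sum_type]; rfl

/-- Forgetting the coordinates in the directions of the ball. -/
def proj (u : Option (Fin d ⊕ Fin m) → ℤ) : Option (Fin m) → ℤ :=
  fun o => o.elim (u none) fun j => u (some (Sum.inr j))

/-- Admissible approximations to the point with residue `z` together with `A`. -/
noncomputable def full (z : Fin d → ℕ) : Finset (Option (Fin d ⊕ Fin m) → ℤ) :=
  open Classical in (qbox (Fin d ⊕ Fin m) c.Q).filter fun u =>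
    ((c.Y.factorial : ℕ) : ℤ) ∣ u none - 1 ∧ InLat (c.latA z) c.latN u

theorem mem_full {z : Fin d → ℕ} {u : Option (Fin d ⊕ Fin m) → ℤ} :
    u ∈ c.full z ↔ u ∈ qbox (Fin d ⊕ Fin m) c.Q ∧
      ((c.Y.factorial : ℕ) : ℤ) ∣ u none - 1 ∧ InLat (c.latA z) c.latN u := by
  simp [full]

theorem proj_mem {z : Fin d → ℕ} {u : Option (Fin d ⊕ Fin m) → ℤ} (hu : u ∈ c.full z) :
    proj u ∈ c.base := by
  obtain ⟨h1, h2, h3⟩ := c.mem_full.mp hu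
  have h1 := mem_zbox.mp h1
  refine c.mem_base.mpr ⟨mem_zbox.mpr fun i => ?_, h2, fun j => h3 (Sum.inr j)⟩
  cases i with
  | none => exact h1 none
  | some j => exact h1 (some (Sum.inr j))

theorem pair_mem {z : Fin d → ℕ} (hz : z ∈ c.Z) {u : Option (Fin d ⊕ Fin m) → ℤ}
    (hu : u ∈ c.full z) (i : Fin d) :
    (z i, u (some (Sum.inl i))) ∈ pairs p (c.S i) c.s (c.X i) (proj u none) c.Q := by
  obtain ⟨h1, h2, h3⟩ := c.mem_full.mp hu
  have h1 := mem_zbox.mp h1 (some (Sum.inl i))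
  simp only [Option.elim, zero_add] at h1
  rw [pairs, Finset.mem_filter, Finset.mem_product, Finset.mem_range, Finset.mem_Ico]
  exact ⟨⟨c.mem_Z.mp hz i, h1⟩, h3 (Sum.inl i)⟩

/-- An approximation to the point `z` is determined, together with `z`, by its projection and the pairs
`(z i, a i)`, which can be counted separately for each `i`. -/
theorem fibre_pairs (B : Finset ((Fin d → ℕ) × (Option (Fin d ⊕ Fin m) → ℤ)))
    (K : Finset (Option (Fin m) → ℤ)) (f : (Option (Fin m) → ℤ) → Fin d → Finset (ℕ × ℤ))
    (hB : ∀ x ∈ B, proj x.2 ∈ K ∧ ∀ i, (x.1 i, x.2 (some (Sum.inl i))) ∈ f (proj x.2) i) :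
    B.card ≤ ∑ u ∈ K, ∏ i, (f u i).card := by
  have h1 : (K.sigma fun u => Fintype.piFinset (f u)).card = ∑ u ∈ K, ∏ i, (f u i).card := by
    rw [Finset.card_sigma]
    exact Finset.sum_congr rfl fun u _ => Fintype.card_piFinset _
  rw [← h1]
  refine Finset.card_le_card_of_injOn
    (fun x => ⟨proj x.2, fun i => (x.1 i, x.2 (some (Sum.inl i)))⟩) ?_ ?_
  · intro x hx
    have := hB x hx
    simp only [Finset.coe_sigma, Set.mem_sigma_iff, Finset.mem_coe, Fintype.mem_piFinset]
    exact this
  · rintro ⟨z, u⟩ - ⟨z', u'⟩ - h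
    simp only [Sigma.mk.injEq, heq_eq_eq] at h
    obtain ⟨h1, h2⟩ := h
    have hz : z = z' := by
      ext i; exact congrArg Prod.fst (congrFun h2 i)
    have hu : u = u' := by
      ext o
      match o with
      | none => exact congrFun h1 none
      | some (Sum.inr j) => exact congrFun h1 (some j)
      | some (Sum.inl i) => exact congrArg Prod.snd (congrFun h2 i)
    rw [hz, hu]

theorem base_p {u : Option (Fin m) → ℤ} (hu : u ∈ c.base) : ¬ (p : ℤ) ∣ u none := by
  intro h
  have h1 := (c.mem_base.mp hu).2.1
  have h2 : (p : ℤ) ∣ ((c.Y.factorial : ℕ) : ℤ) :=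
    Int.natCast_dvd_natCast.mpr ((c.hp.dvd_factorial).mpr c.hpY)
  have h3 := dvd_sub h (h2.trans h1)
  rw [sub_sub_cancel] at h3
  exact (Nat.prime_iff_prime_int.mp c.hp).not_isUnit (isUnit_of_dvd_one h3)

theorem base_prime {u : Option (Fin m) → ℤ} (hu : u ∈ c.base) {ℓ : ℕ} (hℓ : ℓ.Prime)
    (hd : (ℓ : ℤ) ∣ u none) : c.Y < ℓ := by
  by_contra! hcon
  have h1 := (c.mem_base.mp hu).2.1
  have h2 : (ℓ : ℤ) ∣ ((c.Y.factorial : ℕ) : ℤ) :=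
    Int.natCast_dvd_natCast.mpr ((hℓ.dvd_factorial).mpr hcon)
  have h3 := dvd_sub hd (h2.trans h1)
  rw [sub_sub_cancel] at h3
  exact (Nat.prime_iff_prime_int.mp hℓ).not_isUnit (isUnit_of_dvd_one h3)

theorem LTQ : c.L * p ^ c.s ≤ c.Q := c.hLT.trans c.hR1Q

theorem TQ : p ^ c.s ≤ c.Q :=
  le_trans (Nat.le_mul_of_pos_left _ (by have := c.hL3; omega)) c.LTQ

theorem pairs_card {u : Option (Fin m) → ℤ} (hu : u ∈ c.base) (i : Fin d) :
    p ^ c.s * (pairs p (c.S i) c.s (c.X i) (u none) c.Q).card ≤ 2 * c.Q := by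
  have := pairs_count p (c.S i) c.s c.hp (c.hsS i) (c.X i) (u none) (c.base_p hu) c.Q 1 one_pos
    (by simp) _ (fun x hx => ⟨hx, by simp⟩)
  have h2 := c.TQ
  rw [one_mul] at this
  omega

/-- The medium primes, those in `(Y, L]`. -/
noncomputable def primes : Finset ℕ := (Finset.Ioc c.Y c.L).filter Nat.Prime

theorem mem_primes {ℓ : ℕ} : ℓ ∈ c.primes ↔ (c.Y < ℓ ∧ ℓ ≤ c.L) ∧ ℓ.Prime := by
  simp [primes]

theorem Y_pos : 1 ≤ c.Y := le_trans (by have := c.hp.pos; omega) c.hpY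

theorem primes_sum : ∑ ℓ ∈ c.primes, ((ℓ : ℝ) ^ 2)⁻¹ ≤ (c.Y : ℝ)⁻¹ := by
  rcases le_or_gt c.Y c.L with h | h
  · have h1 := sum_Ioc_inv_sq_le_sub (α := ℝ) (k := c.Y) (n := c.L) (by have := c.Y_pos; omega) h
    have h2 : ∑ ℓ ∈ c.primes, ((ℓ : ℝ) ^ 2)⁻¹ ≤ ∑ ℓ ∈ Finset.Ioc c.Y c.L, ((ℓ : ℝ) ^ 2)⁻¹ :=
      Finset.sum_le_sum_of_subset_of_nonneg (Finset.filter_subset _ _)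
        (fun _ _ _ => by positivity)
    have h3 : (0 : ℝ) ≤ (c.L : ℝ)⁻¹ := by positivity
    linarith
  · have : c.primes = ∅ := by
      rw [primes, Finset.Ioc_eq_empty_of_le h.le, Finset.filter_empty]
    rw [this]; simp

/-- Pairs `(z, a)` such that `a` has a prime factor in common with `q₀`. -/
noncomputable def pairsBad (q₀ : ℤ) (i : Fin d) : Finset (ℕ × ℤ) :=
  open Classical in (pairs p (c.S i) c.s (c.X i) q₀ c.Q).filter fun x =>
    ∃ ℓ : ℕ, ℓ.Prime ∧ (ℓ : ℤ) ∣ q₀ ∧ (ℓ : ℤ) ∣ x.2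

/-- A medium prime `ℓ` dividing `q₀` divides `a` for a proportion `1 / ℓ` of the pairs. At most `C`
primes above `L` divide `q₀`, and each accounts for a proportion at most `1 / L`. -/
theorem pairsBad_card {u : Option (Fin m) → ℤ} (hu : u ∈ c.base) (i : Fin d) :
    (p : ℝ) ^ c.s * (c.pairsBad (u none) i).card ≤
      ∑ ℓ ∈ c.primes.filter (fun ℓ : ℕ => (ℓ : ℤ) ∣ u none), 2 * c.Q * (ℓ : ℝ)⁻¹ +
        c.C * (2 * c.Q * (c.L : ℝ)⁻¹) := by
  classical
  have hu0 : u none ≠ 0 ∧ |u none| < 2 * c.Q := by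
    have := mem_zbox.mp (c.mem_base.mp hu).1 none
    simp only [Option.elim] at this
    have hQ := c.Q_pos
    rw [abs_of_nonneg (by omega)]
    omega
  have hLpos : (0 : ℝ) < c.L := by have := c.hL3; exact_mod_cast (by omega : 0 < c.L)
  have hLTQ : (c.L : ℝ) * (p : ℝ) ^ c.s ≤ c.Q := by exact_mod_cast c.LTQ
  set G : ℕ → Finset (ℕ × ℤ) := fun ℓ => (pairs p (c.S i) c.s (c.X i) (u none) c.Q).filter
    fun x => (ℓ : ℤ) ∣ x.2 with hG
  have hGcard : ∀ ℓ : ℕ, ℓ.Prime → (ℓ : ℤ) ∣ u none →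
      (ℓ : ℝ) * (p : ℝ) ^ c.s * (G ℓ).card ≤ c.Q + ℓ * (p : ℝ) ^ c.s := by
    intro ℓ hℓ hd
    have := pairs_count p (c.S i) c.s c.hp (c.hsS i) (c.X i) (u none) (c.base_p hu) c.Q ℓ hℓ.pos
      ((Nat.coprime_primes hℓ c.hp).mpr (by
        rintro rfl; exact c.base_p hu hd)) (G ℓ) (fun x hx => Finset.mem_filter.mp hx)
    exact_mod_cast this
  obtain ⟨S, hS⟩ : ∃ S : Finset ℕ, ∀ ℓ, ℓ ∈ S ↔ (ℓ.Prime ∧ c.L < ℓ ∧ (ℓ : ℤ) ∣ u none) := by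
    refine ⟨(Nat.divisors (u none).natAbs).filter fun ℓ => ℓ.Prime ∧ c.L < ℓ, fun ℓ => ?_⟩
    rw [Finset.mem_filter, Nat.mem_divisors, Int.natCast_dvd]
    constructor
    · rintro ⟨⟨h1, -⟩, h2, h3⟩; exact ⟨h2, h3, h1⟩
    · rintro ⟨h1, h2, h3⟩; exact ⟨⟨h3, by simpa using hu0.1⟩, h1, h2⟩
  have hScard : S.card < c.C := by
    refine prime_count (u none) hu0.1 c.L c.C (by have := c.hL3; omega) ?_ S
      (fun ℓ hℓ => (hS ℓ).mp hℓ)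
    have h3 : (8 * (c.Q : ℤ) ^ 2) < c.L ^ c.C := by exact_mod_cast c.hC
    have hQ : (0 : ℤ) < c.Q := by exact_mod_cast c.Q_pos
    nlinarith [hu0.2]
  have hcover : c.pairsBad (u none) i ⊆
      ((c.primes.filter (fun ℓ : ℕ => (ℓ : ℤ) ∣ u none)).biUnion G) ∪ S.biUnion G := by
    intro x hx
    obtain ⟨hx1, ℓ, hℓ, hd, hdx⟩ := Finset.mem_filter.mp hx
    have hxG : x ∈ G ℓ := Finset.mem_filter.mpr ⟨hx1, hdx⟩
    rw [Finset.mem_union, Finset.mem_biUnion, Finset.mem_biUnion]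
    rcases le_or_gt ℓ c.L with h | h
    · exact Or.inl ⟨ℓ, Finset.mem_filter.mpr
        ⟨c.mem_primes.mpr ⟨⟨c.base_prime hu hℓ hd, h⟩, hℓ⟩, hd⟩, hxG⟩
    · exact Or.inr ⟨ℓ, (hS ℓ).mpr ⟨hℓ, h, hd⟩, hxG⟩
  have hc := (Finset.card_le_card hcover).trans ((Finset.card_union_le _ _).trans
    (Nat.add_le_add Finset.card_biUnion_le Finset.card_biUnion_le))
  have hc' : ((c.pairsBad (u none) i).card : ℝ) ≤
      ∑ ℓ ∈ c.primes.filter (fun ℓ : ℕ => (ℓ : ℤ) ∣ u none), ((G ℓ).card : ℝ) +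
        ∑ ℓ ∈ S, ((G ℓ).card : ℝ) := by exact_mod_cast hc
  have hT : (0 : ℝ) < (p : ℝ) ^ c.s := by have := c.hp.pos; positivity
  refine (mul_le_mul_of_nonneg_left hc' hT.le).trans ?_
  rw [mul_add, Finset.mul_sum, Finset.mul_sum]
  refine add_le_add (Finset.sum_le_sum fun ℓ hℓ => ?_) ?_
  · obtain ⟨hℓ, hd⟩ := Finset.mem_filter.mp hℓ
    obtain ⟨⟨-, hL⟩, hℓp⟩ := c.mem_primes.mp hℓ
    have h1 := hGcard ℓ hℓp hd
    have hℓ0 : (0 : ℝ) < ℓ := by exact_mod_cast hℓp.pos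
    have h2 : (ℓ : ℝ) * (p : ℝ) ^ c.s ≤ c.Q := by
      refine le_trans ?_ hLTQ
      have : (ℓ : ℝ) ≤ c.L := by exact_mod_cast hL
      gcongr
    rw [← div_eq_mul_inv, le_div_iff₀ hℓ0]
    nlinarith
  · have h1 : ∀ ℓ ∈ S, (p : ℝ) ^ c.s * ((G ℓ).card : ℝ) ≤ 2 * c.Q * (c.L : ℝ)⁻¹ := by
      intro ℓ hℓ
      obtain ⟨hℓp, hL, hd⟩ := (hS ℓ).mp hℓ
      have h1 := hGcard ℓ hℓp hd
      have h2 : (c.L : ℝ) ≤ ℓ := by exact_mod_cast hL.le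
      have hQ : (0 : ℝ) ≤ c.Q := by positivity
      rw [← div_eq_mul_inv, le_div_iff₀ hLpos]
      rcases Nat.eq_zero_or_pos (G ℓ).card with h0 | h0
      · rw [h0]; simp; 
      have h3 : (1 : ℝ) ≤ (G ℓ).card := by exact_mod_cast h0
      have h4 : (c.L : ℝ) * ((p : ℝ) ^ c.s * ((G ℓ).card - 1)) ≤
          ℓ * ((p : ℝ) ^ c.s * ((G ℓ).card - 1)) :=
        mul_le_mul_of_nonneg_right h2 (mul_nonneg hT.le (by linarith))
      nlinarith
    refine (Finset.sum_le_card_nsmul _ _ _ h1).trans ?_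
    rw [nsmul_eq_mul]
    have : (S.card : ℝ) ≤ c.C := by exact_mod_cast hScard.le
    gcongr

/-- Approximations in which `q₀` and the coordinate `i` in a direction of the ball have a common
factor. -/
noncomputable def badA (i : Fin d) : Finset ((Fin d → ℕ) × (Option (Fin d ⊕ Fin m) → ℤ)) :=
  open Classical in (c.Z ×ˢ qbox (Fin d ⊕ Fin m) c.Q).filter fun x => x.2 ∈ c.full x.1 ∧
    ∃ ℓ : ℕ, ℓ.Prime ∧ (ℓ : ℤ) ∣ x.2 none ∧ (ℓ : ℤ) ∣ x.2 (some (Sum.inl i))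

/-- Approximations in which `q₀` and the coordinate `j` in a direction of `A` have a common
factor. -/
noncomputable def badQ (j : Fin m) : Finset ((Fin d → ℕ) × (Option (Fin d ⊕ Fin m) → ℤ)) :=
  open Classical in (c.Z ×ˢ qbox (Fin d ⊕ Fin m) c.Q).filter fun x => x.2 ∈ c.full x.1 ∧
    ∃ ℓ : ℕ, ℓ.Prime ∧ (ℓ : ℤ) ∣ x.2 none ∧ (ℓ : ℤ) ∣ x.2 (some (Sum.inr j))

end Core

/-! ### Counting unreduced approximations -/

namespace Core
variable {p d m : ℕ} (c : Core p d m)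

theorem CL : (c.C : ℝ) * (c.L : ℝ)⁻¹ ≤ (c.Y : ℝ)⁻¹ := by
  have hY : (0 : ℝ) < c.Y := by exact_mod_cast c.Y_pos
  have hL : (0 : ℝ) < c.L := by have := c.hL3; exact_mod_cast (by omega : 0 < c.L)
  rw [← div_eq_mul_inv, ← one_div, div_le_div_iff₀ hL hY, one_mul]
  have h1 : c.C * c.Y ≤ c.L := by
    refine le_trans ?_ c.hLY
    have := Nat.factorial_pos c.Y
    calc c.C * c.Y ≤ (2 * c.C + 1) * c.Y := by gcongr; omega
      _ = c.Y * 1 * (2 * c.C + 1) := by ring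
      _ ≤ _ := by gcongr; omega
  exact_mod_cast h1

theorem prod_pow_mul {g : Fin d → ℝ} {T : ℝ} : T ^ d * ∏ i, g i = ∏ i, T * g i := by
  rw [Finset.prod_mul_distrib, Finset.prod_const, Finset.card_univ, Fintype.card_fin]

theorem pairs_card' {u : Option (Fin m) → ℤ} (hu : u ∈ c.base) (i : Fin d) :
    (p : ℝ) ^ c.s * ((pairs p (c.S i) c.s (c.X i) (u none) c.Q).card : ℝ) ≤ 2 * c.Q := by
  exact_mod_cast c.pairs_card hu i

theorem final_le : (2 * c.Q : ℝ) ^ d * (4 * c.Q) ^ (m + 1) ≤ (8 * c.Q : ℝ) ^ (d + m + 1) ∧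
    (2 * c.Q : ℝ) ^ d * (8 * c.Q) ^ (m + 1) ≤ (8 * c.Q : ℝ) ^ (d + m + 1) := by
  have hQ : (0 : ℝ) ≤ c.Q := by positivity
  have h1 : (2 * c.Q : ℝ) ^ d ≤ (8 * c.Q) ^ d := by gcongr; norm_num
  have h2 : (4 * c.Q : ℝ) ^ (m + 1) ≤ (8 * c.Q) ^ (m + 1) := by gcongr; norm_num
  have h3 : (8 * c.Q : ℝ) ^ (d + m + 1) = (8 * c.Q) ^ d * (8 * c.Q) ^ (m + 1) := by
    rw [add_assoc, pow_add]
  rw [h3]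
  exact ⟨mul_le_mul h1 h2 (by positivity) (by positivity),
    mul_le_mul_of_nonneg_right h1 (by positivity)⟩

/-- A proportion `O(1 / Y)` of all approximations has a factor common to `q₀` and `a i`: a medium prime
`ℓ` costs `1 / ℓ` for dividing `q₀` and again for dividing `a i`, and the `1 / ℓ ^ 2` sum to `1 / Y`. -/
theorem badA_bound (i : Fin d) :
    (c.Y : ℝ) * (c.Y.factorial * c.D * ((p : ℝ) ^ c.s) ^ d * (c.badA i).card) ≤
      2 * (8 * c.Q) ^ (d + m + 1) := by
  classical
  have hY : (0 : ℝ) < c.Y := by exact_mod_cast c.Y_pos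
  have hQ : (0 : ℝ) < c.Q := by exact_mod_cast c.Q_pos
  set T : ℝ := (p : ℝ) ^ c.s with hT
  have hT0 : 0 < T := by have := c.hp.pos; positivity
  set W : ℝ := (c.Y.factorial : ℝ) * c.D with hW
  have hW0 : 0 ≤ W := by positivity
  have h1 := fibre_pairs (c.badA i) c.base
    (fun u i' => if i' = i then c.pairsBad (u none) i else
      pairs p (c.S i') c.s (c.X i') (u none) c.Q) (by
    intro x hx
    obtain ⟨hx1, hx2, hx3⟩ := Finset.mem_filter.mp hx
    have hz := (Finset.mem_product.mp hx1).1
    refine ⟨c.proj_mem hx2, fun i' => ?_⟩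
    have hm := c.pair_mem hz hx2 i'
    split_ifs with h
    · subst h
      exact Finset.mem_filter.mpr ⟨hm, hx3⟩
    · exact hm)
  have h1' : ((c.badA i).card : ℝ) ≤ ∑ u ∈ c.base, ∏ i', (((if i' = i then c.pairsBad (u none) i else
      pairs p (c.S i') c.s (c.X i') (u none) c.Q) : Finset (ℕ × ℤ)).card : ℝ) := by
    exact_mod_cast h1
  have h2 : ∀ u ∈ c.base, 2 * c.Q * (T ^ d * ∏ i', (((if i' = i then c.pairsBad (u none) i else
      pairs p (c.S i') c.s (c.X i') (u none) c.Q) : Finset (ℕ × ℤ)).card : ℝ)) ≤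
      (2 * c.Q) ^ d * (∑ ℓ ∈ c.primes.filter (fun ℓ : ℕ => (ℓ : ℤ) ∣ u none),
        2 * c.Q * (ℓ : ℝ)⁻¹ + c.C * (2 * c.Q * (c.L : ℝ)⁻¹)) := by
    intro u hu
    rw [prod_pow_mul, ← Finset.mul_prod_erase _ _ (Finset.mem_univ i)]
    have e1 : ((2 : ℝ) * c.Q) ^ d = 2 * c.Q * ∏ _i' ∈ (Finset.univ.erase i : Finset (Fin d)), (2 * (c.Q : ℝ)) := by
      rw [Finset.mul_prod_erase _ (fun _ => 2 * (c.Q : ℝ)) (Finset.mem_univ i), Finset.prod_const,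
        Finset.card_univ, Fintype.card_fin]
    rw [e1, mul_assoc (2 * (c.Q : ℝ))]
    refine mul_le_mul_of_nonneg_left ?_ (mul_nonneg zero_le_two hQ.le)
    rw [mul_comm (T * _)]
    have h0 : ∏ i' ∈ Finset.univ.erase i, T * (((if i' = i then c.pairsBad (u none) i else
        pairs p (c.S i') c.s (c.X i') (u none) c.Q) : Finset (ℕ × ℤ)).card : ℝ) ≤
        ∏ _i' ∈ (Finset.univ.erase i : Finset (Fin d)), (2 * (c.Q : ℝ)) := by
      refine Finset.prod_le_prod (fun _ _ => by positivity) fun i' hi' => ?_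
      rw [if_neg (Finset.ne_of_mem_erase hi')]
      exact c.pairs_card' hu i'
    refine mul_le_mul h0 ?_ (by positivity)
      (Finset.prod_nonneg fun _ _ => mul_nonneg zero_le_two hQ.le)
    rw [if_pos rfl]
    exact c.pairsBad_card hu i
  have h3 : 2 * c.Q * (T ^ d * ((c.badA i).card : ℝ)) ≤ (2 * c.Q) ^ d *
      (2 * c.Q * (∑ ℓ ∈ c.primes, ((c.base.filter fun u => (ℓ : ℤ) ∣ u none).card : ℝ) *
        (ℓ : ℝ)⁻¹ + c.base.card * (c.C * (c.L : ℝ)⁻¹))) := by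
    calc 2 * c.Q * (T ^ d * ((c.badA i).card : ℝ))
        ≤ 2 * c.Q * (T ^ d * ∑ u ∈ c.base, ∏ i', (((if i' = i then c.pairsBad (u none) i else
            pairs p (c.S i') c.s (c.X i') (u none) c.Q) : Finset (ℕ × ℤ)).card : ℝ)) := by
          gcongr
      _ = ∑ u ∈ c.base, 2 * c.Q * (T ^ d * ∏ i', (((if i' = i then c.pairsBad (u none) i else
            pairs p (c.S i') c.s (c.X i') (u none) c.Q) : Finset (ℕ × ℤ)).card : ℝ)) := by
          rw [Finset.mul_sum, Finset.mul_sum]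
      _ ≤ _ := Finset.sum_le_sum h2
      _ = _ := by
          rw [← Finset.mul_sum, Finset.sum_add_distrib, Finset.sum_const, nsmul_eq_mul]
          congr 1
          rw [mul_add, Finset.mul_sum]
          congr 1
          · simp_rw [Finset.sum_filter]
            rw [Finset.sum_comm]
            refine Finset.sum_congr rfl fun ℓ _ => ?_
            rw [← Finset.sum_filter, Finset.sum_const, nsmul_eq_mul]
            ring
          · ring
  set V : ℝ := (4 * c.Q : ℝ) ^ (m + 1) with hV
  have hV0 : 0 ≤ V := by positivity
  have h4 : W * (∑ ℓ ∈ c.primes, ((c.base.filter fun u => (ℓ : ℤ) ∣ u none).card : ℝ) *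
        (ℓ : ℝ)⁻¹ + c.base.card * (c.C * (c.L : ℝ)⁻¹)) ≤ V * (2 * (c.Y : ℝ)⁻¹) := by
    rw [mul_add, Finset.mul_sum]
    have g1 : ∀ ℓ ∈ c.primes, W * (((c.base.filter fun u => (ℓ : ℤ) ∣ u none).card : ℝ) *
        (ℓ : ℝ)⁻¹) ≤ V * ((ℓ : ℝ) ^ 2)⁻¹ := by
      intro ℓ hℓ
      obtain ⟨⟨hYℓ, hL⟩, hℓp⟩ := c.mem_primes.mp hℓ
      have hℓ0 : (0 : ℝ) < ℓ := by exact_mod_cast hℓp.pos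
      have := c.base_card_dvd hℓp hYℓ hL _ (fun u hu => Finset.mem_filter.mp hu)
      have h : (c.Y.factorial : ℝ) * ℓ * c.D *
        ((c.base.filter fun u => (ℓ : ℤ) ∣ u none).card : ℝ) ≤ V := by rw [hV]; exact_mod_cast this
      rw [← div_eq_mul_inv, ← div_eq_mul_inv, mul_div_assoc', div_le_div_iff₀ hℓ0 (by positivity)]
      calc _ = (c.Y.factorial : ℝ) * ℓ * c.D *
        ((c.base.filter fun u => (ℓ : ℤ) ∣ u none).card : ℝ) * ℓ := by rw [hW]; ring
        _ ≤ _ := by gcongr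
    have g2 : W * (c.base.card : ℝ) ≤ V := by rw [hW, hV]; exact_mod_cast c.base_card
    have g3 := (Finset.sum_le_sum g1).trans_eq (Finset.mul_sum _ _ _).symm
    have g4 := mul_le_mul_of_nonneg_left c.primes_sum hV0
    have g5 : W * (c.base.card * (c.C * (c.L : ℝ)⁻¹)) ≤ V * (c.Y : ℝ)⁻¹ := by
      rw [← mul_assoc]
      exact mul_le_mul g2 c.CL (by positivity) hV0
    linarith
  have h5 : 2 * c.Q * (W * (T ^ d * ((c.badA i).card : ℝ))) ≤
      2 * c.Q * ((2 * c.Q) ^ d * (V * (2 * (c.Y : ℝ)⁻¹))) := by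
    calc 2 * c.Q * (W * (T ^ d * ((c.badA i).card : ℝ)))
        = W * (2 * c.Q * (T ^ d * ((c.badA i).card : ℝ))) := by ring
      _ ≤ W * _ := mul_le_mul_of_nonneg_left h3 hW0
      _ = 2 * c.Q * ((2 * c.Q) ^ d * (W * (∑ ℓ ∈ c.primes,
            ((c.base.filter fun u => (ℓ : ℤ) ∣ u none).card : ℝ) *
            (ℓ : ℝ)⁻¹ + c.base.card * (c.C * (c.L : ℝ)⁻¹)))) := by ring
      _ ≤ _ := by gcongr
  have h6 := le_of_mul_le_mul_left h5 (by positivity)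
  calc (c.Y : ℝ) * (W * T ^ d * (c.badA i).card) = c.Y * (W * (T ^ d * (c.badA i).card)) := by ring
    _ ≤ c.Y * ((2 * c.Q) ^ d * (V * (2 * (c.Y : ℝ)⁻¹))) := by gcongr
    _ = 2 * ((2 * c.Q) ^ d * V) := by field_simp
    _ ≤ _ := by have := c.final_le.1; gcongr

/-- A proportion `O(1 / Y)` of all approximations has a factor common to `q₀` and `b j`. This is a
property of the projection, so the bounds for `base` apply. -/
theorem badQ_bound (j : Fin m) :
    (c.Y : ℝ) * (c.Y.factorial * c.D * ((p : ℝ) ^ c.s) ^ d * (c.badQ j).card) ≤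
      2 * (8 * c.Q) ^ (d + m + 1) := by
  classical
  have hY : (0 : ℝ) < c.Y := by exact_mod_cast c.Y_pos
  have hQ : (0 : ℝ) < c.Q := by exact_mod_cast c.Q_pos
  have hL : (0 : ℝ) < c.L := by have := c.hL3; exact_mod_cast (by omega : 0 < c.L)
  set T : ℝ := (p : ℝ) ^ c.s with hT
  have hT0 : 0 < T := by have := c.hp.pos; positivity
  set W : ℝ := (c.Y.factorial : ℝ) * c.D with hW
  have hW0 : 0 ≤ W := by positivity
  set K := c.base.filter fun u => ∃ ℓ : ℕ, ℓ.Prime ∧ (ℓ : ℤ) ∣ u none ∧ (ℓ : ℤ) ∣ u (some j)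
    with hK
  have h1 := fibre_pairs (c.badQ j) K
    (fun u i' => pairs p (c.S i') c.s (c.X i') (u none) c.Q) (by
    intro x hx
    obtain ⟨hx1, hx2, hx3⟩ := Finset.mem_filter.mp hx
    have hz := (Finset.mem_product.mp hx1).1
    exact ⟨Finset.mem_filter.mpr ⟨c.proj_mem hx2, hx3⟩, fun i' => c.pair_mem hz hx2 i'⟩)
  have h1' : ((c.badQ j).card : ℝ) ≤ ∑ u ∈ K, ∏ i',
      ((pairs p (c.S i') c.s (c.X i') (u none) c.Q).card : ℝ) := by
    exact_mod_cast h1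
  have h3 : T ^ d * ((c.badQ j).card : ℝ) ≤ K.card * (2 * c.Q) ^ d := by
    refine (mul_le_mul_of_nonneg_left h1' (by positivity)).trans ?_
    rw [Finset.mul_sum, ← nsmul_eq_mul]
    refine Finset.sum_le_card_nsmul _ _ _ fun u hu => ?_
    rw [prod_pow_mul]
    refine (Finset.prod_le_prod (g := fun _ => 2 * (c.Q : ℝ)) (fun _ _ => by positivity)
      fun i' _ => c.pairs_card' (Finset.mem_filter.mp hu).1 i').trans ?_
    simp
  set V : ℝ := (8 * c.Q : ℝ) ^ (m + 1) with hV
  have hV0 : 0 ≤ V := by positivity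
  have hV4 : (4 * c.Q : ℝ) ^ (m + 1) ≤ V := by rw [hV]; gcongr; norm_num
  set G : ℕ → Finset (Option (Fin m) → ℤ) := fun ℓ =>
    c.base.filter fun u => (ℓ : ℤ) ∣ u none ∧ (ℓ : ℤ) ∣ u (some j)
  set H := c.base.filter fun u =>
    ∃ ℓ : ℕ, ℓ.Prime ∧ c.L < ℓ ∧ (ℓ : ℤ) ∣ u none ∧ (ℓ : ℤ) ∣ u (some j)
  have hcover : K ⊆ c.primes.biUnion G ∪ H := by
    intro u hu
    obtain ⟨hu, ℓ, hℓ, h0, hj⟩ := Finset.mem_filter.mp hu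
    rw [Finset.mem_union, Finset.mem_biUnion]
    rcases le_or_gt ℓ c.L with h | h
    · exact Or.inl ⟨ℓ, c.mem_primes.mpr ⟨⟨c.base_prime hu hℓ h0, h⟩, hℓ⟩,
        Finset.mem_filter.mpr ⟨hu, h0, hj⟩⟩
    · exact Or.inr (Finset.mem_filter.mpr ⟨hu, ℓ, hℓ, h, h0, hj⟩)
  have hc := (Finset.card_le_card hcover).trans ((Finset.card_union_le _ _).trans
    (Nat.add_le_add_right Finset.card_biUnion_le _))
  have hc' : (K.card : ℝ) ≤ ∑ ℓ ∈ c.primes, ((G ℓ).card : ℝ) + H.card := by exact_mod_cast hc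
  have h4 : W * K.card ≤ V * (2 * (c.Y : ℝ)⁻¹) := by
    refine (mul_le_mul_of_nonneg_left hc' hW0).trans ?_
    rw [mul_add, Finset.mul_sum]
    have g1 : ∀ ℓ ∈ c.primes, W * ((G ℓ).card : ℝ) ≤ V * ((ℓ : ℝ) ^ 2)⁻¹ := by
      intro ℓ hℓ
      obtain ⟨⟨hYℓ, hL⟩, hℓp⟩ := c.mem_primes.mp hℓ
      have hℓ0 : (0 : ℝ) < ℓ := by exact_mod_cast hℓp.pos
      have := c.base_card_dvd₂ hℓp hYℓ hL j (G ℓ) (fun u hu => Finset.mem_filter.mp hu)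
      have h : (c.Y.factorial : ℝ) * ℓ ^ 2 * c.D * ((G ℓ).card : ℝ) ≤ (4 * c.Q : ℝ) ^ (m + 1) := by
        exact_mod_cast this
      rw [← div_eq_mul_inv, le_div_iff₀ (by positivity)]
      calc _ = (c.Y.factorial : ℝ) * ℓ ^ 2 * c.D * ((G ℓ).card : ℝ) := by rw [hW]; ring
        _ ≤ _ := h.trans hV4
    have g3 := (Finset.sum_le_sum g1).trans_eq (Finset.mul_sum _ _ _).symm
    have g4 := mul_le_mul_of_nonneg_left c.primes_sum hV0
    have g5 : W * (H.card : ℝ) ≤ V * (c.Y : ℝ)⁻¹ := by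
      have h : (c.L : ℝ) * c.D * H.card ≤ (2 * c.C + 1) * V := by
        rw [hV]; exact_mod_cast c.base_card_large j H (fun u hu => Finset.mem_filter.mp hu)
      have h' : (c.Y : ℝ) * c.Y.factorial * (2 * c.C + 1) ≤ c.L := by exact_mod_cast c.hLY
      rw [← div_eq_mul_inv, le_div_iff₀ hY]
      refine le_of_mul_le_mul_left ?_ hL
      calc (c.L : ℝ) * (W * H.card * c.Y)
          = (c.Y * c.Y.factorial) * (c.L * c.D * H.card) := by rw [hW]; ring
        _ ≤ (c.Y * c.Y.factorial) * ((2 * c.C + 1) * V) := by gcongr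
        _ = (c.Y * c.Y.factorial * (2 * c.C + 1)) * V := by ring
        _ ≤ _ := by gcongr
    linarith
  calc (c.Y : ℝ) * (W * T ^ d * (c.badQ j).card) = c.Y * (W * (T ^ d * (c.badQ j).card)) := by ring
    _ ≤ c.Y * (W * (K.card * (2 * c.Q) ^ d)) := by gcongr
    _ = c.Y * ((W * K.card) * (2 * c.Q) ^ d) := by ring
    _ ≤ c.Y * ((V * (2 * (c.Y : ℝ)⁻¹)) * (2 * c.Q) ^ d) := by gcongr
    _ = 2 * ((2 * c.Q) ^ d * V) := by field_simp
    _ ≤ _ := by have := c.final_le.2; gcongr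

end Core

/-! ### Residues with a reduced approximation -/

namespace Core
variable {p d m : ℕ} (c : Core p d m)

/-- The residues `z` whose lattice has a nonzero vector of sup norm below `R1`. -/
noncomputable def bad1 : Finset (Fin d → ℕ) :=
  open Classical in c.Z.filter fun z =>
    ∃ u, InLat (c.latA z) c.latN u ∧ (∀ i, |u i| < (c.R1 : ℤ)) ∧ u ≠ 0

/-- Vectors of sup norm below `R1` approximating `A`, with `q₀ ≠ 0`. -/
noncomputable def smallK : Finset (Option (Fin m) → ℤ) :=
  open Classical in (zbox (fun _ => -(c.R1 : ℤ)) fun _ => 2 * c.R1).filter fun u =>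
    (∀ i, |u i| < (c.R1 : ℤ)) ∧ u none ≠ 0 ∧ InLat c.A (fun j => p ^ c.t j) u

theorem mem_smallK {u : Option (Fin m) → ℤ} : u ∈ c.smallK ↔
    (∀ i, |u i| < (c.R1 : ℤ)) ∧ u none ≠ 0 ∧ InLat c.A (fun j => p ^ c.t j) u := by
  classical
  rw [smallK, Finset.mem_filter]
  refine ⟨fun h => h.2, fun h => ⟨mem_zbox.mpr fun i => ?_, h⟩⟩
  have := abs_lt.mp (h.1 i)
  push_cast
  constructor <;> linarith

theorem Lpos : 0 < c.L := by have := c.hL3; omega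

theorem smallK_card (w : ℕ) (hw : 0 < w) (hwL : w ≤ c.L) (F : Finset (Option (Fin m) → ℤ))
    (hF : ∀ u ∈ F, u ∈ c.smallK ∧ (w : ℤ) ∣ u none) :
    w * c.D * F.card ≤ (5 * c.R1) ^ (m + 1) := by
  classical
  have := c.upper w hw (fun j => p ^ c.t j) (fun j => pow_pos c.hp.pos _) (fun _ => dvd_rfl)
    (Nat.mul_le_mul_right _ (hwL.trans (Nat.le_self_pow (by norm_num) _)))
    (fun _ => -(c.R1 : ℤ)) (2 * c.R1) 0 F (by
      intro u hu
      obtain ⟨h1, h2⟩ := hF u hu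
      exact ⟨(Finset.mem_filter.mp h1).1, by simpa using h2, (c.mem_smallK.mp h1).2.2⟩)
  exact this.trans (Nat.pow_le_pow_left (by have := c.hρR; omega) _)

theorem R1_pos : 0 < c.R1 := by
  have := c.hLT
  have h : 0 < c.L * p ^ c.s := Nat.mul_pos c.Lpos (pow_pos c.hp.pos _)
  omega

/-- A nonzero vector of norm below `R1` in the lattice of `z` has `q₀ ≠ 0`, since the moduli are at
least `R1`; hence its projection lies in `smallK`. -/
theorem bad1_subset : c.bad1 ⊆ c.smallK.biUnion fun u =>
    Fintype.piFinset fun i => nearZ p (c.S i) c.s (c.X i) (u none) c.R1 := by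
  classical
  intro z hz
  obtain ⟨hz, u, h1, h2, h3⟩ := Finset.mem_filter.mp hz
  rw [Finset.mem_biUnion]
  refine ⟨proj u, c.mem_smallK.mpr ⟨?_, ?_, fun j => h1 (Sum.inr j)⟩, ?_⟩
  · intro i
    cases i with
    | none => exact h2 none
    | some j => exact h2 (some (Sum.inr j))
  · intro h0
    apply h3
    replace h0 : u none = 0 := h0
    have key : ∀ (n : ℕ) (a : ℤ), c.R1 ≤ n → |a| < c.R1 → (n : ℤ) ∣ a → a = 0 := by
      intro n a hn ha hd
      exact Int.eq_zero_of_abs_lt_dvd hd (ha.trans_le (by exact_mod_cast hn))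
    ext o
    match o with
    | none => exact h0
    | some (Sum.inl i) =>
      have := h1 (Sum.inl i)
      rw [h0, mul_zero, sub_zero] at this
      exact key _ _ (c.hRS i) (h2 _) this
    | some (Sum.inr j) =>
      have := h1 (Sum.inr j)
      rw [h0, mul_zero, sub_zero] at this
      exact key _ _ (c.hRt j) (h2 _) this
  · rw [Fintype.mem_piFinset]
    intro i
    rw [nearZ, Finset.mem_filter, Finset.mem_range]
    exact ⟨c.mem_Z.mp hz i, u (some (Sum.inl i)), h2 _, h1 (Sum.inl i)⟩

/-- For `p ^ e ∤ q₀` the proportion of residues in `nearZ` is as expected up to a constant; in general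
it may be larger by a factor `p ^ s`. -/
theorem nearZ_le {u : Option (Fin m) → ℤ} (hu : u ∈ c.smallK) (i : Fin d) :
    p ^ c.s * (nearZ p (c.S i) c.s (c.X i) (u none) c.R1).card ≤ 3 * (p ^ c.s * c.R1) ∧
    (¬ ((p ^ c.e : ℕ) : ℤ) ∣ u none →
      p ^ c.s * (nearZ p (c.S i) c.s (c.X i) (u none) c.R1).card ≤ 3 * c.R1) := by
  obtain ⟨h1, h2, -⟩ := c.mem_smallK.mp hu
  have hfin : FiniteMultiplicity (p : ℤ) (u none) := by
    rw [Int.finiteMultiplicity_iff]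
    exact ⟨by simpa using c.hp.ne_one, h2⟩
  set e' := multiplicity (p : ℤ) (u none) with he'
  have h3 : (p : ℤ) ^ e' ∣ u none := pow_multiplicity_dvd _ _
  have h4 : ¬ (p : ℤ) ^ (e' + 1) ∣ u none :=
    hfin.not_pow_dvd_of_multiplicity_lt (Nat.lt_succ_self _)
  have h5 := nearZ_count p (c.S i) c.s c.hp (c.hsS i) (c.X i) (u none) c.R1 e' h3 h4
  have hT : 1 ≤ p ^ c.s := Nat.one_le_pow _ _ c.hp.pos
  constructor
  · have h6 : p ^ e' ≤ c.R1 := by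
      have := Int.le_of_dvd (abs_pos.mpr h2) ((dvd_abs _ _).mpr h3)
      have := this.trans (h1 none).le
      exact_mod_cast this
    rw [pow_add] at h5
    have := Nat.mul_le_mul_left (p ^ c.s) h6
    have := Nat.mul_le_mul_right c.R1 hT
    omega
  · intro hE
    have h6 : e' < c.e := by
      by_contra! hcon
      apply hE
      push_cast
      exact (pow_dvd_pow _ hcon).trans h3
    have h7 : p ^ e' ≤ c.L := (Nat.pow_le_pow_right c.hp.pos h6.le).trans c.hEL
    rw [pow_add] at h5
    have := Nat.mul_le_mul_left (p ^ c.s) h7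
    have h8 := c.hLT
    rw [mul_comm c.L] at h8
    omega

/-- At most a quarter of the residues have a short vector. The `q₀` divisible by `p ^ e` may count
`p ^ (s d)` times too often, which their rarity makes up for, as `p ^ e ≥ p ^ (s d)`. -/
theorem bad1_card : 4 * c.bad1.card ≤ c.Z.card := by
  classical
  have hT : 0 < p ^ c.s := pow_pos c.hp.pos _
  have hD := c.D_pos
  set T := p ^ c.s with hTdef
  have h1 : c.bad1.card ≤ ∑ u ∈ c.smallK,
      ∏ i, (nearZ p (c.S i) c.s (c.X i) (u none) c.R1).card := by
    refine (Finset.card_le_card c.bad1_subset).trans (Finset.card_biUnion_le.trans ?_)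
    exact (Finset.sum_congr rfl fun u _ => Fintype.card_piFinset _).le
  set KE := c.smallK.filter fun u => ((p ^ c.e : ℕ) : ℤ) ∣ u none with hKE
  have h2 : T ^ d * c.bad1.card ≤ (3 * c.R1) ^ d * (c.smallK.card + T ^ d * KE.card) := by
    calc T ^ d * c.bad1.card ≤ T ^ d * ∑ u ∈ c.smallK,
          ∏ i, (nearZ p (c.S i) c.s (c.X i) (u none) c.R1).card := Nat.mul_le_mul_left _ h1
      _ = ∑ u ∈ c.smallK, ∏ i, T * (nearZ p (c.S i) c.s (c.X i) (u none) c.R1).card := by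
          rw [Finset.mul_sum]
          refine Finset.sum_congr rfl fun u _ => ?_
          rw [Finset.prod_mul_distrib, Finset.prod_const, Finset.card_univ, Fintype.card_fin]
      _ ≤ ∑ u ∈ c.smallK, ((3 * c.R1) ^ d +
            if ((p ^ c.e : ℕ) : ℤ) ∣ u none then (3 * (T * c.R1)) ^ d else 0) := by
          refine Finset.sum_le_sum fun u hu => ?_
          split_ifs with h
          · refine le_trans ?_ (Nat.le_add_left _ _)
            refine (Finset.prod_le_prod' (g := fun _ => 3 * (T * c.R1)) fun i _ =>
              (c.nearZ_le hu i).1).trans ?_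
            simp
          · refine le_trans ?_ (Nat.le_add_right _ _)
            refine (Finset.prod_le_prod' (g := fun _ => 3 * c.R1) fun i _ =>
              (c.nearZ_le hu i).2 h).trans ?_
            simp
      _ = _ := by
          rw [Finset.sum_add_distrib, ← Finset.sum_filter, Finset.sum_const, Finset.sum_const,
            smul_eq_mul, smul_eq_mul, ← hKE, mul_pow 3 (T * c.R1), mul_pow T, mul_pow 3]
          ring
  have h3 : c.D * c.smallK.card ≤ (5 * c.R1) ^ (m + 1) := by
    have := c.smallK_card 1 one_pos c.Lpos c.smallK fun u hu => ⟨hu, by simp⟩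
    simpa using this
  have h4 : c.D * (T ^ d * KE.card) ≤ (5 * c.R1) ^ (m + 1) := by
    refine le_trans ?_ (c.smallK_card (p ^ c.e) (pow_pos c.hp.pos _) c.hEL KE fun u hu =>
      Finset.mem_filter.mp hu)
    have : T ^ d ≤ p ^ c.e := by rw [hTdef, ← pow_mul]; exact c.hTE
    calc _ = T ^ d * (c.D * KE.card) := by ring
      _ ≤ p ^ c.e * (c.D * KE.card) := Nat.mul_le_mul_right _ this
      _ = _ := by ring
  have h5 : 4 * (c.D * T ^ d * c.bad1.card) ≤ c.D * T ^ d * c.Z.card := by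
    calc 4 * (c.D * T ^ d * c.bad1.card) = 4 * (c.D * (T ^ d * c.bad1.card)) := by ring
      _ ≤ 4 * (c.D * ((3 * c.R1) ^ d * (c.smallK.card + T ^ d * KE.card))) := by gcongr
      _ = 4 * ((3 * c.R1) ^ d * (c.D * c.smallK.card + c.D * (T ^ d * KE.card))) := by ring
      _ ≤ 4 * ((3 * c.R1) ^ d * ((5 * c.R1) ^ (m + 1) + (5 * c.R1) ^ (m + 1))) := by gcongr
      _ = 8 * ((3 * c.R1) ^ d * (5 * c.R1) ^ (m + 1)) := by ring
      _ ≤ 8 * ((15 * c.R1) ^ d * (15 * c.R1) ^ (m + 1)) := by gcongr <;> norm_num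
      _ = 8 * 15 ^ (d + m + 1) * c.R1 ^ (d + m + 1) := by
          rw [← pow_add, mul_pow, add_assoc]; ring
      _ ≤ _ := c.h5
      _ = c.P * c.D := rfl
      _ = _ := by rw [← c.card_Z, pow_mul]; ring
  have hpos : 0 < c.D * T ^ d := by positivity
  exact Nat.le_of_mul_le_mul_left (by linarith) hpos

/-- Outside `bad1` there are at least as many admissible approximations, up to a constant, as the index
of the lattice suggests. -/
theorem full_card {z : Fin d → ℕ} (hz : z ∈ c.Z) (hz1 : z ∉ c.bad1) :
    c.Q ^ (d + m + 1) ≤ 2 ^ (d + m + 1) * (c.Y.factorial * (c.P * c.D) * (c.full z).card) := by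
  have hmin : ∀ u, InLat (c.latA z) c.latN u → (∀ i, |u i| < (c.R1 : ℤ)) → u = 0 := by
    intro u h1 h2
    by_contra h3
    exact hz1 (by classical exact Finset.mem_filter.mpr ⟨hz, u, h1, h2, h3⟩)
  have := lat_lower (c.latA z) c.latN (by
      rintro (i | j)
      · exact pow_pos c.hp.pos _
      · exact pow_pos c.hp.pos _) c.R1 c.R1_pos hmin c.Y.factorial (Nat.factorial_pos _) c.ρ1
    (by
      rw [c.latN_prod, Fintype.card_sum, Fintype.card_fin, Fintype.card_fin]
      exact c.hρ1)
    (fun o => o.elim (c.Q : ℤ) fun _ => 0) (fun _ => c.Q)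
    (fun _ => by have := c.hρ1Q; omega) 1 (c.full z)
    (fun u h1 h2 h3 => c.mem_full.mpr ⟨h1, h2, h3⟩)
  rw [c.latN_prod, Finset.prod_const, Finset.card_univ, Fintype.card_option, Fintype.card_sum,
    Fintype.card_fin, Fintype.card_fin] at this
  calc c.Q ^ (d + m + 1) ≤ (2 * (c.Q - 2 * c.ρ1)) ^ (d + m + 1) :=
        Nat.pow_le_pow_left (by have := c.hρ1Q; omega) _
    _ = 2 ^ (d + m + 1) * (c.Q - 2 * c.ρ1) ^ (d + m + 1) := mul_pow _ _ _
    _ ≤ _ := Nat.mul_le_mul_left _ this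

/-- `u` is a reduced approximation: `q₀` is coprime to every numerator. -/
def Reduced (u : Option (Fin d ⊕ Fin m) → ℤ) : Prop :=
  ∀ o, Int.gcd (u (some o)) (u none) = 1

/-- The residues `z` outside `bad1` none of whose admissible approximations is reduced. -/
noncomputable def bad2 : Finset (Fin d → ℕ) :=
  open Classical in c.Z.filter fun z => z ∉ c.bad1 ∧ ∀ u ∈ c.full z, ¬ Reduced u

/-- An unreduced approximation is counted in some `badA i` or `badQ j`. -/
theorem bad2_pairs : ∑ z ∈ c.bad2, (c.full z).card ≤
    ∑ i, (c.badA i).card + ∑ j, (c.badQ j).card := by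
  classical
  rw [← Finset.card_sigma]
  have h : (c.bad2.sigma c.full).card ≤
      (Finset.univ.biUnion c.badA ∪ Finset.univ.biUnion c.badQ).card := by
    refine Finset.card_le_card_of_injOn (fun x => (x.1, x.2)) ?_ ?_
    · rintro ⟨z, u⟩ h
      obtain ⟨h1, h2⟩ := Finset.mem_sigma.mp (Finset.mem_coe.mp h)
      obtain ⟨h3, -, h4⟩ := Finset.mem_filter.mp h1
      have h5 := h4 u h2
      rw [Reduced] at h5
      push Not at h5
      obtain ⟨o, ho⟩ := h5
      obtain ⟨ℓ, hℓ, hd⟩ := Nat.exists_prime_and_dvd ho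
      have hd' : (ℓ : ℤ) ∣ (Int.gcd (u (some o)) (u none) : ℤ) := Int.natCast_dvd_natCast.mpr hd
      have ha := hd'.trans (Int.gcd_dvd_left _ _)
      have hb := hd'.trans (Int.gcd_dvd_right _ _)
      have hq : (z, u) ∈ c.Z ×ˢ qbox (Fin d ⊕ Fin m) c.Q :=
        Finset.mem_product.mpr ⟨h3, (c.mem_full.mp h2).1⟩
      rw [Finset.mem_coe, Finset.mem_union, Finset.mem_biUnion, Finset.mem_biUnion]
      match o, ha with
      | Sum.inl i, ha =>
        exact Or.inl ⟨i, Finset.mem_univ _, Finset.mem_filter.mpr ⟨hq, h2, ℓ, hℓ, hb, ha⟩⟩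
      | Sum.inr j, ha =>
        exact Or.inr ⟨j, Finset.mem_univ _, Finset.mem_filter.mpr ⟨hq, h2, ℓ, hℓ, hb, ha⟩⟩
    · rintro ⟨z, u⟩ - ⟨z', u'⟩ - h
      simp only [Prod.mk.injEq] at h
      obtain ⟨rfl, rfl⟩ := h
      rfl
  exact h.trans ((Finset.card_union_le _ _).trans
    (Nat.add_le_add Finset.card_biUnion_le Finset.card_biUnion_le))

/-- Each residue of `bad2` carries many approximations, all unreduced, and these are a proportion
`O(1 / Y)` of the total. -/
theorem bad2_card : 4 * c.bad2.card ≤ c.Z.card := by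
  set N := d + m + 1 with hN
  set W := c.Y.factorial * c.D * (p ^ c.s) ^ d with hW
  have hb : ∀ n : ℕ, (c.Y : ℝ) * (c.Y.factorial * c.D * ((p : ℝ) ^ c.s) ^ d * n) ≤
      2 * (8 * c.Q) ^ (d + m + 1) → c.Y * (W * n) ≤ 2 * (8 * c.Q) ^ N := by
    intro n h
    rw [hW]; exact_mod_cast h
  have hA : ∀ i, c.Y * (W * (c.badA i).card) ≤ 2 * (8 * c.Q) ^ N := fun i =>
    hb _ (c.badA_bound i)
  have hQ : ∀ j, c.Y * (W * (c.badQ j).card) ≤ 2 * (8 * c.Q) ^ N := fun i =>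
    hb _ (c.badQ_bound i)
  have h1 : c.Y * (W * (∑ i, (c.badA i).card + ∑ j, (c.badQ j).card)) ≤
      N * (2 * (8 * c.Q) ^ N) := by
    rw [mul_add, mul_add, Finset.mul_sum, Finset.mul_sum, Finset.mul_sum, Finset.mul_sum]
    have g1 := Finset.sum_le_card_nsmul Finset.univ _ _ fun i _ => hA i
    have g2 := Finset.sum_le_card_nsmul Finset.univ _ _ fun i _ => hQ i
    rw [Finset.card_univ, Fintype.card_fin, smul_eq_mul] at g1 g2
    refine (Nat.add_le_add g1 g2).trans ?_
    rw [← add_mul]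
    exact Nat.mul_le_mul_right _ (by omega)
  have hPW : c.Y.factorial * (c.P * c.D) = W * c.Z.card := by
    rw [← c.card_Z, hW, pow_mul]; ring
  have h2 : c.bad2.card * c.Q ^ N ≤ 2 ^ N * (W * c.Z.card *
      (∑ i, (c.badA i).card + ∑ j, (c.badQ j).card)) := by
    rw [← smul_eq_mul]
    refine (Finset.card_nsmul_le_sum c.bad2
      (fun z => 2 ^ N * (W * c.Z.card * (c.full z).card)) _ fun z hz => ?_).trans ?_
    · obtain ⟨h3, h4, -⟩ := by classical exact Finset.mem_filter.mp hz
      rw [← hPW]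
      exact c.full_card h3 h4
    · rw [← Finset.mul_sum, ← Finset.mul_sum]
      exact Nat.mul_le_mul_left _ (Nat.mul_le_mul_left _ c.bad2_pairs)
  have hQN : 0 < c.Q ^ N := pow_pos c.Q_pos _
  have h3 : c.Y * c.bad2.card ≤ 2 * N * 16 ^ N * c.Z.card := by
    refine Nat.le_of_mul_le_mul_right ?_ hQN
    calc c.Y * c.bad2.card * c.Q ^ N = c.Y * (c.bad2.card * c.Q ^ N) := by ring
      _ ≤ c.Y * (2 ^ N * (W * c.Z.card *
          (∑ i, (c.badA i).card + ∑ j, (c.badQ j).card))) := by gcongr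
      _ = 2 ^ N * c.Z.card * (c.Y * (W *
          (∑ i, (c.badA i).card + ∑ j, (c.badQ j).card))) := by ring
      _ ≤ 2 ^ N * c.Z.card * (N * (2 * (8 * c.Q) ^ N)) := by gcongr
      _ = 2 * N * (2 ^ N * 8 ^ N) * c.Z.card * c.Q ^ N := by rw [mul_pow]; ring
      _ = _ := by rw [← mul_pow]; norm_num
  have hY := c.hYN
  rw [← hN] at hY
  have hpos : 0 < 2 * N * 16 ^ N := by positivity
  refine Nat.le_of_mul_le_mul_left ?_ hpos
  calc 2 * N * 16 ^ N * (4 * c.bad2.card) = 8 * N * 16 ^ N * c.bad2.card := by ring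
    _ ≤ c.Y * c.bad2.card := by gcongr
    _ ≤ _ := h3

/-- The residues `z` having a reduced admissible approximation. -/
noncomputable def good : Finset (Fin d → ℕ) :=
  open Classical in c.Z.filter fun z => ∃ u ∈ c.full z, Reduced u

/-- At least half of the residues admit a reduced approximation. -/
theorem good_card : c.Z.card ≤ 2 * c.good.card := by
  classical
  have h : c.Z ⊆ c.good ∪ (c.bad1 ∪ c.bad2) := by
    intro z hz
    rw [Finset.mem_union, Finset.mem_union]
    by_cases h1 : z ∈ c.bad1
    · exact Or.inr (Or.inl h1)
    by_cases h2 : ∃ u ∈ c.full z, Reduced u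
    · exact Or.inl (Finset.mem_filter.mpr ⟨hz, h2⟩)
    · push Not at h2
      exact Or.inr (Or.inr (Finset.mem_filter.mpr ⟨hz, h1, h2⟩))
  have h1 := Finset.card_le_card h
  have h2 := Finset.card_union_le c.good (c.bad1 ∪ c.bad2)
  have h3 := Finset.card_union_le c.bad1 c.bad2
  have h4 := c.bad1_card
  have h5 := c.bad2_card
  omega

/-- A good residue provides a reduced approximation `(q, a, b)` with `q ∈ [Q, 2Q)` prime to `p`. -/
theorem good_spec {z : Fin d → ℕ} (hz : z ∈ c.good) : z ∈ c.Z ∧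
    ∃ (q : ℕ) (a : Fin d → ℤ) (b : Fin m → ℤ), c.Q ≤ q ∧ q < 2 * c.Q ∧ ¬ p ∣ q ∧
      (∀ i, 0 ≤ a i ∧ a i < c.Q ∧ Int.gcd (a i) q = 1 ∧
        ((p ^ c.S i : ℕ) : ℤ) ∣ a i - (c.X i + (p : ℤ) ^ c.s * z i) * q) ∧
      ∀ j, 0 ≤ b j ∧ b j < c.Q ∧ Int.gcd (b j) q = 1 ∧
        ((p ^ c.t j : ℕ) : ℤ) ∣ b j - c.A j * q := by
  classical
  obtain ⟨hz, u, hu, hr⟩ := Finset.mem_filter.mp hz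
  have hp := c.base_p (c.proj_mem hu)
  obtain ⟨h1, h2, h3⟩ := c.mem_full.mp hu
  have h1 := mem_zbox.mp h1
  have h0 := h1 none
  simp only [Option.elim] at h0
  obtain ⟨q, hq⟩ : ∃ q : ℕ, u none = q := Int.eq_ofNat_of_zero_le (by omega)
  rw [Reduced, hq] at hr
  rw [hq] at h0
  refine ⟨hz, q, fun i => u (some (Sum.inl i)), fun j => u (some (Sum.inr j)), ?_, ?_, ?_, ?_, ?_⟩
  · omega
  · omega
  · intro h
    apply hp
    change (p : ℤ) ∣ u none
    rw [hq]
    exact_mod_cast h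
  · intro i
    have h4 := h1 (some (Sum.inl i))
    simp only [Option.elim, zero_add] at h4
    have h5 := h3 (Sum.inl i)
    rw [hq] at h5
    exact ⟨h4.1, h4.2, hr _, h5⟩
  · intro i
    have h4 := h1 (some (Sum.inr i))
    simp only [Option.elim, zero_add] at h4
    have h5 := h3 (Sum.inr i)
    rw [hq] at h5
    exact ⟨h4.1, h4.2, hr _, h5⟩

end Core

/-! ### Short vectors and the Diophantine exponent -/

/-- The hypothesis `τ(α) = m + 1` bounds from below the shortest vector of the lattice of
approximations to `α`: a vector of norm below `Q ^ θ` for arbitrarily large `Q` would be an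
approximation with exponents `τ j / θ`, whose sum exceeds `m + 1`. -/
theorem short_vectors {p : ℕ} [Fact p.Prime] {m : ℕ} (α : Fin m → ℤ_[p])
    (hα : dioExp α = (m : ℝ) + 1) (τ : Fin m → ℝ) (hτ : ∀ i, 1 < τ i) (θ : ℝ) (hθ : 0 < θ)
    (hθ1 : θ ≤ 1) (hθ2 : θ * (m + 1) < ∑ i, τ i) :
    ∃ Q₁ : ℕ, ∀ Q : ℕ, Q₁ ≤ Q → ∀ (t : Fin m → ℕ) (A : Fin m → ℤ) (R : ℕ),
      (∀ j, (Q : ℝ) ^ τ j < (p : ℝ) ^ t j) →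
      (∀ j, ‖α j - (A j : ℤ_[p])‖ ≤ (p : ℝ) ^ (-(t j : ℤ))) → (R : ℝ) ≤ (Q : ℝ) ^ θ →
      ∀ u, InLat A (fun j => p ^ t j) u → (∀ i, |u i| < (R : ℤ)) → u = 0 := by
  by_contra! hcon
  have hmem : (∑ i, τ i) / θ ∈ {s : ℝ | ∃ τ : Fin m → ℝ, s = ∑ i, τ i ∧
    ∀ Q₀ : ℕ, ∃ Q : ℕ, Q₀ ≤ Q ∧ ∃ q₀ : ℤ, ∃ q : Fin m → ℤ,
      0 < q₀ ∧ q₀ ≤ (Q : ℤ) ∧ (∀ i, |q i| ≤ (Q : ℤ)) ∧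
      ∀ i, ‖(q₀ : ℤ_[p]) * α i - (q i : ℤ_[p])‖ < (Q : ℝ) ^ (-(τ i))} := by
    refine ⟨fun i => τ i / θ, by rw [Finset.sum_div], fun Q₀ => ?_⟩
    have hlim := (tendsto_rpow_atTop hθ).comp (tendsto_natCast_atTop_atTop (R := ℝ))
    obtain ⟨Q₁, hQ₁⟩ := Filter.eventually_atTop.mp
      ((hlim.eventually_ge_atTop ((Q₀ : ℝ) + 1)))
    obtain ⟨Q, hQ, t, A, R, ht, hA, hR, u, hu, huR, hu0⟩ := hcon (max Q₁ 1)
    have hQ1 : 1 ≤ Q := (le_max_right _ _).trans hQ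
    have hQr : (1 : ℝ) ≤ Q := by exact_mod_cast hQ1
    have hbig : (Q₀ : ℝ) + 1 ≤ (Q : ℝ) ^ θ := hQ₁ Q ((le_max_left _ _).trans hQ)
    have hRF : R ≤ ⌊(Q : ℝ) ^ θ⌋₊ := Nat.le_floor hR
    have hQF : Q₀ + 1 ≤ ⌊(Q : ℝ) ^ θ⌋₊ := Nat.le_floor (by push_cast; exact hbig)
    set Q' := ⌊(Q : ℝ) ^ θ⌋₊ with hQ'
    have hQ'le : (Q' : ℝ) ≤ (Q : ℝ) ^ θ := Nat.floor_le (by positivity)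
    have hQ'pos : (0 : ℝ) < Q' := by exact_mod_cast (by omega : 0 < Q')
    have hne : u none ≠ 0 := by
      intro h0
      apply hu0
      ext o
      match o with
      | none => exact h0
      | some j =>
        have h1 := hu j
        rw [h0, mul_zero, sub_zero] at h1
        refine Int.eq_zero_of_abs_lt_dvd h1 ((huR _).trans_le ?_)
        have h2 : (R : ℝ) ≤ (p : ℝ) ^ t j := by
          refine hR.trans (le_trans ?_ (ht j).le)
          exact Real.rpow_le_rpow_of_exponent_le hQr (hθ1.trans (hτ j).le)
        exact_mod_cast h2
    have hp0 : (0 : ℝ) < p := by exact_mod_cast (Fact.out : p.Prime).pos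
    have hap : ∀ j, ‖((u none : ℤ) : ℤ_[p]) * α j - ((u (some j) : ℤ) : ℤ_[p])‖ <
        (Q' : ℝ) ^ (-(τ j / θ)) := by
      intro j
      have h1 : ((u none : ℤ) : ℤ_[p]) * α j - ((u (some j) : ℤ) : ℤ_[p]) =
          (u none : ℤ_[p]) * (α j - (A j : ℤ_[p])) -
          ((u (some j) - A j * u none : ℤ) : ℤ_[p]) := by push_cast; ring
      have h2 : ‖((u none : ℤ) : ℤ_[p]) * α j - ((u (some j) : ℤ) : ℤ_[p])‖ ≤
          (p : ℝ) ^ (-(t j : ℤ)) := by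
        rw [h1, sub_eq_add_neg]
        refine (PadicInt.nonarchimedean _ _).trans (max_le ?_ ?_)
        · rw [norm_mul]
          refine le_trans (mul_le_of_le_one_left (norm_nonneg _) (PadicInt.norm_le_one _)) (hA j)
        · rw [norm_neg, PadicInt.norm_int_le_pow_iff_dvd]
          have := hu j
          exact_mod_cast this
      refine h2.trans_lt ?_
      have h3 : (p : ℝ) ^ (-(t j : ℤ)) < (Q : ℝ) ^ (-τ j) := by
        rw [zpow_neg, zpow_natCast, Real.rpow_neg (by positivity)]
        exact (inv_lt_inv₀ (by positivity) (by positivity)).mpr (ht j)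
      refine h3.trans_le ?_
      have h4 : (Q : ℝ) ^ (-τ j) = ((Q : ℝ) ^ θ) ^ (-(τ j / θ)) := by
        rw [← Real.rpow_mul (by positivity)]
        congr 1
        field_simp
      rw [h4]
      refine Real.rpow_le_rpow_of_nonpos hQ'pos hQ'le ?_
      have := hτ j
      have : 0 < τ j / θ := by positivity
      linarith
    refine ⟨Q', by omega, ?_⟩
    have hRi : (R : ℤ) ≤ Q' := by exact_mod_cast hRF
    rcases lt_or_gt_of_ne hne with h | h
    · refine ⟨-u none, fun j => -u (some j), by linarith, ?_, fun j => ?_, fun j => ?_⟩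
      · have := (abs_lt.mp (huR none)).1; linarith
      · rw [abs_neg]; exact (huR _).le.trans hRi
      · have h5 := hap j
        rw [← norm_neg] at h5
        have h6 : ((-u none : ℤ) : ℤ_[p]) * α j - ((-u (some j) : ℤ) : ℤ_[p]) =
            -((u none : ℤ_[p]) * α j - (u (some j) : ℤ_[p])) := by push_cast; ring
        rw [h6]
        exact h5
    · refine ⟨u none, fun j => u (some j), h, ?_, fun j => (huR _).le.trans hRi, hap⟩
      have := (abs_lt.mp (huR none)).2; linarith
  rw [dioExp] at hα
  have hm0 : (0 : ℝ) ≤ m := by positivity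
  by_cases hb : BddAbove {s : ℝ | ∃ τ : Fin m → ℝ, s = ∑ i, τ i ∧
    ∀ Q₀ : ℕ, ∃ Q : ℕ, Q₀ ≤ Q ∧ ∃ q₀ : ℤ, ∃ q : Fin m → ℤ,
      0 < q₀ ∧ q₀ ≤ (Q : ℤ) ∧ (∀ i, |q i| ≤ (Q : ℤ)) ∧
      ∀ i, ‖(q₀ : ℤ_[p]) * α i - (q i : ℤ_[p])‖ < (Q : ℝ) ^ (-(τ i))}
  · have h1 := le_csSup hb hmem
    rw [hα, div_le_iff₀ hθ] at h1
    linarith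
  -- in the unbounded case `dioExp α` is the default value `0`
  · rw [Real.sSup_of_not_bddAbove hb] at hα
    linarith

/-! ### Size estimates -/

/-- With `L ≈ Q^δ`, `R0 ≈ Q^θ` and index `D ≪ Q^s₀`, the covering radius that enters `Core.hρ` is
smaller than `Q / L ^ 2`, because `s₀ - mθ < 1` and `θ < 1` leave room for a power of `Q`. -/
theorem rho_bound (m L R0 D : ℕ) (Q θ δ σ s₀ C₃ : ℝ) (hQ : 1 ≤ Q) (hL : (L : ℝ) ≤ 2 * Q ^ δ)
    (hR0 : Q ^ θ ≤ 2 * R0) (hR0' : (R0 : ℝ) ≤ Q ^ θ) (hD : (D : ℝ) ≤ C₃ * Q ^ s₀) (hC₃ : 0 ≤ C₃)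
    (h1 : s₀ - m * θ + 6 * δ ≤ 1 - σ) (h2 : θ + 2 * δ ≤ 1 - σ)
    (hbig : 128 * 2 ^ m * C₃ + 8 ≤ Q ^ σ) :
    ((L ^ 2 * (2 * R0 * ((L ^ 4 * D) / R0 ^ (m + 1) + 1)) : ℕ) : ℝ) ≤ Q := by
  have hQ0 : 0 < Q := by linarith
  have hθ : 0 < Q ^ θ := Real.rpow_pos_of_pos hQ0 _
  have hδ : 0 < Q ^ δ := Real.rpow_pos_of_pos hQ0 _
  have hR : (0 : ℝ) < R0 := by linarith
  have hRinv : ((R0 : ℝ) ^ m)⁻¹ ≤ 2 ^ m * Q ^ (-(m * θ)) := by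
    have : Q ^ (m * θ) ≤ 2 ^ m * (R0 : ℝ) ^ m := by
      rw [mul_comm (m : ℝ), Real.rpow_mul hQ0.le, Real.rpow_natCast, ← mul_pow]
      exact pow_le_pow_left₀ hθ.le hR0 _
    rw [Real.rpow_neg hQ0.le, ← div_eq_mul_inv, inv_eq_one_div, div_le_div_iff₀ (by positivity)
      (by positivity)]
    linarith
  have hdiv : (((L ^ 4 * D) / R0 ^ (m + 1) : ℕ) : ℝ) ≤ L ^ 4 * D / R0 ^ (m + 1) := by
    have := Nat.cast_div_le (α := ℝ) (m := L ^ 4 * D) (n := R0 ^ (m + 1))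
    push_cast at this
    exact this
  have hL6 : (L : ℝ) ^ 6 ≤ 64 * Q ^ (6 * δ) := by
    calc (L : ℝ) ^ 6 ≤ (2 * Q ^ δ) ^ 6 := by gcongr
      _ = 64 * Q ^ (6 * δ) := by
        rw [mul_comm (6 : ℝ), Real.rpow_mul hQ0.le, mul_pow]
        norm_num
  have hL2 : (L : ℝ) ^ 2 ≤ 4 * Q ^ (2 * δ) := by
    calc (L : ℝ) ^ 2 ≤ (2 * Q ^ δ) ^ 2 := by gcongr
      _ = 4 * Q ^ (2 * δ) := by
        rw [mul_comm (2 : ℝ) δ, Real.rpow_mul hQ0.le, mul_pow]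
        norm_num
  have e1 : 2 * (L : ℝ) ^ 6 * D * ((R0 : ℝ) ^ m)⁻¹ ≤ 128 * 2 ^ m * C₃ * Q ^ (1 - σ) := by
    calc 2 * (L : ℝ) ^ 6 * D * ((R0 : ℝ) ^ m)⁻¹
        ≤ 2 * (64 * Q ^ (6 * δ)) * (C₃ * Q ^ s₀) * (2 ^ m * Q ^ (-(m * θ))) := by gcongr
      _ = 128 * 2 ^ m * C₃ * Q ^ (s₀ - m * θ + 6 * δ) := by
        rw [Real.rpow_add hQ0, sub_eq_add_neg, Real.rpow_add hQ0]; ring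
      _ ≤ _ := by gcongr
  have e2 : 2 * (L : ℝ) ^ 2 * R0 ≤ 8 * Q ^ (1 - σ) := by
    calc 2 * (L : ℝ) ^ 2 * R0 ≤ 2 * (4 * Q ^ (2 * δ)) * Q ^ θ := by gcongr
      _ = 8 * Q ^ (θ + 2 * δ) := by rw [Real.rpow_add hQ0]; ring
      _ ≤ _ := by gcongr
  push_cast
  calc (L : ℝ) ^ 2 * (2 * R0 * (((L ^ 4 * D / R0 ^ (m + 1) : ℕ) : ℝ) + 1))
      ≤ (L : ℝ) ^ 2 * (2 * R0 * (L ^ 4 * D / R0 ^ (m + 1) + 1)) := by gcongr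
    _ = 2 * (L : ℝ) ^ 6 * D * ((R0 : ℝ) ^ m)⁻¹ + 2 * (L : ℝ) ^ 2 * R0 := by
      field_simp
      ring
    _ ≤ 128 * 2 ^ m * C₃ * Q ^ (1 - σ) + 8 * Q ^ (1 - σ) := add_le_add e1 e2
    _ = (128 * 2 ^ m * C₃ + 8) * Q ^ (1 - σ) := by ring
    _ ≤ Q ^ σ * Q ^ (1 - σ) := by gcongr
    _ = Q := by rw [← Real.rpow_add hQ0]; simp

theorem pow_near (p : ℕ) (hp : 1 < p) (x : ℝ) (hx : 1 ≤ x) :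
    ∃ t : ℕ, x < (p : ℝ) ^ t ∧ (p : ℝ) ^ t ≤ p * x := by
  obtain ⟨n, h1, h2⟩ := exists_nat_pow_near hx (by exact_mod_cast hp : (1 : ℝ) < p)
  refine ⟨n + 1, h2, ?_⟩
  rw [pow_succ, mul_comm]
  gcongr

theorem appr_norm {p : ℕ} [Fact p.Prime] (x : ℤ_[p]) (t : ℕ) :
    ‖x - ((PadicInt.appr x t : ℤ) : ℤ_[p])‖ ≤ (p : ℝ) ^ (-(t : ℤ)) := by
  rw [PadicInt.norm_le_pow_iff_mem_span_pow]
  exact_mod_cast PadicInt.appr_spec t x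

theorem prod_between {ι : Type*} [Fintype ι] (p : ℕ) (hp : 0 < p) (S : ι → ℕ) (b Q : ℝ)
    (hb : 0 < b) (hQ : 0 < Q) (v : ι → ℝ) (h1 : ∀ i, b * Q ^ v i < (p : ℝ) ^ S i)
    (h2 : ∀ i, (p : ℝ) ^ S i ≤ p * (b * Q ^ v i)) :
    b ^ Fintype.card ι * Q ^ (∑ i, v i) ≤ ∏ i, (p : ℝ) ^ S i ∧
      ∏ i, (p : ℝ) ^ S i ≤ (p : ℝ) ^ Fintype.card ι * (b ^ Fintype.card ι * Q ^ (∑ i, v i)) := by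
  have e : ∏ i, (b * Q ^ v i) = b ^ Fintype.card ι * Q ^ (∑ i, v i) := by
    rw [Finset.prod_mul_distrib, Finset.prod_const, Finset.card_univ, Real.rpow_sum_of_pos hQ]
  constructor
  · rw [← e]
    exact Finset.prod_le_prod (fun i _ => by positivity) fun i _ => (h1 i).le
  · rw [← e]
    refine (Finset.prod_le_prod (fun i _ => by positivity) fun i _ => h2 i).trans ?_
    rw [Finset.prod_mul_distrib, Finset.prod_const, Finset.card_univ]

/-! ### Choice of parameters -/

set_option maxHeartbeats 4000000 in
/-- For all large `k` the counting argument applies with `Q = M ^ k`: the moduli `p ^ t j` and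
`p ^ S i` are comparable to `M ^ ((k + 1) τ j)` and `M ^ (k v i)`. The loss `κ₀` between `p ^ S i` and
`M ^ ((k + 1) v i)` does not depend on the ball. -/
theorem exists_core {p : ℕ} [Fact p.Prime] {d m : ℕ} (hd : 1 ≤ d) (hm : 1 ≤ m) (α : Fin m → ℤ_[p])
    (hα : dioExp α = (m : ℝ) + 1) (τ : Fin m → ℝ) (hτsum : ∑ i, τ i < (m : ℝ) + 1)
    (hτ : ∀ i, 1 < τ i) (v : Fin d → ℝ) (hv : ∀ i, 1 < v i)
    (hvsum : ∑ i, v i = ((d : ℝ) + m) + 1 - ∑ i, τ i) (M : ℕ) (hM : 2 ≤ M) :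
    ∃ κ₀ : ℕ, ∀ (s : ℕ) (X : Fin d → ℤ), ∃ K : ℕ, ∀ k : ℕ, K ≤ k → ∃ c : Core p d m,
      c.s = s ∧ c.X = X ∧ c.Q = M ^ k ∧
      (∀ i, (M : ℝ) ^ (((k : ℝ) + 1) * v i) < (p : ℝ) ^ (c.S i + κ₀)) ∧
      (∀ j, (M : ℝ) ^ (((k : ℝ) + 1) * τ j) < (p : ℝ) ^ c.t j) ∧
      ∀ j, ‖α j - (c.A j : ℤ_[p])‖ ≤ (p : ℝ) ^ (-(c.t j : ℤ)) := by
  have hp : p.Prime := Fact.out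
  have hp1 : (1 : ℝ) < p := by exact_mod_cast hp.one_lt
  have hp0 : (0 : ℝ) < p := by linarith
  have hMr : (2 : ℝ) ≤ M := by exact_mod_cast hM
  have hM0 : (0 : ℝ) < M := by linarith
  have hmr : (1 : ℝ) ≤ m := by exact_mod_cast hm
  set s₀ := ∑ i, τ i with hs₀
  have hs₀m : (m : ℝ) < s₀ := by
    have : ∑ _i : Fin m, (1 : ℝ) < ∑ i, τ i :=
      Finset.sum_lt_sum_of_nonempty ⟨⟨0, hm⟩, Finset.mem_univ _⟩ fun i _ => hτ i
    simpa using this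
  -- `θ` lies strictly between `(s₀ - 1) / m` and `s₀ / (m + 1)`
  obtain ⟨θ, hθa, hθb⟩ : ∃ θ : ℝ, (s₀ - 1) / m < θ ∧ θ < s₀ / (m + 1) := by
    apply exists_between
    rw [div_lt_div_iff₀ (by linarith) (by linarith)]
    nlinarith
  rw [div_lt_iff₀ (by linarith)] at hθa
  rw [lt_div_iff₀ (by linarith)] at hθb
  have hθ0 : 0 < θ := by
    by_contra! hcon
    nlinarith
  have hθ1 : θ < 1 := by
    by_contra! hcon
    nlinarith
  -- the margins in `θ < 1` and `s₀ - m θ < 1`, of which `δ`, for `L ≈ Q ^ δ`, is a small part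
  set σ := (1 - max θ (s₀ - m * θ)) / 2 with hσ
  have hσ0 : 0 < σ := by
    have : max θ (s₀ - m * θ) < 1 := max_lt hθ1 (by linarith)
    linarith
  have hσ1 : θ ≤ 1 - 2 * σ := by have := le_max_left θ (s₀ - m * θ); linarith
  have hσ2 : s₀ - m * θ ≤ 1 - 2 * σ := by have := le_max_right θ (s₀ - m * θ); linarith
  set δ := σ / 6 with hδ
  have hδ0 : 0 < δ := by positivity
  -- `R1 ≈ Q / B` with `B` so large that the covering radius in `Core.hρ1` stays below `Q / 4`, and
  -- `p ^ S i ≈ lam * Q ^ v i` with `lam ^ d = Λ`, where `Λ` is chosen to give `Core.h5`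
  set N := d + m + 1 with hN
  set Y := p + 8 * N * 16 ^ N with hY
  set W := Y.factorial with hW
  set C₂ := p ^ (d + m) * (8 * 30 ^ N) with hC₂
  set B := 8 * (W * C₂ + 1) with hB
  have hB0 : 0 < B := by positivity
  have hBr : (0 : ℝ) < B := by exact_mod_cast hB0
  set C := ⌈3 / δ⌉₊ with hC
  set Λ : ℝ := 8 * 15 ^ N / ((B : ℝ) ^ N * (M : ℝ) ^ s₀) with hΛ
  have hΛ0 : 0 < Λ := by positivity
  set lam : ℝ := Λ ^ ((d : ℝ)⁻¹) with hlam
  have hlam0 : 0 < lam := by positivity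
  have hlamd : lam ^ d = Λ := Real.rpow_inv_natCast_pow hΛ0.le (by omega)
  have hYp : p ≤ Y := by rw [hY]; exact Nat.le_add_right _ _
  have hYN : 8 * N * 16 ^ N ≤ Y := by rw [hY]; exact Nat.le_add_left _ _
  clear_value Y C₂ B C Λ lam
  set C₃ : ℝ := (p : ℝ) ^ m * (M : ℝ) ^ s₀ with hC₃
  have hC₃0 : 0 ≤ C₃ := by positivity
  clear_value C₃
  obtain ⟨κ₀, hκ₀⟩ : ∃ κ₀ : ℕ, ∀ i, (M : ℝ) ^ v i / lam ≤ (p : ℝ) ^ κ₀ := by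
    have h : ∀ i, ∀ᶠ n : ℕ in Filter.atTop, (M : ℝ) ^ v i / lam ≤ (p : ℝ) ^ n := fun i =>
      (tendsto_pow_atTop_atTop_of_one_lt hp1).eventually_ge_atTop _
    exact (Filter.eventually_all.mpr h).exists
  refine ⟨κ₀, fun s X => ?_⟩
  obtain ⟨Q₁, hQ₁⟩ := short_vectors α hα τ hτ θ hθ0 hθ1.le hθb
  set L₀ : ℝ := 3 + W + Y * W * (2 * C + 1) + 2 * B + 2 * B * p ^ s + p ^ (s * d + 1) with hL₀
  have hlim : Filter.Tendsto (fun k : ℕ => (M : ℝ) ^ k) Filter.atTop Filter.atTop :=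
    tendsto_pow_atTop_atTop_of_one_lt (by linarith)
  have hrp : ∀ x : ℝ, 0 < x → ∀ b : ℝ, ∀ᶠ k : ℕ in Filter.atTop, b ≤ ((M : ℝ) ^ k) ^ x :=
    fun x hx b => ((tendsto_rpow_atTop hx).comp hlim).eventually_ge_atTop b
  have hev := (hlim.eventually_ge_atTop (Q₁ : ℝ)).and ((hlim.eventually_gt_atTop (8 : ℝ)).and
    ((hlim.eventually_ge_atTop (2 * B : ℝ)).and ((hrp δ hδ0 L₀).and
    ((hrp σ hσ0 (128 * 2 ^ m * C₃ + 8)).and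
    (Filter.eventually_all.mpr fun i => hrp (v i - 1) (by linarith [hv i]) (1 / lam))))))
  obtain ⟨K, hK⟩ := Filter.eventually_atTop.mp hev
  refine ⟨K, fun k hk => ?_⟩
  obtain ⟨k1, k2, k3, k4, k5, k6⟩ := hK k hk
  clear hK hev hrp hlim
  set Qn := M ^ k with hQn
  set Q : ℝ := (M : ℝ) ^ k with hQdef
  have hQc : (Qn : ℝ) = Q := by rw [hQn, hQdef]; push_cast; rfl
  clear_value Qn Q
  have hQ1 : 1 ≤ Q := by linarith
  have hQ0 : 0 < Q := by linarith
  have hkk : ∀ x : ℝ, (M : ℝ) ^ (((k : ℝ) + 1) * x) = (M : ℝ) ^ x * Q ^ x := by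
    intro x
    rw [← Real.mul_rpow hM0.le hQ0.le, Real.rpow_mul hM0.le]
    congr 1
    rw [hQdef, ← pow_succ']
    exact_mod_cast Real.rpow_natCast (M : ℝ) (k + 1)
  -- the moduli
  have ht : ∀ j, ∃ t : ℕ, ((M : ℝ) * Q) ^ τ j < (p : ℝ) ^ t ∧
      (p : ℝ) ^ t ≤ p * ((M : ℝ) * Q) ^ τ j := fun j =>
    pow_near p hp.one_lt _ (Real.one_le_rpow (one_le_mul_of_one_le_of_one_le (by linarith only [hMr]) hQ1) (by linarith [hτ j]))
  choose t ht1 ht2 using ht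
  have hlamQ : ∀ i, Q ≤ lam * Q ^ v i := by
    intro i
    have h := k6 i
    rw [div_le_iff₀ hlam0] at h
    calc Q = 1 * Q := by ring
      _ ≤ Q ^ (v i - 1) * lam * Q := by gcongr
      _ = lam * (Q ^ (v i - 1) * Q ^ (1 : ℝ)) := by rw [Real.rpow_one]; ring
      _ = lam * Q ^ v i := by rw [← Real.rpow_add hQ0]; simp
  have hS : ∀ i, ∃ S : ℕ, lam * Q ^ v i < (p : ℝ) ^ S ∧ (p : ℝ) ^ S ≤ p * (lam * Q ^ v i) :=
    fun i => pow_near p hp.one_lt _ (hQ1.trans (hlamQ i))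
  choose S hS1 hS2 using hS
  obtain ⟨hP1, hP2⟩ := prod_between p hp.pos S lam Q hlam0 hQ0 v hS1 hS2
  obtain ⟨hD1, hD2⟩ := prod_between p hp.pos t 1 ((M : ℝ) * Q) one_pos (by positivity) τ
    (by simpa using ht1) (by simpa using ht2)
  rw [Fintype.card_fin, one_pow, one_mul, Real.mul_rpow hM0.le hQ0.le, ← hs₀] at hD1 hD2
  rw [Fintype.card_fin, hlamd] at hP1 hP2
  set Pr : ℝ := ∏ i, (p : ℝ) ^ S i with hPr
  set Dr : ℝ := ∏ j, (p : ℝ) ^ t j with hDr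
  have hQN : Q ^ (∑ i, v i) * Q ^ s₀ = Q ^ N := by
    rw [← Real.rpow_add hQ0, hvsum, sub_add_cancel, ← Real.rpow_natCast, hN]
    push_cast; rfl
  have hΛM : Λ * (M : ℝ) ^ s₀ = 8 * 15 ^ N / (B : ℝ) ^ N := by
    rw [hΛ]; field_simp
  have hPD1 : 8 * 15 ^ N / (B : ℝ) ^ N * Q ^ N ≤ Pr * Dr := by
    calc _ = (Λ * Q ^ (∑ i, v i)) * ((M : ℝ) ^ s₀ * Q ^ s₀) := by rw [← hΛM, ← hQN]; ring
      _ ≤ _ := by gcongr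
  have hPD2 : Pr * Dr ≤ (p : ℝ) ^ (d + m) * (8 * 15 ^ N / (B : ℝ) ^ N * Q ^ N) := by
    calc Pr * Dr ≤ ((p : ℝ) ^ d * (Λ * Q ^ (∑ i, v i))) *
          ((p : ℝ) ^ m * ((M : ℝ) ^ s₀ * Q ^ s₀)) := by gcongr
      _ = _ := by rw [← hΛM, ← hQN]; ring
  -- the threshold `R1`
  set R1 := Qn / B with hR1
  have hR1a : (R1 : ℝ) ≤ Q / B := by rw [← hQc]; exact Nat.cast_div_le
  have hR1b : Q / B ≤ 2 * R1 := by
    have h1 : Qn < (R1 + 1) * B := by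
      rw [hR1, mul_comm]; exact Nat.lt_mul_div_succ _ hB0
    have h1' : Q < (R1 + 1) * B := by rw [← hQc]; exact_mod_cast h1
    have h2 : (1 : ℝ) ≤ R1 := by
      have : 1 ≤ R1 := by
        rw [hR1, Nat.one_le_div_iff hB0]
        have : (B : ℝ) ≤ Qn := by rw [hQc]; linarith
        exact_mod_cast this
      exact_mod_cast this
    rw [div_le_iff₀ hBr]
    calc Q ≤ (R1 + 1) * B := h1'.le
      _ ≤ 2 * R1 * B := by
        apply mul_le_mul_of_nonneg_right _ hBr.le
        linarith only [h2]
  have hR1pos : (0 : ℝ) < R1 := by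
    have : 0 < Q / B := by positivity
    linarith
  have hR1pos' : 0 < R1 := by exact_mod_cast hR1pos
  have hR1Q : R1 ≤ Qn := Nat.div_le_self _ _
  have hR1eq : R1 * B ≤ Qn := Nat.div_mul_le_self _ _
  have hdivB : ∀ x : ℕ, x * (2 * B) ≤ Qn → x ≤ R1 := by
    intro x hx
    rw [hR1, Nat.le_div_iff_mul_le hB0]
    exact le_trans (Nat.mul_le_mul_left _ (Nat.le_mul_of_pos_left _ two_pos)) hx
  clear_value R1
  have hPDc : ((((∏ i, p ^ S i) * ∏ j, p ^ t j : ℕ)) : ℝ) = Pr * Dr := by push_cast; rfl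
  have hC2 : (∏ i, p ^ S i) * ∏ j, p ^ t j ≤ C₂ * R1 ^ N := by
    have : Pr * Dr ≤ C₂ * (R1 : ℝ) ^ N := by
      refine hPD2.trans ?_
      rw [hC₂]
      push_cast
      rw [mul_assoc]
      refine mul_le_mul_of_nonneg_left ?_ (by positivity)
      calc 8 * 15 ^ N / (B : ℝ) ^ N * Q ^ N = 8 * 15 ^ N * (Q / B) ^ N := by
            rw [div_pow]; ring
        _ ≤ 8 * 15 ^ N * (2 * R1) ^ N := by gcongr
        _ = 8 * 30 ^ N * (R1 : ℝ) ^ N := by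
          rw [mul_pow, mul_assoc, ← mul_assoc (15 ^ N), ← mul_pow]; norm_num; ring
    rw [← hPDc] at this
    exact_mod_cast this
  -- `L`, a small power of `Q`
  set L := ⌈Q ^ δ⌉₊ with hL
  have hLa : Q ^ δ ≤ L := Nat.le_ceil _
  have hLb : (L : ℝ) ≤ 2 * Q ^ δ := by
    have h1 := Nat.ceil_lt_add_one (a := Q ^ δ) (by positivity)
    have h2 : 1 ≤ Q ^ δ := Real.one_le_rpow hQ1 hδ0.le
    linarith
  clear_value L
  have hLL : L₀ ≤ L := k4.trans hLa
  have hLn : 3 + W + Y * W * (2 * C + 1) + 2 * B + 2 * B * p ^ s + p ^ (s * d + 1) ≤ L := by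
    rw [hL₀] at hLL
    exact_mod_cast hLL
  generalize hz1 : Y * W * (2 * C + 1) = z1 at hLn
  generalize hz2 : 2 * B * p ^ s = z2 at hLn
  generalize hz3 : p ^ (s * d + 1) = z3 at hLn
  have hLpos : L ≠ 0 := by omega
  -- `R0 ≈ Q ^ θ`
  set R0 := ⌊Q ^ θ⌋₊ with hR0
  have hQθ : 1 ≤ Q ^ θ := Real.one_le_rpow hQ1 hθ0.le
  have hR0a : (R0 : ℝ) ≤ Q ^ θ := Nat.floor_le (by positivity)
  have hR01 : 1 ≤ R0 := Nat.le_floor (by simpa using hQθ)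
  have hR0b : Q ^ θ ≤ 2 * R0 := by
    have h1 := Nat.lt_floor_add_one (Q ^ θ)
    have h2 : (1 : ℝ) ≤ R0 := by exact_mod_cast hR01
    linarith
  have hρ := rho_bound m L R0 (∏ j, p ^ t j) Q θ δ σ s₀ C₃ hQ1 hLb hR0b hR0a
    (by push_cast; rw [hC₃, mul_assoc]; exact hD2) hC₃0 (by linarith) (by linarith) k5
  set ρ := 2 * R0 * ((L ^ 4 * ∏ j, p ^ t j) / R0 ^ (m + 1) + 1) with hρdef
  have hρQ : L ^ 2 * ρ ≤ Qn := by rw [← hQc] at hρ; exact_mod_cast hρ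
  have hρpos : 1 ≤ ρ := Nat.mul_pos (Nat.mul_pos two_pos hR01) (Nat.succ_pos _)
  have hL2B : 2 * B ≤ L := by omega
  have hLsq : L ≤ L ^ 2 := Nat.le_self_pow two_ne_zero _
  have hρR : ρ ≤ R1 := hdivB _ (by
    refine le_trans ?_ hρQ
    rw [mul_comm]
    exact Nat.mul_le_mul_right _ (hL2B.trans hLsq))
  have hLT : L * p ^ s ≤ R1 := hdivB _ (by
    have h1 : L ^ 2 ≤ Qn := le_trans (Nat.le_mul_of_pos_right _ hρpos) hρQ
    refine le_trans ?_ h1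
    calc L * p ^ s * (2 * B) = L * z2 := by rw [← hz2]; ring
      _ ≤ L * L := Nat.mul_le_mul_left _ (by omega)
      _ = L ^ 2 := (sq L).symm)
  have hR1r : (R1 : ℝ) ≤ Q := by rw [← hQc]; exact_mod_cast hR1Q
  have hRS : ∀ i, R1 ≤ p ^ S i := by
    intro i
    have := hR1r.trans ((hlamQ i).trans (hS1 i).le)
    exact_mod_cast this
  have hQt : ∀ j, Q ^ τ j < (p : ℝ) ^ t j := by
    intro j
    refine lt_of_le_of_lt ?_ (ht1 j)
    have := hτ j
    have h1 : Q ≤ M * Q := le_mul_of_one_le_left hQ0.le (by linarith only [hMr])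
    gcongr
  have hRt : ∀ j, R1 ≤ p ^ t j := by
    intro j
    have h1 : Q ≤ Q ^ τ j := by
      calc Q = Q ^ (1 : ℝ) := (Real.rpow_one _).symm
        _ ≤ Q ^ τ j := Real.rpow_le_rpow_of_exponent_le hQ1 (hτ j).le
    have := hR1r.trans (h1.trans (hQt j).le)
    exact_mod_cast this
  obtain ⟨e, he1, he2⟩ : ∃ e : ℕ, p ^ e ≤ L ∧ L < p ^ (e + 1) :=
    ⟨Nat.log p L, Nat.pow_log_le_self p hLpos, Nat.lt_pow_succ_log_self hp.one_lt L⟩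
  have h5 : 8 * 15 ^ N * R1 ^ N ≤ (∏ i, p ^ S i) * ∏ j, p ^ t j := by
    have : 8 * 15 ^ N * (R1 : ℝ) ^ N ≤ Pr * Dr := by
      refine le_trans ?_ hPD1
      calc 8 * 15 ^ N * (R1 : ℝ) ^ N ≤ 8 * 15 ^ N * (Q / B) ^ N := by gcongr
        _ = _ := by rw [div_pow]; ring
    rw [← hPDc] at this
    exact_mod_cast this
  have hρ1 : 4 * (2 * R1 * ((W * ((∏ i, p ^ S i) * ∏ j, p ^ t j)) / R1 ^ N + 1)) ≤ Qn := by
    have h1 : (W * ((∏ i, p ^ S i) * ∏ j, p ^ t j)) / R1 ^ N ≤ W * C₂ := by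
      refine Nat.div_le_of_le_mul ?_
      calc W * ((∏ i, p ^ S i) * ∏ j, p ^ t j) ≤ W * (C₂ * R1 ^ N) := Nat.mul_le_mul_left _ hC2
        _ = _ := by ring
    calc _ ≤ 4 * (2 * R1 * (W * C₂ + 1)) := by gcongr
      _ = R1 * B := by rw [hB]; ring
      _ ≤ Qn := hR1eq
  have hC8 : 8 * Qn ^ 2 < L ^ C := by
    have h1 : 8 * Q ^ 2 < (L : ℝ) ^ C := by
      have h2 : 3 ≤ δ * C := by
        have := Nat.le_ceil (3 / δ)
        rw [← hC, div_le_iff₀ hδ0] at this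
        linarith only [this]
      calc 8 * Q ^ 2 < Q * Q ^ 2 := by gcongr
        _ = Q ^ (3 : ℝ) := by
          rw [show (3 : ℝ) = ((3 : ℕ) : ℝ) by norm_num, Real.rpow_natCast]; ring
        _ ≤ Q ^ (δ * C) := Real.rpow_le_rpow_of_exponent_le hQ1 h2
        _ = (Q ^ δ) ^ C := by rw [Real.rpow_mul hQ0.le, Real.rpow_natCast]
        _ ≤ (L : ℝ) ^ C := by gcongr
    rw [← hQc] at h1
    exact_mod_cast h1
  refine ⟨{
    A := fun j => (PadicInt.appr (α j) (t j) : ℤ)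
    t := t
    X := X
    S := S
    s := s
    Q := Qn
    R0 := R0
    R1 := R1
    ρ := ρ
    ρ1 := 2 * R1 * ((W * ((∏ i, p ^ S i) * ∏ j, p ^ t j)) / R1 ^ N + 1)
    L := L
    C := C
    Y := Y
    e := e
    hp := hp
    hsS := ?_
    hR0 := hR01
    hmin := ?_
    hρ := le_rfl
    hρQ := hρQ
    hρR := hρR
    hC := hC8
    hL3 := by omega
    hWL := by omega
    hLY := by rw [hz1]; omega
    hpY := hYp
    hYN := hYN
    hTE := ?_
    hEL := he1
    hLT := hLT
    hR1Q := hR1Q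
    hRS := hRS
    hRt := hRt
    h5 := h5
    hρ1 := le_rfl
    hρ1Q := hρ1 }, rfl, rfl, rfl, ?_, ?_, ?_⟩
  · intro i
    have h1 : p ^ s ≤ p ^ S i :=
      (le_trans (Nat.le_mul_of_pos_left _ (by omega)) hLT).trans (hRS i)
    exact (Nat.pow_le_pow_iff_right hp.one_lt).mp h1
  · refine hQ₁ Qn (by rw [← hQc] at k1; exact_mod_cast k1) t _ R0 ?_ (fun j => appr_norm _ _) ?_
    · rw [hQc]; exact hQt
    · rw [hQc]; exact hR0a
  · have h1 : p ^ (s * d + 1) < p ^ (e + 1) := by rw [hz3]; omega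
    have h2 := (Nat.pow_lt_pow_iff_right hp.one_lt).mp h1
    exact Nat.pow_le_pow_right hp.pos (by omega)
  · intro i
    rw [hkk, pow_add]
    have h1 := hκ₀ i
    rw [div_le_iff₀ hlam0] at h1
    calc (M : ℝ) ^ v i * Q ^ v i ≤ (p : ℝ) ^ κ₀ * lam * Q ^ v i := by gcongr
      _ = (lam * Q ^ v i) * (p : ℝ) ^ κ₀ := by ring
      _ < (p : ℝ) ^ S i * (p : ℝ) ^ κ₀ := by
        have := hS1 i
        gcongr
  · intro j
    rw [hkk, ← Real.mul_rpow hM0.le hQ0.le]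
    exact ht1 j
  · exact fun j => appr_norm _ _

/-! ### Measure of the union of rectangles -/

section Measure
variable {p : ℕ} [Fact p.Prime] {d : ℕ}

/-- The rectangle with centre `x` whose side in direction `i` is the closed ball of radius
`p ^ (-σ i)`. -/
def cyl (x : Fin d → ℤ_[p]) (σ : Fin d → ℕ) : Set (Fin d → ℤ_[p]) :=
  {y | ∀ i, ‖y i - x i‖ ≤ (p : ℝ) ^ (-(σ i : ℤ))}

theorem norm_add_le_of_le {x y : ℤ_[p]} {b : ℝ} (hx : ‖x‖ ≤ b) (hy : ‖y‖ ≤ b) : ‖x + y‖ ≤ b :=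
  (PadicInt.nonarchimedean x y).trans (max_le hx hy)

theorem norm_sub_trans {x y z : ℤ_[p]} {b : ℝ} (hx : ‖x - y‖ ≤ b) (hy : ‖y - z‖ ≤ b) :
    ‖x - z‖ ≤ b := by
  have := norm_add_le_of_le hx hy
  rwa [sub_add_sub_cancel] at this

theorem cyl_measurable (x : Fin d → ℤ_[p]) (σ : Fin d → ℕ) : MeasurableSet (cyl x σ) := by
  have : IsClosed (cyl x σ) := by
    rw [cyl, Set.ofPred_forall]
    exact isClosed_iInter fun i => isClosed_le (by fun_prop) continuous_const
  exact this.measurableSet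

theorem cyl_disjoint (σ : Fin d → ℕ) {a b : Fin d → ℤ_[p]}
    (h : ∃ i, ¬ ‖a i - b i‖ ≤ (p : ℝ) ^ (-(σ i : ℤ))) : Disjoint (cyl a σ) (cyl b σ) := by
  obtain ⟨i, hi⟩ := h
  refine Set.disjoint_left.mpr fun y hy hy' => hi ?_
  exact norm_sub_trans (by rw [norm_sub_rev]; exact hy i) (hy' i)

/-- A rectangle has measure `∏ p ^ (-σ i)`, as the space is a disjoint union of `∏ p ^ σ i`
translates of it. -/
theorem cyl_measure (μ : Measure (Fin d → ℤ_[p])) [μ.IsAddHaarMeasure] (hμ : μ Set.univ = 1)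
    (x : Fin d → ℤ_[p]) (σ : Fin d → ℕ) : μ (cyl x σ) = ((∏ i, p ^ σ i : ℕ) : ℝ≥0∞)⁻¹ := by
  have hp : p.Prime := Fact.out
  have htr : ∀ y : Fin d → ℤ_[p], μ (cyl y σ) = μ (cyl 0 σ) := by
    intro y
    rw [← measure_preimage_add_right μ (-y) (cyl 0 σ)]
    congr 1
    ext w
    simp [cyl, sub_eq_add_neg]
  set I : Finset (Fin d → ℕ) := Fintype.piFinset fun i => Finset.range (p ^ σ i) with hI
  have hcard : I.card = ∏ i, p ^ σ i := by simp [hI, Fintype.card_piFinset]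
  have hU : (⋃ w ∈ I, cyl (fun i => ((w i : ℕ) : ℤ_[p])) σ) = Set.univ := by
    refine Set.eq_univ_of_forall fun y => ?_
    simp only [Set.mem_iUnion]
    refine ⟨fun i => (y i).appr (σ i), ?_, fun i => ?_⟩
    · simpa [hI] using fun i => PadicInt.appr_lt (y i) (σ i)
    · have := appr_norm (y i) (σ i)
      push_cast at this
      exact this
  have hdis : Set.PairwiseDisjoint (I : Set (Fin d → ℕ))
      fun w => cyl (fun i => ((w i : ℕ) : ℤ_[p])) σ := by
    intro w hw w' hw' hne
    refine cyl_disjoint σ ?_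
    by_contra! hcon
    refine hne (funext fun i => ?_)
    have h1 := hcon i
    have hwi : w i < p ^ σ i := by simpa using Fintype.mem_piFinset.mp hw i
    have hwi' : w' i < p ^ σ i := by simpa using Fintype.mem_piFinset.mp hw' i
    have h2 : ‖(((w i : ℤ) - (w' i : ℤ) : ℤ) : ℤ_[p])‖ ≤ (p : ℝ) ^ (-(σ i : ℤ)) := by
      push_cast; exact h1
    rw [PadicInt.norm_int_le_pow_iff_dvd] at h2
    have h3 : (w' i) ≡ (w i) [MOD p ^ σ i] := by
      rw [Nat.modEq_iff_dvd]; exact_mod_cast h2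
    exact (Nat.ModEq.eq_of_lt_of_lt h3 hwi' hwi).symm
  have hsum := measure_biUnion_finset (μ := μ) hdis fun w _ => cyl_measurable _ σ
  rw [hU, hμ, Finset.sum_congr rfl fun w _ => htr _, Finset.sum_const, nsmul_eq_mul, hcard] at hsum
  rw [htr]
  exact ENNReal.eq_inv_of_mul_eq_one_left (by rw [mul_comm]; exact hsum.symm)

end Measure

/-- A fraction with denominator prime to `p` is a `p`-adic integer, and approximates `c` as well as
its numerator is congruent to `c q`. -/
theorem frac_near {p : ℕ} [Fact p.Prime] {q : ℕ} (hq : ¬ p ∣ q) (a c : ℤ) (S : ℕ)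
    (h : ((p ^ S : ℕ) : ℤ) ∣ a - c * q) :
    ∃ y : ℤ_[p], (a : ℚ_[p]) / (q : ℚ_[p]) = y ∧ ‖y - c‖ ≤ (p : ℝ) ^ (-(S : ℤ)) := by
  have hq1 : ‖(q : ℤ_[p])‖ = 1 := by
    refine le_antisymm (PadicInt.norm_le_one _) (not_lt.mp fun hlt => hq ?_)
    have : ‖((q : ℤ) : ℤ_[p])‖ < 1 := by exact_mod_cast hlt
    rw [PadicInt.norm_int_lt_one_iff_dvd] at this
    exact_mod_cast this
  obtain ⟨u, hu⟩ := (PadicInt.isUnit_iff.mpr hq1).exists_left_inv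
  have hq0 : (q : ℚ_[p]) ≠ 0 := by
    intro h0
    have : (q : ℕ) = 0 := by exact_mod_cast h0
    exact hq (this ▸ dvd_zero p)
  have hy : (a * u : ℤ_[p]) * q = a := by rw [mul_assoc, hu, mul_one]
  refine ⟨a * u, ?_, ?_⟩
  · rw [div_eq_iff hq0]
    have := congrArg (fun z : ℤ_[p] => (z : ℚ_[p])) hy
    push_cast at this ⊢
    exact this.symm
  · have h1 : ((a - c * q : ℤ) : ℤ_[p]) = (a * u - c) * q := by
      rw [sub_mul, hy]; push_cast; ring
    have h2 : ‖((a - c * q : ℤ) : ℤ_[p])‖ ≤ (p : ℝ) ^ (-(S : ℤ)) := by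
      rw [PadicInt.norm_int_le_pow_iff_dvd]; exact_mod_cast h
    rwa [h1, norm_mul, hq1, mul_one] at h2

theorem two_le_base {d m : ℕ} (hm : 1 ≤ m) (y e : ℝ) (he : 0 < e) (M : ℕ)
    (hM : ((3 : ℝ) ^ d * max (3 * (6 * Real.sqrt m) ^ m) y) ^ (1 / e) < (M : ℝ)) : 2 ≤ M := by
  have h1 : (1 : ℝ) ≤ Real.sqrt m := by
    rw [Real.one_le_sqrt]; exact_mod_cast hm
  have h2 : (1 : ℝ) ≤ (6 * Real.sqrt m) ^ m := one_le_pow₀ (by linarith)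
  have h3 : (1 : ℝ) ≤ max (3 * (6 * Real.sqrt m) ^ m) y := le_trans (by linarith) (le_max_left _ _)
  have h4 : (1 : ℝ) ≤ (3 : ℝ) ^ d := one_le_pow₀ (by norm_num)
  have h5 := Real.one_le_rpow (one_le_mul_of_one_le_of_one_le h4 h3) (one_div_pos.mpr he).le
  have : (1 : ℝ) < M := h5.trans_lt hM
  exact_mod_cast this

/-- The set in the theorem covered by the `q ∈ J_k`. -/
def target {p : ℕ} [Fact p.Prime] {d m : ℕ} (α : Fin m → ℤ_[p]) (τ : Fin m → ℝ) (v : Fin d → ℝ)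
    (M k : ℕ) : Set (Fin d → ℤ_[p]) :=
  ⋃ (q : ℕ) (_ : q ∈ QDen α τ ∧ M ^ k ≤ q ∧ q < M ^ (k + 1))
    (qq : Fin d → ℤ)
    (_ : ∀ i, |qq i| ≤ (q : ℤ) ∧ Int.gcd (qq i) q = 1),
    {y : Fin d → ℤ_[p] | ∀ i,
      ‖(y i : ℚ_[p]) - (qq i : ℚ_[p]) / (q : ℚ_[p])‖ <
        (M : ℝ) ^ (-(((k : ℝ) + 1) * v i))}

theorem zpow_lt_of_lt {p : ℕ} [Fact p.Prime] {M : ℕ} (hM : 2 ≤ M) {n : ℕ} {x : ℝ}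
    (h : (M : ℝ) ^ x < (p : ℝ) ^ n) : (p : ℝ) ^ (-(n : ℤ)) < (M : ℝ) ^ (-x) := by
  have hM0 : (0 : ℝ) < M := by exact_mod_cast (by omega : 0 < M)
  rw [zpow_neg, zpow_natCast, Real.rpow_neg hM0.le]
  exact inv_strictAnti₀ (Real.rpow_pos_of_pos hM0 _) h

/-- A good residue `z` provides a rectangle of comparable size inside the target set and close to
`X + p^s z`. -/
theorem good_rect {p : ℕ} [Fact p.Prime] {d m : ℕ} (α : Fin m → ℤ_[p]) (τ : Fin m → ℝ)
    (hτ : ∀ i, 1 < τ i) (v : Fin d → ℝ) (M : ℕ) (hM : 2 ≤ M) (k κ₀ : ℕ) (c : Core p d m)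
    (hQ : c.Q = M ^ k)
    (hv : ∀ i, (M : ℝ) ^ (((k : ℝ) + 1) * v i) < (p : ℝ) ^ (c.S i + κ₀))
    (ht : ∀ j, (M : ℝ) ^ (((k : ℝ) + 1) * τ j) < (p : ℝ) ^ c.t j)
    (hA : ∀ j, ‖α j - (c.A j : ℤ_[p])‖ ≤ (p : ℝ) ^ (-(c.t j : ℤ)))
    (z : Fin d → ℕ) (hz : z ∈ c.good) :
    ∃ y : Fin d → ℤ_[p], cyl y (fun i => c.S i + κ₀) ⊆ target α τ v M k ∧
      cyl y (fun i => c.S i + κ₀) ⊆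
        cyl (fun i => ((c.X i + (p : ℤ) ^ c.s * z i : ℤ) : ℤ_[p])) c.S := by
  have hp : p.Prime := Fact.out
  obtain ⟨-, q, a, b, hq1, hq2, hpq, ha, hb⟩ := c.good_spec hz
  have hQpos : 0 < c.Q := by rw [hQ]; positivity
  have hq0 : 0 < q := by omega
  have hqM : q < M ^ (k + 1) := by
    refine hq2.trans_le ?_
    rw [hQ, pow_succ, mul_comm]
    exact Nat.mul_le_mul_left _ hM
  have hM0 : (0 : ℝ) < M := by exact_mod_cast (by omega : 0 < M)
  choose y hy1 hy2 using fun i => frac_near hpq (a i) _ (c.S i) (ha i).2.2.2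
  choose β hβ1 hβ2 using fun j => frac_near hpq (b j) (c.A j) (c.t j) (hb j).2.2.2
  refine ⟨y, fun w hw => ?_, fun w hw i => ?_⟩
  · simp only [target, Set.mem_iUnion]
    refine ⟨q, ⟨⟨hq0, b, fun j => ⟨?_, (hb j).2.2.1⟩, fun j => ?_⟩, hQ ▸ hq1, hqM⟩, a,
      fun i => ⟨?_, (ha i).2.2.1⟩, fun i => ?_⟩
    · have := hb j
      rw [abs_of_nonneg this.1]; omega
    · rw [hβ1]
      have h1 : ‖α j - β j‖ ≤ (p : ℝ) ^ (-(c.t j : ℤ)) :=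
        norm_sub_trans (hA j) (by rw [norm_sub_rev]; exact hβ2 j)
      have h2 := zpow_lt_of_lt hM (ht j)
      have h3 : (M : ℝ) ^ (-(((k : ℝ) + 1) * τ j)) ≤ (q : ℝ) ^ (-τ j) := by
        rw [← mul_neg, Real.rpow_mul hM0.le]
        have h4 : (M : ℝ) ^ ((k : ℝ) + 1) = ((M ^ (k + 1) : ℕ) : ℝ) := by
          push_cast
          exact_mod_cast Real.rpow_natCast (M : ℝ) (k + 1)
        rw [h4]
        exact Real.rpow_le_rpow_of_nonpos (by exact_mod_cast hq0) (by exact_mod_cast hqM.le)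
          (by linarith [hτ j])
      have h5 : ‖(α j : ℚ_[p]) - β j‖ = ‖α j - β j‖ := by
        rw [← PadicInt.coe_sub, PadicInt.norm_def]
      rw [h5]
      exact (h1.trans_lt h2).trans_le h3
    · have := ha i
      rw [abs_of_nonneg this.1]; omega
    · rw [hy1]
      have h5 : ‖(w i : ℚ_[p]) - y i‖ = ‖w i - y i‖ := by
        rw [← PadicInt.coe_sub, PadicInt.norm_def]
      rw [h5]
      exact (hw i).trans_lt (zpow_lt_of_lt hM (hv i))
  · refine norm_sub_trans ((hw i).trans ?_) (hy2 i)
    refine zpow_le_zpow_right₀ (by exact_mod_cast hp.one_le) ?_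
    push_cast; omega

theorem count_ineq {a b g P : ℕ} (ha : 0 < a) (hb : 0 < b) (hP : 0 < P) (h : P ≤ a * (2 * g)) :
    ((2 * b : ℕ) : ℝ≥0∞)⁻¹ * (a : ℝ≥0∞)⁻¹ ≤ g * ((P * b : ℕ) : ℝ≥0∞)⁻¹ := by
  rw [← div_eq_mul_inv (g : ℝ≥0∞), ENNReal.le_div_iff_mul_le
    (Or.inl (by exact_mod_cast (Nat.mul_pos hP hb).ne')) (Or.inl (ENNReal.natCast_ne_top _)),
    ← ENNReal.mul_inv (Or.inr (ENNReal.natCast_ne_top _)) (Or.inl (ENNReal.natCast_ne_top _)),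
    ← Nat.cast_mul, ENNReal.inv_mul_le_iff (by exact_mod_cast (by positivity))
    (ENNReal.natCast_ne_top _)]
  norm_cast
  calc P * b ≤ a * (2 * g) * b := Nat.mul_le_mul_right _ h
    _ = 2 * b * a * g := by ring

/-- Distinct residues stand for points differing modulo some `p ^ S i`. -/
theorem residues_apart {p : ℕ} [Fact p.Prime] {d m : ℕ} (c : Core p d m) {z z' : Fin d → ℕ}
    (hz : z ∈ c.Z) (hz' : z' ∈ c.Z) (hne : z ≠ z') :
    ∃ i, ¬ ‖((c.X i + (p : ℤ) ^ c.s * z i : ℤ) : ℤ_[p]) -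
      ((c.X i + (p : ℤ) ^ c.s * z' i : ℤ) : ℤ_[p])‖ ≤ (p : ℝ) ^ (-(c.S i : ℤ)) := by
  have hp : p.Prime := Fact.out
  by_contra! hcon
  refine hne (funext fun i => ?_)
  have h1 := hcon i
  rw [← Int.cast_sub, PadicInt.norm_int_le_pow_iff_dvd,
    show c.X i + (p : ℤ) ^ c.s * z i - (c.X i + (p : ℤ) ^ c.s * z' i) =
      (p : ℤ) ^ c.s * (z i - z' i) by ring] at h1
  have h2 : (p : ℤ) ^ (c.S i - c.s) ∣ (z i : ℤ) - z' i := by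
    have h3 : (p : ℤ) ^ c.s * (p : ℤ) ^ (c.S i - c.s) ∣ (p : ℤ) ^ c.s * (z i - z' i) := by
      rw [← pow_add, Nat.add_sub_cancel' (c.hsS i)]
      exact_mod_cast h1
    exact Int.dvd_of_mul_dvd_mul_left (pow_ne_zero _ (by exact_mod_cast hp.ne_zero)) h3
  have h3 : z' i ≡ z i [MOD p ^ (c.S i - c.s)] := by
    rw [Nat.modEq_iff_dvd]; exact_mod_cast h2
  exact (Nat.ModEq.eq_of_lt_of_lt h3 (c.mem_Z.mp hz' i) (c.mem_Z.mp hz i)).symm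

/-- The rectangles attached to good residues are disjoint and lie in the ball. Since at least half of
the residues are good, they fill the proportion `1 / (2 p ^ (κ₀ d))` of it. -/
theorem ubiq_core {p : ℕ} [Fact p.Prime] {d m : ℕ} (α : Fin m → ℤ_[p]) (τ : Fin m → ℝ)
    (hτ : ∀ i, 1 < τ i) (v : Fin d → ℝ)
    (μ : Measure (Fin d → ℤ_[p])) [μ.IsAddHaarMeasure] (hμ : μ Set.univ = 1)
    (M : ℕ) (hM : 2 ≤ M) (k κ₀ : ℕ) (c : Core p d m)
    (hQ : c.Q = M ^ k)
    (hv : ∀ i, (M : ℝ) ^ (((k : ℝ) + 1) * v i) < (p : ℝ) ^ (c.S i + κ₀))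
    (ht : ∀ j, (M : ℝ) ^ (((k : ℝ) + 1) * τ j) < (p : ℝ) ^ c.t j)
    (hA : ∀ j, ‖α j - (c.A j : ℤ_[p])‖ ≤ (p : ℝ) ^ (-(c.t j : ℤ))) :
    ((2 * p ^ (κ₀ * d) : ℕ) : ℝ≥0∞)⁻¹ * ((p ^ (c.s * d) : ℕ) : ℝ≥0∞)⁻¹ ≤
      μ (cyl (fun i => (c.X i : ℤ_[p])) (fun _ => c.s) ∩ target α τ v M k) := by
  classical
  have hp : p.Prime := Fact.out
  choose! y hy1 hy2 using good_rect α τ hτ v M hM k κ₀ c hQ hv ht hA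
  have hdis : Set.PairwiseDisjoint (c.good : Set (Fin d → ℕ))
      fun z => cyl (y z) fun i => c.S i + κ₀ := by
    intro z hz z' hz' hne
    exact (cyl_disjoint c.S (residues_apart c (c.good_spec hz).1 (c.good_spec hz').1 hne)).mono
      (hy2 z hz) (hy2 z' hz')
  have hsum := measure_biUnion_finset (μ := μ) hdis fun z _ => cyl_measurable _ _
  rw [Finset.sum_congr rfl fun z _ => cyl_measure μ hμ _ _, Finset.sum_const, nsmul_eq_mul] at hsum
  have hprod : (∏ i, p ^ (c.S i + κ₀)) = c.P * p ^ (κ₀ * d) := by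
    simp only [pow_add]
    rw [Finset.prod_mul_distrib, Core.P, Finset.prod_const, Finset.card_univ, Fintype.card_fin,
      pow_mul]
  rw [hprod] at hsum
  calc _ ≤ (c.good.card : ℝ≥0∞) * ((c.P * p ^ (κ₀ * d) : ℕ) : ℝ≥0∞)⁻¹ := by
        refine count_ineq (pow_pos hp.pos _) (pow_pos hp.pos _)
          (Finset.prod_pos fun i _ => pow_pos hp.pos _) ?_
        rw [← c.card_Z]
        exact Nat.mul_le_mul_left _ c.good_card
    _ = μ (⋃ z ∈ c.good, cyl (y z) fun i => c.S i + κ₀) := hsum.symm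
    _ ≤ _ := by
      refine measure_mono (Set.iUnion₂_subset fun z hz => Set.subset_inter ?_ (hy1 z hz))
      refine (hy2 z hz).trans fun w hw i => ?_
      have hSs : (p : ℝ) ^ (-(c.S i : ℤ)) ≤ (p : ℝ) ^ (-(c.s : ℤ)) :=
        zpow_le_zpow_right₀ (by exact_mod_cast hp.one_le) (by have := c.hsS i; omega)
      refine norm_sub_trans ((hw i).trans hSs) ?_
      rw [← Int.cast_sub, PadicInt.norm_int_le_pow_iff_dvd, add_sub_cancel_left]
      exact_mod_cast dvd_mul_right _ _

end LocUbiq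

open LocUbiq

/-- Proposition (local ubiquity): for suitable `M`, resonant rational points with
denominators in `J_k = {q ∈ 𝒬(α, τ_m) : M^k ≤ q < M^{k+1}}` and rectangle
side-lengths `M^{−(k+1)v_i}` occupy a fixed proportion of any small ball,
for infinitely many `k`. -/
theorem local_ubiquity_rectangles {p : ℕ} [Fact p.Prime] {d m : ℕ}
    (hd : 1 ≤ d) (hm : 1 ≤ m) (α : Fin m → ℤ_[p])
    (hα : dioExp α = (m : ℝ) + 1) (τm : Fin m → ℝ)
    (hτsum : ∑ i, τm i < (m : ℝ) + 1) (hτ : ∀ i, 1 < τm i)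
    (v : Fin d → ℝ) (hv : ∀ i, 1 < v i)
    (hvsum : ∑ i, v i = ((d : ℝ) + m) + 1 - ∑ i, τm i)
    (μ : Measure (Fin d → ℤ_[p])) [μ.IsAddHaarMeasure] (hμ : μ Set.univ = 1)
    (M : ℕ)
    (hM : ((3 : ℝ) ^ d * max (3 * (6 * Real.sqrt m) ^ m)
        ((m + 2).factorial * Real.pi ^ ((m : ℝ) / 2) * Real.sqrt m ^ (m + 1) /
          Real.Gamma ((m : ℝ) / 2 + 1))) ^
        (1 / (((d : ℝ) + m) + 1 - ∑ i, τm i)) < (M : ℝ)) :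
    ∃ c : ℝ≥0∞, 0 < c ∧ ∃ r₀ : ℝ, 0 < r₀ ∧
      ∀ (x : Fin d → ℤ_[p]) (r : ℝ), 0 < r → r < r₀ →
        ∀ K : ℕ, ∃ k : ℕ, K ≤ k ∧
          c * μ (Metric.ball x r) ≤
            μ (Metric.ball x r ∩
              ⋃ (q : ℕ) (_ : q ∈ QDen α τm ∧ M ^ k ≤ q ∧ q < M ^ (k + 1))
                (qq : Fin d → ℤ)
                (_ : ∀ i, |qq i| ≤ (q : ℤ) ∧ Int.gcd (qq i) q = 1),
                {y : Fin d → ℤ_[p] | ∀ i,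
                  ‖(y i : ℚ_[p]) - (qq i : ℚ_[p]) / (q : ℚ_[p])‖ <
                    (M : ℝ) ^ (-(((k : ℝ) + 1) * v i))}) := by
  have hp : p.Prime := Fact.out
  have hp1 : (1 : ℝ) < p := by exact_mod_cast hp.one_lt
  have hp0 : (0 : ℝ) < p := by linarith
  have he : 0 < ((d : ℝ) + m) + 1 - ∑ i, τm i := by
    have : (1 : ℝ) ≤ d := by exact_mod_cast hd
    linarith
  have hM2 : 2 ≤ M := two_le_base hm _ _ he M hM
  obtain ⟨κ₀, hκ⟩ := exists_core hd hm α hα τm hτsum hτ v hv hvsum M hM2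
  refine ⟨((2 * p ^ (κ₀ * d) : ℕ) : ℝ≥0∞)⁻¹, ENNReal.inv_pos.mpr (ENNReal.natCast_ne_top _), 1,
    one_pos, fun x r hr0 hr1 K => ?_⟩
  -- the ball is the cylinder of radius `p ^ (-s)`
  obtain ⟨n, hn1, hn2⟩ := exists_nat_pow_near_of_lt_one hr0 hr1.le (inv_pos.mpr hp0)
    (inv_lt_one_of_one_lt₀ hp1)
  set s := n + 1 with hs
  have hball1 : Metric.ball x r ⊆ cyl x fun _ => s := by
    intro y hy i
    have h1 : ‖y i - x i‖ < (p : ℝ) ^ (-(s : ℤ) + 1) := by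
      rw [← dist_eq_norm]
      refine ((dist_le_pi_dist y x i).trans_lt hy).trans_le (hn2.trans ?_)
      rw [hs, inv_pow, ← zpow_natCast, ← zpow_neg]
      push_cast
      exact le_of_eq (by congr 1; ring)
    exact (PadicInt.norm_le_pow_iff_norm_lt_pow_add_one _ _).mpr h1
  have hball2 : (cyl x fun _ => s) ⊆ Metric.ball x r := by
    intro y hy
    rw [Metric.mem_ball, dist_pi_lt_iff hr0]
    intro i
    rw [dist_eq_norm]
    refine (hy i).trans_lt ?_
    rw [zpow_neg, zpow_natCast, ← inv_pow]
    exact hn1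
  obtain ⟨K', hK'⟩ := hκ s fun i => (PadicInt.appr (x i) s : ℤ)
  refine ⟨max K K', le_max_left _ _, ?_⟩
  obtain ⟨c, hcs, hcX, hQ, hcv, hct, hcA⟩ := hK' (max K K') (le_max_right _ _)
  have hcore := ubiq_core α τm hτ v μ hμ M hM2 _ κ₀ c hQ hcv hct hcA
  rw [hcs, hcX] at hcore
  calc _ ≤ ((2 * p ^ (κ₀ * d) : ℕ) : ℝ≥0∞)⁻¹ * ((p ^ (s * d) : ℕ) : ℝ≥0∞)⁻¹ := by
        refine mul_le_mul_right ((measure_mono hball1).trans_eq ?_) _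
        rw [cyl_measure μ hμ, Finset.prod_const, Finset.card_univ, Fintype.card_fin, pow_mul]
    _ ≤ _ := hcore
    _ ≤ _ := by
      refine measure_mono (Set.inter_subset_inter_left _ (Set.Subset.trans ?_ hball2))
      intro y hy i
      exact norm_sub_trans (hy i) (by rw [norm_sub_rev]; exact appr_norm _ _)
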